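/- Let X ⊆ ℝ² be a countable, uniformly discrete set with well-defined density ρ > 0, meaning that #(X ∩ B_R(0)) / vol(B_R(0)) → ρ as R → ∞. Then the following are equivalent: (1) there exist a lattice L ⊆ ℝ² of density ρ (that is, L = A·ℤ² for some invertible linear map A with |det A| = 1/ρ) and a bijection b : X → L with sup_{x∈X} ‖b(x) − x‖ < ∞; (2) there exist constants c₁, c₂ > 0 such that for every topological disk U ⊆ ℝ² (a compact set homeomorphic to the closed unit disk), |#(X ∩ U) − ρ·vol(U)| ≤ c₁ + c₂·H¹(∂U), where vol denotes Lebesgue measure, ∂U is the topological boundary of U, and H¹ is the one-dimensional Hausdorff measure. -/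

import Mathlib

open MeasureTheory

namespace Laczkovich

/-- The identity of a circle about the origin has no continuous logarithm. -/
theorem not_exists_continuousOn_log_sphere {r : ℝ} (hr : 0 < r) :
    ¬ ∃ g : ℂ → ℂ, ContinuousOn g (Metric.sphere 0 r) ∧
      ∀ z ∈ Metric.sphere (0 : ℂ) r, Complex.exp (g z) = z := by
  rintro ⟨g, hg, hexp⟩
  set γ : ℝ → ℂ := fun t => circleMap 0 r t with hγ
  have hmem : ∀ t, γ t ∈ Metric.sphere (0 : ℂ) r := fun t =>
    circleMap_mem_sphere 0 hr.le t
  set k : ℝ → ℂ := fun t => (g (γ t) - Real.log r - t * Complex.I) / (2 * Real.pi * Complex.I)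
    with hk
  have hpi : (2 * Real.pi * Complex.I : ℂ) ≠ 0 := Complex.two_pi_I_ne_zero
  have hkc : Continuous k := by
    have h1 : Continuous (fun t => g (γ t)) :=
      hg.comp_continuous (continuous_circleMap 0 r) hmem
    exact ((h1.sub continuous_const).sub
      (Complex.continuous_ofReal.mul continuous_const)).div_const _
  have hint : ∀ t, ∃ n : ℤ, k t = n := by
    intro t
    have h1 : Complex.exp (g (γ t) - Real.log r - t * Complex.I) = 1 := by
      rw [Complex.exp_sub, Complex.exp_sub, hexp _ (hmem t), ← Complex.ofReal_exp,
        Real.exp_log hr]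
      have : (r : ℂ) ≠ 0 := by exact_mod_cast hr.ne'
      simp only [hγ, circleMap, zero_add]
      have := Complex.exp_ne_zero (t * Complex.I)
      field_simp
    obtain ⟨n, hn⟩ := Complex.exp_eq_one_iff.1 h1
    exact ⟨n, by simp only [hk]; rw [hn]; field_simp⟩
  choose n hn using hint
  have hnc : Continuous n := by
    have hre : ∀ t, (n t : ℝ) = (k t).re := fun t => by rw [hn]; simp
    have : Continuous (fun t => (n t : ℝ)) := by
      simp_rw [hre]; fun_prop
    exact Int.isClosedEmbedding_coe_real.isEmbedding.continuous_iff.2 this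
  have hconst : n 0 = n (2 * Real.pi) :=
    PreconnectedSpace.constant inferInstance hnc
  have h0 := hn 0
  have h1 := hn (2 * Real.pi)
  rw [← hconst, ← h0] at h1
  have hγ' : γ (2 * Real.pi) = γ 0 := by simp [hγ, circleMap]
  simp only [hk, hγ'] at h1
  rw [div_left_inj' hpi] at h1
  push_cast at h1
  apply hpi
  linear_combination -h1

/-- A circle contained in a planar topological disk bounds no point outside this disk. -/
theorem mem_of_sphere_subset_of_homeomorph
    {E : Type*} [NormedAddCommGroup E] [NormedSpace ℝ E] {U : Set ℂ}
    (h : U ≃ₜ (Metric.closedBall (0 : E) 1 : Set E)) {c p : ℂ} {r : ℝ}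
    (hS : Metric.sphere c r ⊆ U) (hp : dist p c < r) : p ∈ U := by
  classical
  by_contra hpU
  have hr : 0 < r := dist_nonneg.trans_lt hp
  have hconv : Convex ℝ (Metric.closedBall (0 : E) 1) := convex_closedBall 0 1
  have : LocallyPathConnectedSpace (Metric.closedBall (0 : E) 1) := hconv.locallyPathConnectedSpace
  have : ContractibleSpace (Metric.closedBall (0 : E) 1) :=
    hconv.contractibleSpace ⟨0, by simp⟩
  have hne : ∀ a : Metric.closedBall (0 : E) 1, ((h.symm a : U) : ℂ) - p ≠ 0 := fun a ha =>
    hpU (by rw [← sub_eq_zero.1 ha]; exact (h.symm a).2)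
  let a₀ : Metric.closedBall (0 : E) 1 := ⟨0, by simp⟩
  obtain ⟨F, ⟨-, hF⟩, -⟩ := Complex.isCoveringMapOn_exp.existsUnique_continuousMap_lifts
    (⟨fun a => ((h.symm a : U) : ℂ) - p, by fun_prop⟩ : C(Metric.closedBall (0 : E) 1, ℂ))
    (a₀ := a₀) (Complex.exp_log (hne a₀)) (fun a => hne a)
  have hq : ‖p - c‖ < r := by rwa [← dist_eq_norm]
  have hslit : ∀ z ∈ Metric.sphere (0 : ℂ) r, 1 - (p - c) / z ∈ Complex.slitPlane := by
    intro z hz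
    left
    have hz' : ‖z‖ = r := by simpa using hz
    have : ‖(p - c) / z‖ < 1 := by rw [norm_div, hz', div_lt_one hr]; exact hq
    have := (Complex.re_le_norm ((p - c) / z)).trans_lt this
    simp only [Complex.sub_re, Complex.one_re]; linarith
  have hmem : ∀ z ∈ Metric.sphere (0 : ℂ) r, z + c ∈ U := fun z hz => hS (by simpa using hz)
  refine not_exists_continuousOn_log_sphere hr
    ⟨fun z => (if hz : z + c ∈ U then F (h ⟨z + c, hz⟩) else 0) - Complex.log (1 - (p - c) / z),
      ?_, ?_⟩
  · refine ContinuousOn.sub ?_ ?_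
    · rw [continuousOn_iff_continuous_domRestrict]
      have : Continuous (fun z : Metric.sphere (0 : ℂ) r => F (h ⟨z + c, hmem z z.2⟩)) := by
        fun_prop
      refine this.congr fun z => ?_
      simp only [Set.domRestrict_apply]
      rw [dif_pos (hmem z z.2)]
    · refine ContinuousOn.clog ?_ hslit
      refine continuousOn_const.sub (continuousOn_const.div continuousOn_id ?_)
      intro z hz h0
      change z = 0 at h0
      simp [h0] at hz
      exact hr.ne hz
  · intro z hz
    have hz0 : z ≠ 0 := by
      rintro rfl
      simp at hz
      exact hr.ne hz
    have h1 : Complex.exp (F (h ⟨z + c, hmem z hz⟩)) = z + c - p := by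
      have := congrFun hF (h ⟨z + c, hmem z hz⟩)
      simpa using this
    have h2 := Complex.slitPlane_ne_zero (hslit z hz)
    beta_reduce
    rw [dif_pos (hmem z hz), Complex.exp_sub, h1, Complex.exp_log h2]
    rw [div_eq_iff h2]
    field_simp
    ring

/-- The Euclidean plane. -/
abbrev Plane := EuclideanSpace ℝ (Fin 2)

theorem mem_of_sphere_subset {U : Set Plane}
    (h : U ≃ₜ (Metric.closedBall (0 : Plane) 1 : Set Plane)) {c p : Plane} {r : ℝ}
    (hS : Metric.sphere c r ⊆ U) (hp : dist p c < r) : p ∈ U := by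
  let e : Plane ≃ₗᵢ[ℝ] ℂ := Complex.orthonormalBasisOneI.repr.symm
  have h' := (e.toHomeomorph.image U).symm.trans h
  have hS' : Metric.sphere (e c) r ⊆ e.toHomeomorph '' U := by
    intro z hz
    refine ⟨e.symm z, hS ?_, by simp⟩
    rw [Metric.mem_sphere] at hz ⊢
    rw [← hz, ← e.dist_map]; simp
  obtain ⟨q, hq, hqe⟩ := mem_of_sphere_subset_of_homeomorph h' hS'
    (p := e p) (by rwa [e.dist_map])
  rwa [← e.injective hqe]

theorem isPreconnected_of_homeomorph_closedBall {U : Set Plane}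
    (h : U ≃ₜ (Metric.closedBall (0 : Plane) 1 : Set Plane)) : IsPreconnected U := by
  have h1 : IsPreconnected (Metric.closedBall (0 : Plane) 1) :=
    (convex_closedBall (0 : Plane) 1).isPreconnected
  rw [isPreconnected_iff_preconnectedSpace] at h1 ⊢
  exact h.symm.surjective.denseRange.preconnectedSpace h.symm.continuous

/-- Around each of its boundary points, a topological disk which is not small has
boundary of definite length. -/
theorem subset_ball_or_one_le_hausdorffMeasure {U : Set Plane} (hU : IsCompact U)
    (h : U ≃ₜ (Metric.closedBall (0 : Plane) 1 : Set Plane)) {y : Plane} (hy : y ∈ frontier U) :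
    U ⊆ Metric.ball y 1 ∨ 1 ≤ Measure.hausdorffMeasure 1 (frontier U ∩ Metric.ball y 1) := by
  by_cases hall : ∀ r ∈ Set.Ioo (0 : ℝ) 1, ∃ z ∈ frontier U, dist z y = r
  · right
    have hsub : Set.Ioo (0 : ℝ) 1 ⊆ (fun z => dist z y) '' (frontier U ∩ Metric.ball y 1) := by
      intro r hr
      obtain ⟨z, hz, hzr⟩ := hall r hr
      exact ⟨z, ⟨hz, by rw [Metric.mem_ball, hzr]; exact hr.2⟩, hzr⟩
    have h1 := (LipschitzWith.dist_left y).hausdorffMeasure_image_le (d := 1) zero_le_one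
      (frontier U ∩ Metric.ball y 1)
    have h2 := (measure_mono hsub).trans h1
    rw [hausdorffMeasure_real] at h2
    simpa using h2
  · left
    push Not at hall
    obtain ⟨r, hr, hall⟩ := hall
    have hrank : 1 < Module.rank ℝ Plane := by
      rw [rank_eq_card_basis (EuclideanSpace.basisFun (Fin 2) ℝ).toBasis]; simp
    have hsp : IsPreconnected (Metric.sphere y r) := isPreconnected_sphere hrank y r
    have hcov : Metric.sphere y r ⊆ interior U ∪ Uᶜ := by
      intro z hz
      by_cases hzU : z ∈ U
      · left
        by_contra hzi
        exact hall z (by rw [hU.isClosed.frontier_eq]; exact ⟨hzU, hzi⟩) hz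
      · exact Or.inr hzU
    have hyU : y ∈ U := hU.isClosed.frontier_subset hy
    rcases hsp.subset_or_subset isOpen_interior hU.isClosed.isOpen_compl
      (disjoint_compl_right.mono_left interior_subset) hcov with hin | hout
    · exfalso
      have hball : Metric.ball y r ⊆ U := fun p hp =>
        mem_of_sphere_subset h (hin.trans interior_subset) hp
      rw [hU.isClosed.frontier_eq] at hy
      exact hy.2 (mem_interior.2 ⟨_, hball, Metric.isOpen_ball, Metric.mem_ball_self hr.1⟩)
    · have hsub : U ⊆ Metric.ball y r ∪ (Metric.closedBall y r)ᶜ := by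
        intro z hz
        rcases lt_trichotomy (dist z y) r with hlt | heq | hgt
        · exact Or.inl hlt
        · exact absurd hz (hout heq)
        · exact Or.inr (by simpa using hgt)
      refine ((isPreconnected_of_homeomorph_closedBall h).subset_left_of_subset_union
        Metric.isOpen_ball Metric.isClosed_closedBall.isOpen_compl ?_ hsub
        ⟨y, hyU, Metric.mem_ball_self hr.1⟩).trans (Metric.ball_subset_ball hr.2.le)
      exact disjoint_compl_right.mono_left Metric.ball_subset_closedBall

/-- Uniformly discrete sets have boundedly many points in balls of given radius. -/
theorem exists_ncard_inter_closedBall_le {X : Set Plane} {δ : ℝ} (hδ : 0 < δ)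
    (hX : ∀ x ∈ X, ∀ y ∈ X, x ≠ y → δ ≤ dist x y) (R : ℝ) :
    ∃ M : ℕ, ∀ p : Plane, (X ∩ Metric.closedBall p R).Finite ∧
      (X ∩ Metric.closedBall p R).ncard ≤ M := by
  obtain ⟨t, -, htf, hcov⟩ := (isCompact_closedBall (0 : Plane) R).finite_cover_balls
    (half_pos hδ)
  refine ⟨t.ncard, fun p => ?_⟩
  have hex : ∀ x ∈ X ∩ Metric.closedBall p R, ∃ c ∈ t, dist (x - p) c < δ / 2 := by
    intro x hx
    have : x - p ∈ Metric.closedBall (0 : Plane) R := by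
      have := hx.2
      rw [Metric.mem_closedBall, dist_eq_norm] at this
      simpa using this
    simpa using hcov this
  choose! c hct hc using hex
  have hinj : Set.InjOn c (X ∩ Metric.closedBall p R) := by
    intro x hx y hy hxy
    by_contra hne
    have h1 := hX x hx.1 y hy.1 hne
    have h2 := hc x hx
    have h3 := hc y hy
    rw [← hxy] at h3
    have h4 : dist x y = dist (x - p) (y - p) := by simp
    have h5 := dist_triangle_right (x - p) (y - p) (c x)
    linarith
  exact ⟨Set.Finite.of_finite_image (htf.subset (Set.image_subset_iff.2 hct)) hinj,
    Set.ncard_le_ncard_of_injOn c hct hinj htf⟩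

theorem exists_mem_frontier_of_mem_closedBall {U : Set Plane} {x p q : Plane} {D : ℝ}
    (hp : p ∈ Metric.closedBall x D) (hq : q ∈ Metric.closedBall x D) (hpU : p ∈ U)
    (hqU : q ∉ U) : ∃ y ∈ frontier U, dist x y ≤ D := by
  by_contra! hcon
  have hpre : IsPreconnected (Metric.closedBall x D) := (convex_closedBall x D).isPreconnected
  have hnf : ∀ z ∈ Metric.closedBall x D, z ∉ frontier U := fun z hz hzf =>
    (hcon z hzf).not_ge (by rwa [dist_comm])
  have hcov : Metric.closedBall x D ⊆ interior U ∪ (closure U)ᶜ := by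
    intro z hz
    by_contra hzn
    rw [Set.mem_union, not_or, Set.mem_compl_iff, not_not] at hzn
    exact hnf z hz ⟨hzn.2, hzn.1⟩
  rcases hpre.subset_or_subset isOpen_interior isClosed_closure.isOpen_compl
    (disjoint_compl_right.mono_left (interior_subset.trans subset_closure)) hcov with h | h
  · exact hqU (interior_subset (h hq))
  · exact h hp (subset_closure hpU)

/-- If the plane is partitioned into sets of measure `1 / ρ`, each staying close to a point
of `X`, then the discrepancy of `X` in `U` is at most the number of points close to `∂U`. -/
theorem abs_ncard_sub_le_ncard_near_frontier {X : Set Plane} {ρ : ℝ} (hρ : 0 < ρ)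
    (hX : ∀ p R, (X ∩ Metric.closedBall p R).Finite) {P : X → Set Plane} {D : ℝ}
    (hD : 0 ≤ D)
    (hPm : ∀ x, MeasurableSet (P x)) (hPd : Pairwise (Function.onFun Disjoint P))
    (hPv : ∀ x, volume (P x) = ENNReal.ofReal (1 / ρ)) (hPc : ∀ p, ∃ x, p ∈ P x)
    (hPD : ∀ x, P x ⊆ Metric.closedBall (x : Plane) D) {U : Set Plane} (hU : IsCompact U) :
    {x ∈ X | ∃ y ∈ frontier U, dist x y ≤ D}.Finite ∧
    |((X ∩ U).ncard : ℝ) - ρ * (volume U).toReal| ≤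
      ({x ∈ X | ∃ y ∈ frontier U, dist x y ≤ D}.ncard : ℝ) := by
  set T := {x ∈ X | ∃ y ∈ frontier U, dist x y ≤ D} with hT
  obtain ⟨R, hR⟩ := hU.isBounded.subset_closedBall (0 : Plane)
  have hTf : T.Finite := by
    refine (hX 0 (R + D)).subset ?_
    rintro x ⟨hx, y, hy, hxy⟩
    have := hR (hU.isClosed.frontier_subset hy)
    rw [Metric.mem_closedBall] at this
    exact ⟨hx, by rw [Metric.mem_closedBall]; linarith [dist_triangle x y 0]⟩
  have hUf : (X ∩ U).Finite := (hX 0 R).subset (Set.inter_subset_inter_right _ hR)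
  refine ⟨hTf, ?_⟩
  have hvU : volume U ≠ ⊤ := hU.measure_ne_top
  have hρ' : (0 : ℝ) ≤ 1 / ρ := by positivity
  have hlow : (((X ∩ U) \ T).ncard : ℝ) * (1 / ρ) ≤ (volume U).toReal := by
    have hVf : {x : X | (x : Plane) ∈ (X ∩ U) \ T}.Finite :=
      Set.Finite.preimage Subtype.val_injective.injOn (hUf.subset Set.sdiff_subset)
    have hcard : hVf.toFinset.card = ((X ∩ U) \ T).ncard := by
      rw [← Set.ncard_eq_toFinset_card _ hVf]
      refine Set.ncard_congr (fun x _ => (x : Plane)) (fun x hx => hx)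
        (fun x y _ _ h => Subtype.ext h) (fun x hx => ⟨⟨x, hx.1.1⟩, hx, rfl⟩)
    have hsub : (⋃ x ∈ hVf.toFinset, P x) ⊆ U := by
      refine Set.iUnion₂_subset fun x hx p hp => ?_
      rw [Set.Finite.mem_toFinset] at hx
      by_contra hpU
      exact hx.2 ⟨x.2, exists_mem_frontier_of_mem_closedBall (Metric.mem_closedBall_self hD)
        (hPD x hp) hx.1.2 hpU⟩
    have h1 := measure_mono (μ := volume) hsub
    rw [measure_biUnion_finset (fun x _ y _ h => hPd h) (fun x _ => hPm x)] at h1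
    simp only [hPv, Finset.sum_const, hcard, nsmul_eq_mul] at h1
    have h2 := ENNReal.toReal_mono hvU h1
    rwa [ENNReal.toReal_mul, ENNReal.toReal_natCast, ENNReal.toReal_ofReal hρ'] at h2
  have hupp : (volume U).toReal ≤ (((X ∩ U) ∪ T).ncard : ℝ) * (1 / ρ) := by
    have hVf : {x : X | (x : Plane) ∈ (X ∩ U) ∪ T}.Finite :=
      Set.Finite.preimage Subtype.val_injective.injOn (hUf.union hTf)
    have hcard : hVf.toFinset.card = ((X ∩ U) ∪ T).ncard := by
      rw [← Set.ncard_eq_toFinset_card _ hVf]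
      refine Set.ncard_congr (fun x _ => (x : Plane)) (fun x hx => hx)
        (fun x y _ _ h => Subtype.ext h)
        (fun x hx => ⟨⟨x, hx.elim (fun h => h.1) (fun h => h.1)⟩, hx, rfl⟩)
    have hsub : U ⊆ ⋃ x ∈ hVf.toFinset, P x := by
      intro p hp
      obtain ⟨x, hx⟩ := hPc p
      refine Set.mem_biUnion (x := x) ?_ hx
      change x ∈ hVf.toFinset
      rw [Set.Finite.mem_toFinset]
      by_cases hxU : (x : Plane) ∈ U
      · exact Or.inl ⟨x.2, hxU⟩
      · exact Or.inr ⟨x.2, exists_mem_frontier_of_mem_closedBall (hPD x hx)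
          (Metric.mem_closedBall_self hD) hp hxU⟩
    have h1 := (measure_mono (μ := volume) hsub).trans (measure_biUnion_finset_le _ _)
    simp only [hPv, Finset.sum_const, hcard, nsmul_eq_mul] at h1
    have h2 := ENNReal.toReal_mono (by finiteness) h1
    rwa [ENNReal.toReal_mul, ENNReal.toReal_natCast, ENNReal.toReal_ofReal hρ'] at h2
  have h3 : (((X ∩ U) ∪ T).ncard : ℝ) ≤ (X ∩ U).ncard + T.ncard := by
    exact_mod_cast Set.ncard_union_le _ _
  have h4 : ((X ∩ U).ncard : ℝ) ≤ ((X ∩ U) \ T).ncard + T.ncard := by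
    exact_mod_cast Set.ncard_le_ncard_sdiff_add_ncard _ _ hTf
  rw [mul_one_div, div_le_iff₀ hρ] at hlow
  rw [mul_one_div, le_div_iff₀ hρ] at hupp
  rw [abs_le]
  constructor <;> linarith

/-- Points of a uniformly discrete set close to the boundary of a topological disk are
controlled by the length of this boundary. -/
theorem ncard_near_frontier_le {X : Set Plane} {D : ℝ} {M : ℕ}
    (hM : ∀ p : Plane, (X ∩ Metric.closedBall p (D + 1)).Finite ∧
      (X ∩ Metric.closedBall p (D + 1)).ncard ≤ M)
    {U : Set Plane} (hU : IsCompact U)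
    (h : U ≃ₜ (Metric.closedBall (0 : Plane) 1 : Set Plane))
    (hT : {x ∈ X | ∃ y ∈ frontier U, dist x y ≤ D}.Finite) :
    ({x ∈ X | ∃ y ∈ frontier U, dist x y ≤ D}.ncard : ENNReal) ≤
      M + M * Measure.hausdorffMeasure 1 (frontier U) := by
  set T := {x ∈ X | ∃ y ∈ frontier U, dist x y ≤ D} with hTdef
  by_cases hsmall : ∃ y ∈ frontier U, U ⊆ Metric.ball y 1
  · obtain ⟨y, -, hyU⟩ := hsmall
    refine le_add_of_le_of_nonneg ?_ zero_le
    have hsub : T ⊆ X ∩ Metric.closedBall y (D + 1) := by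
      rintro x ⟨hx, z, hz, hxz⟩
      have := hyU (hU.isClosed.frontier_subset hz)
      rw [Metric.mem_ball] at this
      exact ⟨hx, by rw [Metric.mem_closedBall]; linarith [dist_triangle x z y]⟩
    exact_mod_cast (Set.ncard_le_ncard hsub (hM y).1).trans (hM y).2
  · push Not at hsmall
    refine le_add_of_nonneg_of_le zero_le ?_
    set ν := (Measure.hausdorffMeasure 1 : Measure Plane).restrict (frontier U) with hν
    have hone : ∀ x ∈ T, 1 ≤ ν (Metric.closedBall x (D + 1)) := by
      rintro x ⟨hx, y, hy, hxy⟩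
      have h1 := (subset_ball_or_one_le_hausdorffMeasure hU h hy).resolve_left (hsmall y hy)
      rw [hν, Measure.restrict_apply Metric.isClosed_closedBall.measurableSet]
      refine h1.trans (measure_mono ?_)
      rintro z ⟨hz, hzy⟩
      refine ⟨?_, hz⟩
      rw [Metric.mem_ball] at hzy
      rw [Metric.mem_closedBall]
      linarith [dist_triangle z y x, dist_comm x y]
    calc (T.ncard : ENNReal) = ∑ x ∈ hT.toFinset, 1 := by
          rw [Set.ncard_eq_toFinset_card _ hT]; simp
      _ ≤ ∑ x ∈ hT.toFinset, ν (Metric.closedBall x (D + 1)) :=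
          Finset.sum_le_sum fun x hx => hone x (by simpa using hx)
      _ = ∑ x ∈ hT.toFinset, ∫⁻ z, (Metric.closedBall x (D + 1)).indicator 1 z ∂ν := by
          refine Finset.sum_congr rfl fun x _ => ?_
          rw [lintegral_indicator_one Metric.isClosed_closedBall.measurableSet]
      _ = ∫⁻ z, ∑ x ∈ hT.toFinset, (Metric.closedBall x (D + 1)).indicator 1 z ∂ν := by
          rw [lintegral_finsetSum]
          exact fun x _ => measurable_one.indicator Metric.isClosed_closedBall.measurableSet
      _ ≤ ∫⁻ _, (M : ENNReal) ∂ν := by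
          refine lintegral_mono fun z => ?_
          classical
          simp only [Set.indicator_apply, Pi.one_apply]
          rw [Finset.sum_boole]
          have hsub : (hT.toFinset.filter fun x => z ∈ Metric.closedBall x (D + 1) : Set Plane) ⊆
              X ∩ Metric.closedBall z (D + 1) := by
            intro x hx
            simp only [Finset.coe_filter, Set.Finite.mem_toFinset, Set.mem_ofPred_eq] at hx
            exact ⟨hx.1.1, by rw [Metric.mem_closedBall']; exact hx.2⟩
          have h5 := (Set.ncard_le_ncard hsub (hM z).1).trans (hM z).2
          rw [Set.ncard_coe_finset] at h5
          exact_mod_cast h5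
      _ = M * Measure.hausdorffMeasure 1 (frontier U) := by
          rw [lintegral_const, hν, Measure.restrict_apply_univ]

theorem volume_unit_cell (m : Fin 2 → ℤ) :
    MeasurableSet {u : Plane | ∀ i, ⌊u i⌋ = m i} ∧ volume {u : Plane | ∀ i, ⌊u i⌋ = m i} = 1 := by
  have h : {u : Plane | ∀ i, ⌊u i⌋ = m i} = (fun u : Plane => (WithLp.ofLp u : Fin 2 → ℝ)) ⁻¹'
      Set.pi Set.univ fun i => Set.Ico (m i : ℝ) (m i + 1) := by
    ext u
    simp [Int.floor_eq_iff]
  have hm : MeasurableSet (Set.pi Set.univ fun i : Fin 2 => Set.Ico (m i : ℝ) (m i + 1)) :=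
    MeasurableSet.univ_pi fun i => measurableSet_Ico
  rw [h]
  refine ⟨(PiLp.volume_preserving_ofLp (Fin 2)).measurable hm, ?_⟩
  rw [(PiLp.volume_preserving_ofLp (Fin 2)).measure_preimage hm.nullMeasurableSet,
    Real.volume_pi_Ico]
  simp

/-- A set at bounded displacement from a lattice has discrepancy controlled by boundary
length in topological disks. -/
theorem discrepancy_le_of_boundedDisplacement (X : Set Plane)
    (hud : ∃ δ > 0, ∀ x ∈ X, ∀ y ∈ X, x ≠ y → δ ≤ dist x y) (ρ : ℝ) (hρ : 0 < ρ)
    (A : Plane ≃ₗ[ℝ] Plane) (hA : |LinearMap.det (A : Plane →ₗ[ℝ] Plane)| = 1 / ρ)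
    (b : X ≃ (A '' {x : Plane | ∀ i, ∃ m : ℤ, x i = (m : ℝ)} : Set Plane)) (C : ℝ)
    (hC : ∀ x : X, ‖(b x : Plane) - (x : Plane)‖ ≤ C) :
    ∃ c₁ > (0 : ℝ), ∃ c₂ > (0 : ℝ), ∀ U : Set Plane, IsCompact U →
      Nonempty (U ≃ₜ (Metric.closedBall (0 : Plane) 1 : Set Plane)) →
      ENNReal.ofReal |((X ∩ U).ncard : ℝ) - ρ * (volume U).toReal| ≤
        ENNReal.ofReal c₁ +
          ENNReal.ofReal c₂ * Measure.hausdorffMeasure 1 (frontier U) := by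
  obtain ⟨δ, hδ, hud⟩ := hud
  have hint : ∀ x : X, ∃ m : Fin 2 → ℤ, ∀ i, A.symm (b x : Plane) i = m i := by
    intro x
    obtain ⟨u, hu, hux⟩ := (b x).2
    rw [← hux, LinearEquiv.symm_apply_apply]
    exact Classical.skolem.1 hu
  choose m hm using hint
  set P : X → Set Plane := fun x => A '' {u : Plane | ∀ i, ⌊u i⌋ = m x i} with hP
  obtain ⟨K, hK⟩ := ((isCompact_closedBall (0 : Plane) 2).image
    (LinearMap.continuous_of_finiteDimensional (A : Plane →ₗ[ℝ] Plane))).isBounded.exists_norm_le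
  set D := max (C + K) 0 with hDdef
  have hPD : ∀ x, P x ⊆ Metric.closedBall (x : Plane) D := by
    rintro x _ ⟨u, hu, rfl⟩
    have h1 : u - A.symm (b x) ∈ Metric.closedBall (0 : Plane) 2 := by
      rw [mem_closedBall_zero_iff, EuclideanSpace.norm_eq]
      apply Real.sqrt_le_iff.2 ⟨by norm_num, ?_⟩
      have h2 : ∀ i, ‖(u - A.symm (b x)) i‖ ^ 2 ≤ 1 := by
        intro i
        have h3 := Int.floor_eq_iff.1 (hu i)
        rw [Real.norm_eq_abs, sq_abs, PiLp.sub_apply, hm]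
        nlinarith [h3.1, h3.2]
      rw [Fin.sum_univ_two]
      linarith [h2 0, h2 1]
    have h2 := hK _ ⟨_, h1, rfl⟩
    rw [LinearEquiv.coe_coe, map_sub, LinearEquiv.apply_symm_apply] at h2
    rw [Metric.mem_closedBall, dist_eq_norm]
    have h3 : A u - (x : Plane) = (A u - b x) + (b x - x) := by abel
    rw [h3]
    exact (norm_add_le _ _).trans (by linarith [hC x, le_max_left (C + K) 0])
  have hPd : Pairwise (Function.onFun Disjoint P) := by
    intro x y hxy
    refine Set.disjoint_left.2 ?_
    rintro _ ⟨u, hu, rfl⟩ ⟨w, hw, hwu⟩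
    have hwu := A.injective hwu
    apply hxy
    apply b.injective
    apply Subtype.ext
    apply A.symm.injective
    ext i
    rw [hm, hm, ← hu i, ← hw i, hwu]
  have hPv : ∀ x, volume (P x) = ENNReal.ofReal (1 / ρ) := by
    intro x
    have := Measure.addHaar_image_linearMap (volume : Measure Plane) (A : Plane →ₗ[ℝ] Plane)
      {u : Plane | ∀ i, ⌊u i⌋ = m x i}
    rw [(volume_unit_cell (m x)).2, mul_one, hA] at this
    exact this
  have hPm : ∀ x, MeasurableSet (P x) := by
    intro x
    have := A.toContinuousLinearEquiv.toHomeomorph.measurableEmbedding.measurableSet_image.2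
      (volume_unit_cell (m x)).1
    exact this
  have hPc : ∀ p, ∃ x, p ∈ P x := by
    intro p
    set u : Plane := WithLp.toLp 2 fun i => (⌊A.symm p i⌋ : ℝ) with hu
    refine ⟨b.symm ⟨A u, u, fun i => ⟨⌊A.symm p i⌋, rfl⟩, rfl⟩, A.symm p, fun i => ?_, by simp⟩
    have h1 := hm (b.symm ⟨A u, u, fun i => ⟨⌊A.symm p i⌋, rfl⟩, rfl⟩) i
    rw [Equiv.apply_symm_apply, LinearEquiv.symm_apply_apply] at h1
    exact Int.cast_injective (α := ℝ) h1
  obtain ⟨M, hM⟩ := exists_ncard_inter_closedBall_le hδ hud (D + 1)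
  have hfin : ∀ p R, (X ∩ Metric.closedBall p R).Finite := fun p R =>
    ((exists_ncard_inter_closedBall_le hδ hud R).choose_spec p).1
  refine ⟨M + 1, by positivity, M + 1, by positivity, fun U hU ⟨h⟩ => ?_⟩
  obtain ⟨hT, hle⟩ := abs_ncard_sub_le_ncard_near_frontier hρ hfin (le_max_right _ _)
    hPm hPd hPv hPc hPD hU
  have h2 := ncard_near_frontier_le hM hU h hT
  have h3 : (M : ENNReal) ≤ ENNReal.ofReal (M + 1) := by
    rw [← ENNReal.ofReal_natCast]
    exact ENNReal.ofReal_le_ofReal (by linarith)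
  calc _ ≤ ENNReal.ofReal ({x ∈ X | ∃ y ∈ frontier U, dist x y ≤ D}.ncard : ℝ) :=
        ENNReal.ofReal_le_ofReal hle
    _ = ({x ∈ X | ∃ y ∈ frontier U, dist x y ≤ D}.ncard : ENNReal) := ENNReal.ofReal_natCast _
    _ ≤ _ := h2.trans (by gcongr)

/-! ### Loops in the square lattice -/

/-- Adjacency in the square lattice. -/
def Adj (u v : ℤ × ℤ) : Prop :=
  (v.1 = u.1 + 1 ∧ v.2 = u.2) ∨ (v.1 = u.1 - 1 ∧ v.2 = u.2) ∨
    (v.1 = u.1 ∧ v.2 = u.2 + 1) ∨ (v.1 = u.1 ∧ v.2 = u.2 - 1)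

/-- The vertex `v` is a corner of the cell `c`, a cell being represented by its lower left
corner. -/
def Touches (v c : ℤ × ℤ) : Prop :=
  (v.1 = c.1 ∨ v.1 = c.1 + 1) ∧ (v.2 = c.2 ∨ v.2 = c.2 + 1)

/-- Circulation of an edge function along the boundary of the cell `c`. -/
def curl (A : ℤ × ℤ → ℤ × ℤ → ℤ) (c : ℤ × ℤ) : ℤ :=
  A (c.1, c.2) (c.1 + 1, c.2) + A (c.1 + 1, c.2) (c.1 + 1, c.2 + 1) +
    A (c.1 + 1, c.2 + 1) (c.1, c.2 + 1) + A (c.1, c.2 + 1) (c.1, c.2)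

/-- Sum of an edge function along a path. -/
def pathSum {V : Type*} (A : V → V → ℤ) : List V → ℤ
  | [] => 0
  | [_] => 0
  | u :: v :: l => A u v + pathSum A (v :: l)

theorem pathSum_append_cons {V : Type*} (A : V → V → ℤ) (l₁ : List V) (p : V) (l₂ : List V) :
    pathSum A (l₁ ++ p :: l₂) = pathSum A (l₁ ++ [p]) + pathSum A (p :: l₂) := by
  induction l₁ with
  | nil => simp [pathSum]
  | cons u l ih =>
    cases l with
    | nil => simp [pathSum]
    | cons v l => simp only [List.cons_append, pathSum] at ih ⊢; rw [ih]; ring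

theorem pathSum_append_pair {V : Type*} (A : V → V → ℤ) (l₁ : List V) (p q : V) :
    pathSum A (l₁ ++ [p, q]) = pathSum A (l₁ ++ [p]) + A p q := by
  rw [pathSum_append_cons]; simp [pathSum]

theorem pathSum_reverse {V : Type*} {A : V → V → ℤ} (hA : ∀ u v, A u v = - A v u)
    (l : List V) : pathSum A l.reverse = - pathSum A l := by
  induction l with
  | nil => simp [pathSum]
  | cons u l ih =>
    cases l with
    | nil => simp [pathSum]
    | cons v l =>
      simp only [List.reverse_cons, List.append_assoc, List.cons_append, List.nil_append] at ih ⊢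
      rw [pathSum_append_pair, ih, pathSum, hA v u]; ring

/-- A simple closed lattice path running from `x` to `y`, then back to `x`. -/
structure IsLoop (x y : ℤ × ℤ) (L : List (ℤ × ℤ)) : Prop where
  chain : L.IsChain Adj
  nodup : L.Nodup
  head : L.head? = some x
  last : L.getLast? = some y
  closing : Adj y x

/-- Sum of an edge function along a closed path from `x` to `y` and back to `x`. -/
def loopSum {V : Type*} (A : V → V → ℤ) (x y : V) (L : List V) : ℤ := pathSum A L + A y x

/-- The set of cells `H` is bounded by the closed path `L`, with orientation `ε`. -/
def Bounds (x y : ℤ × ℤ) (L : List (ℤ × ℤ)) (H : Finset (ℤ × ℤ)) (ε : ℤ) : Prop :=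
  ∀ A : ℤ × ℤ → ℤ × ℤ → ℤ, (∀ u v, A u v = - A v u) →
    loopSum A x y L = ε * ∑ c ∈ H, curl A c

/-- The unit flow along the edge from `p` to `q`. -/
def edgeForm {V : Type*} [DecidableEq V] (p q u v : V) : ℤ :=
  (if u = p ∧ v = q then 1 else 0) - (if u = q ∧ v = p then 1 else 0)

section EdgeForm

variable {V : Type*} [DecidableEq V]

theorem edgeForm_antisymm (p q u v : V) : edgeForm p q u v = - edgeForm p q v u := by
  unfold edgeForm; grind

theorem edgeForm_swap (p q u v : V) : edgeForm q p u v = - edgeForm p q u v := by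
  unfold edgeForm; grind

theorem edgeForm_self {p q : V} (h : p ≠ q) : edgeForm p q p q = 1 := by
  unfold edgeForm; grind

theorem edgeForm_eq_zero {p q u v : V} (h₁ : u = p → v ≠ q) (h₂ : v = p → u ≠ q) :
    edgeForm p q u v = 0 := by
  unfold edgeForm; grind

theorem pathSum_edgeForm_swap (p q : V) (L : List V) :
    pathSum (edgeForm q p) L = - pathSum (edgeForm p q) L := by
  induction L with
  | nil => simp [pathSum]
  | cons u l ih =>
    cases l with
    | nil => simp [pathSum]
    | cons v l => rw [pathSum, pathSum, ih, edgeForm_swap]; ring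

theorem pathSum_edgeForm_of_notMem {p : V} (q : V) {L : List V} (h : p ∉ L) :
    pathSum (edgeForm p q) L = 0 := by
  induction L with
  | nil => simp [pathSum]
  | cons u l ih =>
    cases l with
    | nil => simp [pathSum]
    | cons v l =>
      simp only [List.mem_cons, not_or] at h ih
      rw [pathSum, ih h.2, edgeForm_eq_zero (fun e => (h.1 e.symm).elim)
        (fun e => (h.2.1 e.symm).elim)]
      rfl

end EdgeForm

theorem IsLoop.head_mem {x y : ℤ × ℤ} {L : List (ℤ × ℤ)} (h : IsLoop x y L) : x ∈ L :=
  List.mem_of_mem_head? (by rw [h.head]; rfl)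

theorem IsLoop.last_mem {x y : ℤ × ℤ} {L : List (ℤ × ℤ)} (h : IsLoop x y L) : y ∈ L :=
  List.mem_of_mem_getLast? (by rw [h.last]; rfl)

theorem Adj.symm {u v : ℤ × ℤ} (h : Adj u v) : Adj v u := by
  unfold Adj at *; omega

theorem Adj.ne {u v : ℤ × ℤ} (h : Adj u v) : u ≠ v := by
  rintro rfl; unfold Adj at h; omega

theorem IsLoop.reverse {x y : ℤ × ℤ} {L : List (ℤ × ℤ)} (h : IsLoop x y L) :
    IsLoop y x L.reverse where
  chain := List.isChain_reverse.2 (h.chain.imp fun _ _ h => h.symm)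
  nodup := List.nodup_reverse.2 h.nodup
  head := by rw [List.head?_reverse, h.last]
  last := by rw [List.getLast?_reverse, h.head]
  closing := h.closing.symm

theorem Bounds.reverse {x y : ℤ × ℤ} {L : List (ℤ × ℤ)} {H : Finset (ℤ × ℤ)} {ε : ℤ}
    (h : Bounds x y L H ε) : Bounds y x L.reverse H (-ε) := by
  intro A hA
  have := h A hA
  unfold loopSum at *
  rw [pathSum_reverse hA, hA x y]
  linarith

theorem IsLoop.loopSum_edgeForm_of_notMem {x y p : ℤ × ℤ} {L : List (ℤ × ℤ)}
    (h : IsLoop x y L) (q : ℤ × ℤ) (hp : p ∉ L) : loopSum (edgeForm p q) x y L = 0 := by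
  unfold loopSum
  rw [pathSum_edgeForm_of_notMem q hp, edgeForm_eq_zero]
  · rfl
  · rintro rfl; exact (hp h.last_mem).elim
  · rintro rfl; exact (hp h.head_mem).elim

/-- The two cells along a lattice edge, and the curl of the unit flow along this edge. -/
theorem Adj.exists_cells {p q : ℤ × ℤ} (h : Adj p q) : ∃ c c' : ℤ × ℤ, c ≠ c' ∧
    (∀ d, Touches p d ∧ Touches q d ↔ d = c ∨ d = c') ∧
    ∀ d, curl (edgeForm p q) d = (if d = c then 1 else 0) - (if d = c' then 1 else 0) := by
  have key : ∀ p q : ℤ × ℤ, (q.1 = p.1 + 1 ∧ q.2 = p.2) ∨ (q.1 = p.1 ∧ q.2 = p.2 + 1) →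
      ∃ c c' : ℤ × ℤ, c ≠ c' ∧ (∀ d, Touches p d ∧ Touches q d ↔ d = c ∨ d = c') ∧
      ∀ d, curl (edgeForm p q) d = (if d = c then 1 else 0) - (if d = c' then 1 else 0) := by
    rintro ⟨i, j⟩ ⟨k, l⟩ (⟨h₁, h₂⟩ | ⟨h₁, h₂⟩) <;> simp only at h₁ h₂ <;> subst h₁ h₂
    · refine ⟨(i, l), (i, l - 1), by simp; omega, ?_, ?_⟩
      · rintro ⟨a, b⟩
        simp only [Touches, Prod.mk.injEq]; omega
      · rintro ⟨a, b⟩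
        have h₁ : edgeForm (i, l) (i + 1, l) (a, b) (a + 1, b) =
            if a = i ∧ b = l then 1 else 0 := by
          simp only [edgeForm, Prod.mk.injEq]; split_ifs <;> omega
        have h₂ : edgeForm (i, l) (i + 1, l) (a + 1, b) (a + 1, b + 1) = 0 := by
          simp only [edgeForm, Prod.mk.injEq]; split_ifs <;> omega
        have h₃ : edgeForm (i, l) (i + 1, l) (a + 1, b + 1) (a, b + 1) =
            - if a = i ∧ b = l - 1 then 1 else 0 := by
          simp only [edgeForm, Prod.mk.injEq]; split_ifs <;> omega
        have h₄ : edgeForm (i, l) (i + 1, l) (a, b + 1) (a, b) = 0 := by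
          simp only [edgeForm, Prod.mk.injEq]; split_ifs <;> omega
        simp only [curl, h₁, h₂, h₃, h₄, Prod.mk.injEq]; ring
    · refine ⟨(k - 1, j), (k, j), by simp, ?_, ?_⟩
      · rintro ⟨a, b⟩
        simp only [Touches, Prod.mk.injEq]; omega
      · rintro ⟨a, b⟩
        have h₁ : edgeForm (k, j) (k, j + 1) (a, b) (a + 1, b) = 0 := by
          simp only [edgeForm, Prod.mk.injEq]; split_ifs <;> omega
        have h₂ : edgeForm (k, j) (k, j + 1) (a + 1, b) (a + 1, b + 1) =
            if a = k - 1 ∧ b = j then 1 else 0 := by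
          simp only [edgeForm, Prod.mk.injEq]; split_ifs <;> omega
        have h₃ : edgeForm (k, j) (k, j + 1) (a + 1, b + 1) (a, b + 1) = 0 := by
          simp only [edgeForm, Prod.mk.injEq]; split_ifs <;> omega
        have h₄ : edgeForm (k, j) (k, j + 1) (a, b + 1) (a, b) =
            - if a = k ∧ b = j then 1 else 0 := by
          simp only [edgeForm, Prod.mk.injEq]; split_ifs <;> omega
        simp only [curl, h₁, h₂, h₃, h₄, Prod.mk.injEq]; ring
  have hor : ((q.1 = p.1 + 1 ∧ q.2 = p.2) ∨ (q.1 = p.1 ∧ q.2 = p.2 + 1)) ∨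
      ((p.1 = q.1 + 1 ∧ p.2 = q.2) ∨ (p.1 = q.1 ∧ p.2 = q.2 + 1)) := by
    unfold Adj at h; omega
  rcases hor with h | h
  · exact key p q h
  · obtain ⟨c, c', hne, hcell, hcurl⟩ := key q p h
    refine ⟨c', c, hne.symm, fun d => ?_, fun d => ?_⟩
    · rw [and_comm, hcell, or_comm]
    · have : curl (edgeForm p q) d = - curl (edgeForm q p) d := by
        simp only [curl, edgeForm_swap q p]; ring
      rw [this, hcurl]; ring

theorem Bounds.mem_iff_of_loopSum_eq_zero {x y p q : ℤ × ℤ} {L : List (ℤ × ℤ)}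
    {H : Finset (ℤ × ℤ)} {ε : ℤ} (hB : Bounds x y L H ε) (hε : ε ≠ 0) (hpq : Adj p q)
    (h0 : loopSum (edgeForm p q) x y L = 0) {c d : ℤ × ℤ} (hpc : Touches p c)
    (hqc : Touches q c) (hpd : Touches p d) (hqd : Touches q d) : c ∈ H ↔ d ∈ H := by
  obtain ⟨e, e', hne, hcell, hcurl⟩ := hpq.exists_cells
  have h := hB _ (edgeForm_antisymm p q)
  simp only [hcurl, Finset.sum_sub_distrib, Finset.sum_ite_eq'] at h
  rw [h0, eq_comm, mul_eq_zero, or_iff_right hε] at h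
  have h1 := (hcell c).1 ⟨hpc, hqc⟩
  have h2 := (hcell d).1 ⟨hpd, hqd⟩
  grind

theorem Bounds.exists_mem_of_loopSum_eq_one {x y p q : ℤ × ℤ} {L : List (ℤ × ℤ)}
    {H : Finset (ℤ × ℤ)} {ε : ℤ} (hB : Bounds x y L H ε) (hpq : Adj p q)
    (h1 : loopSum (edgeForm p q) x y L = 1) {d : ℤ × ℤ} (hpd : Touches p d)
    (hqd : Touches q d) (hd : d ∉ H) :
    (∃ c ∈ H, Touches p c ∧ Touches q c) ∧ ε * curl (edgeForm p q) d = -1 := by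
  obtain ⟨e, e', hne, hcell, hcurl⟩ := hpq.exists_cells
  have h := hB _ (edgeForm_antisymm p q)
  simp only [hcurl, Finset.sum_sub_distrib, Finset.sum_ite_eq'] at h
  rw [h1] at h
  rw [hcurl]
  have h2 := (hcell d).1 ⟨hpd, hqd⟩
  have h3 := (hcell e).2 (Or.inl rfl)
  have h4 := (hcell e').2 (Or.inr rfl)
  rcases h2 with rfl | rfl
  · have : e' ∈ H := by by_contra hcon; simp [hd, hcon] at h
    refine ⟨⟨e', this, h4⟩, ?_⟩
    simp only [hd, this, if_true, if_false, hne] at h ⊢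
    linarith
  · have : e ∈ H := by by_contra hcon; simp [hd, hcon] at h
    refine ⟨⟨e, this, h3⟩, ?_⟩
    simp only [hd, this, if_true, if_false, hne.symm] at h ⊢
    linarith

/-- Off the bounding loop, all cells around a vertex lie on the same side. -/
theorem Bounds.mem_iff_of_notMem {x y p : ℤ × ℤ} {L : List (ℤ × ℤ)}
    {H : Finset (ℤ × ℤ)} {ε : ℤ} (hB : Bounds x y L H ε) (hε : ε ≠ 0) (hL : IsLoop x y L)
    (hp : p ∉ L) {c d : ℤ × ℤ} (hc : Touches p c) (hd : Touches p d) : c ∈ H ↔ d ∈ H := by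
  trans (d.1, c.2) ∈ H
  · refine hB.mem_iff_of_loopSum_eq_zero hε (p := p) (q := (p.1, 2 * c.2 + 1 - p.2)) ?_
      (hL.loopSum_edgeForm_of_notMem _ hp) hc ?_ ?_ ?_ <;>
      grind [Adj, Touches]
  · refine hB.mem_iff_of_loopSum_eq_zero hε (p := p) (q := (2 * d.1 + 1 - p.1, p.2)) ?_
      (hL.loopSum_edgeForm_of_notMem _ hp) ?_ ?_ hd ?_ <;>
      grind [Adj, Touches]

/-- Cells bounded by a loop do not touch an extremal vertex off the loop. -/
theorem Bounds.not_touches_of_extremal {x y v : ℤ × ℤ} {L : List (ℤ × ℤ)}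
    {H : Finset (ℤ × ℤ)} {ε : ℤ} (hB : Bounds x y L H ε) (hε : ε ≠ 0) (hL : IsLoop x y L)
    (hv : v ∉ L) {s : ℤ} (hs : s = 1 ∨ s = -1)
    (hmax : ∀ z ∈ L, s * (z.2 - z.1) ≤ s * (v.2 - v.1)) : ∀ c ∈ H, ¬ Touches v c := by
  intro c hc hvc
  set f : ℕ → ℤ × ℤ := fun k =>
    if s = 1 then (v.1 - 1, v.2 + k) else (v.1, v.2 - 1 - k) with hf
  have hmem : ∀ k, f k ∈ H := by
    intro k
    induction k with
    | zero =>
      refine (hB.mem_iff_of_notMem hε hL hv hvc ?_).1 hc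
      rcases hs with rfl | rfl <;> simp [hf, Touches]
    | succ k ih =>
      refine (hB.mem_iff_of_notMem hε hL
        (p := if s = 1 then (v.1 - 1, v.2 + k + 1) else (v.1, v.2 - 1 - k)) ?_ ?_ ?_).1 ih
      · intro hcon
        have := hmax _ hcon
        rcases hs with rfl | rfl
        · simp only [if_true] at this; omega
        · simp only [show ¬ ((-1 : ℤ) = 1) by norm_num, if_false] at this; omega
      · rcases hs with rfl | rfl <;> simp [hf, Touches]
      · rcases hs with rfl | rfl <;> simp [hf, Touches] <;> omega
  have hinj : Function.Injective f := by
    intro k l hkl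
    rcases hs with rfl | rfl <;> simp [hf] at hkl <;> exact hkl
  exact Set.infinite_of_injective_forall_mem hinj hmem H.finite_toSet

/-- Vertices off the bounding loop which are joined by a path off this loop are either all
touched by the bounded cells, or all untouched. -/
theorem Bounds.not_touches_of_isChain {x y z : ℤ × ℤ} {L M : List (ℤ × ℤ)}
    {H : Finset (ℤ × ℤ)} {ε : ℤ} (hB : Bounds x y L H ε) (hε : ε ≠ 0) (hL : IsLoop x y L)
    (hM : M.IsChain Adj) (hML : ∀ p ∈ M, p ∉ L) (hz : z ∈ M) (hz0 : ∀ c ∈ H, ¬ Touches z c) :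
    ∀ p ∈ M, ∀ c ∈ H, ¬ Touches p c := by
  have step : ∀ p q : ℤ × ℤ, p ∉ L → q ∉ L → Adj p q → (∀ c ∈ H, ¬ Touches p c) →
      ∀ c ∈ H, ¬ Touches q c := by
    intro p q hp hq hpq hp0 c hc hqc
    obtain ⟨e, e', -, hcell, -⟩ := hpq.exists_cells
    have he := (hcell e).2 (Or.inl rfl)
    exact hp0 e ((hB.mem_iff_of_notMem hε hL hq hqc he.2).1 hc) he.1
  induction M generalizing z with
  | nil => simp
  | cons u l ih =>
    cases l with
    | nil => simp only [List.mem_singleton] at hz ⊢; rintro p rfl; rwa [← hz]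
    | cons v l =>
      rw [List.isChain_cons_cons] at hM
      have hu := hML u (by simp)
      have hv := hML v (by simp)
      have ih' := fun z hz hz0 =>
        ih (z := z) hM.2 (fun p hp => hML p (List.mem_cons_of_mem _ hp)) hz hz0
      have hall : ∀ p ∈ v :: l, ∀ c ∈ H, ¬ Touches p c := by
        rcases List.mem_cons.1 hz with rfl | hz
        · exact ih' v (by simp) (step z v hu hv hM.1 hz0)
        · exact ih' z hz hz0
      intro p hp
      rcases List.mem_cons.1 hp with rfl | hp
      · exact step v p hv hu hM.1.symm (hall v (by simp))
      · exact hall p hp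

/-! ### Shellings -/

/-- The cell `p` meets the cells of `H` exactly along an edge. -/
def EdgeAttached (H : Finset (ℤ × ℤ)) (p : ℤ × ℤ) : Prop :=
  ∃ p' ∈ H, Adj p p' ∧ ∀ z, Touches z p → ¬ Touches z p' → ∀ h ∈ H, ¬ Touches z h

/-- The cell `p` meets the cells of `H` exactly along two edges with common vertex `w`, all the
other cells at `w` being in `H`. -/
def CornerAttached (H : Finset (ℤ × ℤ)) (p : ℤ × ℤ) : Prop :=
  ∃ w v, Touches w p ∧ Touches v p ∧ w.1 ≠ v.1 ∧ w.2 ≠ v.2 ∧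
    (∀ c, Touches w c → c ≠ p → c ∈ H) ∧ ∀ h ∈ H, ¬ Touches v h

/-- Sets of cells obtained from the cell `r` by successively attaching cells along one edge or
two consecutive edges. -/
inductive Shelling (r : ℤ × ℤ) : Finset (ℤ × ℤ) → Prop
  | single : Shelling r {r}
  | edge {H : Finset (ℤ × ℤ)} {p : ℤ × ℤ} : Shelling r H → p ∉ H → EdgeAttached H p →
      Shelling r (insert p H)
  | corner {H : Finset (ℤ × ℤ)} {p : ℤ × ℤ} : Shelling r H → p ∉ H → CornerAttached H p →
      Shelling r (insert p H)

theorem Shelling.mem {r : ℤ × ℤ} {H : Finset (ℤ × ℤ)} (h : Shelling r H) : r ∈ H := by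
  induction h with
  | single => simp
  | edge _ _ _ ih => exact Finset.mem_insert_of_mem ih
  | corner _ _ _ ih => exact Finset.mem_insert_of_mem ih

/-- Two shellings can be concatenated when they meet within the edge-attached root of the
second one. -/
theorem Shelling.union {r r' : ℤ × ℤ} {H H' : Finset (ℤ × ℤ)} (h : Shelling r H)
    (h' : Shelling r' H') (hd : Disjoint H H') (hr : EdgeAttached H r')
    (ht : ∀ z, (∃ c ∈ H, Touches z c) → (∃ c ∈ H', Touches z c) → Touches z r') :
    Shelling r (H ∪ H') := by
  induction h' with
  | single =>
    rw [Finset.union_comm, ← Finset.insert_eq]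
    exact h.edge (Finset.disjoint_singleton_right.1 hd) hr
  | @edge K p hK hpK hp ih =>
    rw [Finset.disjoint_insert_right] at hd
    have ih' := ih hd.2 fun z h1 ⟨c, hc, hzc⟩ =>
      ht z h1 ⟨c, Finset.mem_insert_of_mem hc, hzc⟩
    rw [Finset.union_insert]
    refine ih'.edge (by simp [hd.1, hpK]) ?_
    obtain ⟨p', hp', hadj, hatt⟩ := hp
    refine ⟨p', Finset.mem_union_right _ hp', hadj, fun z hz hz' c hc hzc => ?_⟩
    rcases Finset.mem_union.1 hc with hc | hc
    · exact hatt z hz hz' r' hK.mem (ht z ⟨c, hc, hzc⟩ ⟨p, Finset.mem_insert_self _ _, hz⟩)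
    · exact hatt z hz hz' c hc hzc
  | @corner K p hK hpK hp ih =>
    rw [Finset.disjoint_insert_right] at hd
    have ih' := ih hd.2 fun z h1 ⟨c, hc, hzc⟩ =>
      ht z h1 ⟨c, Finset.mem_insert_of_mem hc, hzc⟩
    rw [Finset.union_insert]
    refine ih'.corner (by simp [hd.1, hpK]) ?_
    obtain ⟨w, v, hw, hv, h1, h2, hall, hatt⟩ := hp
    refine ⟨w, v, hw, hv, h1, h2, fun c hc hcp => Finset.mem_union_right _ (hall c hc hcp),
      fun c hc hvc => ?_⟩
    rcases Finset.mem_union.1 hc with hc | hc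
    · exact hatt r' hK.mem (ht v ⟨c, hc, hvc⟩ ⟨p, Finset.mem_insert_self _ _, hv⟩)
    · exact hatt c hc hvc

/-- The points `a, v, b, w` are the consecutive corners of the cell `q`. -/
def Square (a v b w q : ℤ × ℤ) : Prop :=
  Touches v q ∧ Touches w q ∧ v.1 ≠ w.1 ∧ v.2 ≠ w.2 ∧
    ((a.1 = v.1 ∧ a.2 = w.2 ∧ b.1 = w.1 ∧ b.2 = v.2) ∨
      (a.1 = w.1 ∧ a.2 = v.2 ∧ b.1 = v.1 ∧ b.2 = w.2))

theorem Square.swap {a v b w q : ℤ × ℤ} (h : Square a v b w q) : Square b v a w q := by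
  unfold Square at *; tauto

theorem Square.touches {a v b w q : ℤ × ℤ} (h : Square a v b w q) :
    Touches a q ∧ Touches v q ∧ Touches b q ∧ Touches w q := by
  unfold Square Touches at *; omega

theorem Square.eq_of_touches {a v b w q z : ℤ × ℤ} (h : Square a v b w q)
    (hz : Touches z q) : z = a ∨ z = v ∨ z = b ∨ z = w := by
  obtain ⟨a₁, a₂⟩ := a; obtain ⟨v₁, v₂⟩ := v; obtain ⟨b₁, b₂⟩ := b
  obtain ⟨w₁, w₂⟩ := w; obtain ⟨z₁, z₂⟩ := z; obtain ⟨q₁, q₂⟩ := q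
  obtain ⟨⟨hv₁, hv₂⟩, ⟨hw₁, hw₂⟩, hvw₁, hvw₂, h⟩ := h
  obtain ⟨hz₁, hz₂⟩ := hz
  simp only at hv₁ hv₂ hw₁ hw₂ hvw₁ hvw₂ hz₁ hz₂
  have h₁ : z₁ = v₁ ∨ z₁ = w₁ := by clear h; omega
  have h₂ : z₂ = v₂ ∨ z₂ = w₂ := by clear h; omega
  clear hv₁ hv₂ hw₁ hw₂ hvw₁ hvw₂ hz₁ hz₂
  rcases h with ⟨h, h', h'', h'''⟩ | ⟨h, h', h'', h'''⟩ <;> simp only at h h' h'' h''' <;>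
    subst h h' h'' h''' <;> rcases h₁ with rfl | rfl <;> rcases h₂ with rfl | rfl <;> simp

theorem Square.adj {a v b w q : ℤ × ℤ} (h : Square a v b w q) : Adj w a ∧ Adj w b := by
  unfold Square Touches Adj at *; omega

/-- The circulation along the corners of a cell is the curl, up to orientation. -/
theorem Square.exists_sum_eq {a v b w q : ℤ × ℤ} (h : Square a v b w q) :
    ∃ η : ℤ, ∀ A : ℤ × ℤ → ℤ × ℤ → ℤ, (∀ u v, A u v = - A v u) →
      A a v + A v b + A b w + A w a = η * curl A q := by
  have key : ∀ a v b w q : ℤ × ℤ, Touches v q → Touches w q → v.1 ≠ w.1 → v.2 ≠ w.2 →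
      (a.1 = v.1 ∧ a.2 = w.2 ∧ b.1 = w.1 ∧ b.2 = v.2) →
      ∃ η : ℤ, ∀ A : ℤ × ℤ → ℤ × ℤ → ℤ, (∀ u v, A u v = - A v u) →
      A a v + A v b + A b w + A w a = η * curl A q := by
    rintro ⟨a₁, a₂⟩ ⟨v₁, v₂⟩ ⟨b₁, b₂⟩ ⟨w₁, w₂⟩ ⟨q₁, q₂⟩ ⟨h₁, h₂⟩ ⟨h₃, h₄⟩ h₅ h₆ ⟨h₇, h₈, h₉, h₁₀⟩
    simp only at h₁ h₂ h₃ h₄ h₅ h₆ h₇ h₈ h₉ h₁₀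
    subst h₇ h₈ h₉ h₁₀
    rcases h₁ with rfl | rfl <;> rcases h₂ with rfl | rfl
    · obtain rfl : b₁ = a₁ + 1 := by omega
      obtain rfl : a₂ = b₂ + 1 := by omega
      exact ⟨1, fun A hA => by simp only [curl]; ring⟩
    · obtain rfl : b₁ = a₁ + 1 := by omega
      obtain rfl : a₂ = q₂ := by omega
      refine ⟨-1, fun A hA => ?_⟩
      simp only [curl]
      linarith [hA (a₁, a₂) (a₁, a₂ + 1), hA (a₁, a₂ + 1) (a₁ + 1, a₂ + 1),
        hA (a₁ + 1, a₂ + 1) (a₁ + 1, a₂), hA (a₁ + 1, a₂) (a₁, a₂)]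
    · obtain rfl : b₁ = q₁ := by omega
      obtain rfl : a₂ = b₂ + 1 := by omega
      refine ⟨-1, fun A hA => ?_⟩
      simp only [curl]
      linarith [hA (b₁ + 1, b₂ + 1) (b₁ + 1, b₂), hA (b₁ + 1, b₂) (b₁, b₂),
        hA (b₁, b₂) (b₁, b₂ + 1), hA (b₁, b₂ + 1) (b₁ + 1, b₂ + 1)]
    · obtain rfl : b₁ = q₁ := by omega
      obtain rfl : a₂ = q₂ := by omega
      exact ⟨1, fun A hA => by simp only [curl]; ring⟩
  obtain ⟨h₁, h₂, h₃, h₄, h | h⟩ := h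
  · exact key a v b w q h₁ h₂ h₃ h₄ h
  · obtain ⟨η, hη⟩ := key b v a w q h₁ h₂ h₃ h₄ (by tauto)
    refine ⟨-η, fun A hA => ?_⟩
    have := hη A hA
    rw [hA a v, hA v b, hA b w, hA w a]
    linarith

/-! ### Unit flows along edges of a loop -/

section

variable {x y p q e a b : ℤ × ℤ} {L l₁ l₂ : List (ℤ × ℤ)}

theorem IsLoop.last_mem_cons (hL : IsLoop x y (l₁ ++ q :: l₂)) : y ∈ q :: l₂ := by
  have := hL.last
  rw [List.getLast?_append_of_ne_nil _ (by simp)] at this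
  exact List.mem_of_mem_getLast? (by rw [this]; rfl)

theorem IsLoop.head_mem_append (hL : IsLoop x y (l₁ ++ q :: l₂)) : x ∈ l₁ ++ [q] := by
  have := hL.head
  rw [List.append_cons, List.head?_append_of_ne_nil _ (by simp)] at this
  exact List.mem_of_mem_head? (by rw [this]; rfl)

theorem IsLoop.loopSum_edgeForm_consecutive (hL : IsLoop x y (l₁ ++ p :: q :: l₂))
    (hlen : 3 ≤ (l₁ ++ p :: q :: l₂).length) :
    loopSum (edgeForm p q) x y (l₁ ++ p :: q :: l₂) = 1 := by
  have hnd := hL.nodup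
  simp only [List.nodup_append, List.nodup_cons, List.mem_cons, not_or] at hnd
  obtain ⟨-, ⟨⟨hpq, hp⟩, hq, -⟩, hdis⟩ := hnd
  have hq1 : q ∉ l₁ ++ [p] := by
    simp only [List.mem_append, List.mem_singleton, not_or]
    exact ⟨fun h => hdis q h q (by simp) rfl, fun h => hpq h.symm⟩
  have hp2 : p ∉ q :: l₂ := by simp [hpq, hp]
  have hpath : pathSum (edgeForm p q) (l₁ ++ p :: q :: l₂) = 1 := by
    rw [pathSum_append_cons, ← neg_neg (pathSum (edgeForm p q) (l₁ ++ [p])),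
      ← pathSum_edgeForm_swap, pathSum_edgeForm_of_notMem _ hq1, pathSum,
      pathSum_edgeForm_of_notMem _ hp2, edgeForm_self hpq]
    rfl
  have hy : y ∈ q :: l₂ := by
    have := hL
    rw [List.append_cons] at this
    exact this.last_mem_cons
  have hx : x ∈ l₁ ++ [p] := hL.head_mem_append
  rw [loopSum, hpath, edgeForm_eq_zero]
  · rfl
  · rintro rfl; exact (hp2 hy).elim
  · rintro hxp rfl
    subst hxp
    have h1 : l₂ = [] := by
      by_contra hne
      have := hL.last
      rw [show l₁ ++ x :: y :: l₂ = (l₁ ++ [x, y]) ++ l₂ by simp,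
        List.getLast?_append_of_ne_nil _ hne] at this
      exact hq (List.mem_of_mem_getLast? (by rw [this]; rfl))
    have h2 : l₁ = [] := by
      by_contra hne
      have := hL.head
      rw [List.head?_append_of_ne_nil _ hne] at this
      exact hdis x (List.mem_of_mem_head? (by rw [this]; rfl)) x (by simp) rfl
    subst h1 h2
    simp at hlen

theorem IsLoop.loopSum_edgeForm_closing (hL : IsLoop x y L) (hlen : 3 ≤ L.length) :
    loopSum (edgeForm y x) x y L = 1 := by
  have hyx := hL.closing.ne
  have hpath : pathSum (edgeForm y x) L = 0 := by
    match L, hL, hlen with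
    | u :: m :: n :: l, hL, _ =>
      obtain rfl : u = x := by simpa using hL.head
      have hnd := hL.nodup
      have hy : y ∈ n :: l := by
        have := hL.last
        rw [List.getLast?_cons_cons, List.getLast?_cons_cons] at this
        exact List.mem_of_mem_getLast? (by rw [this]; rfl)
      have hm : m ≠ y := by
        rintro rfl
        simp only [List.nodup_cons] at hnd
        exact hnd.2.1 hy
      rw [pathSum_edgeForm_swap, pathSum,
        pathSum_edgeForm_of_notMem _ (List.nodup_cons.1 hnd).1,
        edgeForm_eq_zero (fun _ => hm) (fun _ => hyx.symm)]
      rfl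
  rw [loopSum, hpath, edgeForm_self hyx]; rfl

theorem IsLoop.loopSum_edgeForm_interior (hL : IsLoop x y (l₁ ++ a :: p :: b :: l₂))
    (ha : e ≠ a) (hb : e ≠ b) :
    loopSum (edgeForm p e) x y (l₁ ++ a :: p :: b :: l₂) = 0 := by
  have hnd := hL.nodup
  simp only [List.nodup_append, List.nodup_cons, List.mem_cons, not_or] at hnd
  obtain ⟨-, ⟨⟨hap, -, -⟩, ⟨hpb, hp2⟩, -⟩, hdis⟩ := hnd
  have hp1 : p ∉ l₁ ++ [a] := by
    simp only [List.mem_append, List.mem_singleton, not_or]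
    exact ⟨fun h => hdis p h p (by simp) rfl, fun h => hap h.symm⟩
  have hp2 : p ∉ b :: l₂ := by simp [hpb, hp2]
  have hx : x ∈ l₁ ++ [a] := hL.head_mem_append
  have hy : y ∈ b :: l₂ := by
    have := hL
    rw [show l₁ ++ a :: p :: b :: l₂ = (l₁ ++ [a, p]) ++ b :: l₂ by simp] at this
    exact this.last_mem_cons
  rw [loopSum, pathSum_append_cons, pathSum, pathSum, pathSum_edgeForm_of_notMem _ hp1,
    pathSum_edgeForm_of_notMem _ hp2, edgeForm_eq_zero, edgeForm_eq_zero, edgeForm_eq_zero]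
  · rfl
  · rintro rfl; exact (hp2 hy).elim
  · rintro rfl; exact (hp1 hx).elim
  · exact fun _ => hb.symm
  · exact fun h => (hpb h.symm).elim
  · exact fun h => (hap h).elim
  · exact fun _ => ha.symm

end

/-! ### Filling loops -/

section

variable {x y v w q a b : ℤ × ℤ} {l₁ l₂ m n L : List (ℤ × ℤ)} {H H' : Finset (ℤ × ℤ)}

theorem Square.sign {A : ℤ × ℤ → ℤ × ℤ → ℤ} {ε η S : ℤ} (h : ε * curl A q = -1)
    (hS : S = -1) (hη : S = η * curl A q) : ε = η := by
  have hne : curl A q ≠ 0 := by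
    intro h0; rw [h0] at h; simp at h
  exact mul_right_cancel₀ hne (by rw [h, ← hη, hS])

theorem Square.ne (h : Square a v b w q) :
    a ≠ v ∧ a ≠ b ∧ a ≠ w ∧ v ≠ b ∧ v ≠ w ∧ b ≠ w := by
  obtain ⟨-, -, h₁, h₂, h⟩ := h
  refine ⟨?_, ?_, ?_, ?_, ?_, ?_⟩ <;> rintro rfl <;> omega

theorem Square.sum_edgeForm_left (h : Square a v b w q) :
    edgeForm a w a v + edgeForm a w v b + edgeForm a w b w + edgeForm a w w a = -1 := by
  obtain ⟨h₁, h₂, h₃, h₄, h₅, h₆⟩ := h.ne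
  rw [edgeForm_eq_zero (by tauto) (by tauto), edgeForm_eq_zero (by tauto) (by tauto),
    edgeForm_eq_zero (by grind) (by grind), edgeForm_antisymm, edgeForm_self h₃]
  rfl

theorem Square.sum_edgeForm_right (h : Square a v b w q) :
    edgeForm w b a v + edgeForm w b v b + edgeForm w b b w + edgeForm w b w a = -1 := by
  obtain ⟨h₁, h₂, h₃, h₄, h₅, h₆⟩ := h.ne
  rw [edgeForm_eq_zero (by grind) (by grind), edgeForm_eq_zero (by grind) (by grind),
    edgeForm_antisymm, edgeForm_self h₆.symm, edgeForm_eq_zero (by grind) (by grind)]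
  rfl

theorem Adj.eq_of_touches {p q c d e : ℤ × ℤ} (h : Adj p q) (hpc : Touches p c)
    (hqc : Touches q c) (hpd : Touches p d) (hqd : Touches q d) (hpe : Touches p e)
    (hqe : Touches q e) (hc : c ≠ e) (hd : d ≠ e) : c = d := by
  obtain ⟨c₁, c₂, -, h, -⟩ := h.exists_cells
  have := (h c).1 ⟨hpc, hqc⟩
  have := (h d).1 ⟨hpd, hqd⟩
  have := (h e).1 ⟨hpe, hqe⟩
  grind

theorem loopSum_append_cons_cons_cons (A : ℤ × ℤ → ℤ × ℤ → ℤ) :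
    loopSum A x y (l₁ ++ a :: v :: b :: l₂) =
      pathSum A (l₁ ++ [a]) + A a v + A v b + pathSum A (b :: l₂) + A y x := by
  rw [loopSum, pathSum_append_cons, pathSum, pathSum]; ring

theorem Touches.of_reflect {c : ℤ × ℤ} (hw : Touches w c) (ha : Adj w a) (hac : ¬ Touches a c) :
    Touches (2 * w.1 - a.1, 2 * w.2 - a.2) c := by
  unfold Touches Adj at *; simp only; omega

theorem Square.touches_reflect {c : ℤ × ℤ} (h : Square a v b w q) (hw : Touches w c)
    (ha : Touches a c) (hc : c ≠ q) : Touches (2 * w.1 - b.1, 2 * w.2 - b.2) c := by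
  refine hw.of_reflect h.adj.2 fun hb => hc ?_
  obtain ⟨a₁, a₂⟩ := a; obtain ⟨v₁, v₂⟩ := v; obtain ⟨b₁, b₂⟩ := b
  obtain ⟨w₁, w₂⟩ := w; obtain ⟨c₁, c₂⟩ := c; obtain ⟨q₁, q₂⟩ := q
  obtain ⟨⟨hv₁, hv₂⟩, ⟨hw₁, hw₂⟩, hvw₁, hvw₂, h⟩ := h
  unfold Touches at *
  simp only [Prod.mk.injEq] at *
  rcases h with ⟨h, h', h'', h'''⟩ | ⟨h, h', h'', h'''⟩ <;> subst h h' h'' h''' <;>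
    constructor <;> omega

theorem IsLoop.corner_cut (hL' : IsLoop x y (l₁ ++ a :: w :: b :: l₂))
    (hsq : Square a v b w q) {r : ℤ × ℤ} {ε : ℤ} (hε : ε ≠ 0)
    (hB : Bounds x y (l₁ ++ a :: w :: b :: l₂) H ε) (hS : Shelling r H)
    (hv : ∀ c ∈ H, ¬ Touches v c) :
    Shelling r (insert q H) ∧ Bounds x y (l₁ ++ a :: v :: b :: l₂) (insert q H) ε := by
  obtain ⟨ha, hvq, hb, hw⟩ := hsq.touches
  have hq : q ∉ H := fun h => hv q h hvq
  have hlen : 3 ≤ (l₁ ++ a :: w :: b :: l₂).length := by simp; omega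
  have haw := hL'.loopSum_edgeForm_consecutive hlen
  have hwb : loopSum (edgeForm w b) x y (l₁ ++ a :: w :: b :: l₂) = 1 := by
    have h1 := hL'
    rw [show l₁ ++ a :: w :: b :: l₂ = (l₁ ++ [a]) ++ w :: b :: l₂ by simp] at h1 hlen ⊢
    exact h1.loopSum_edgeForm_consecutive hlen
  obtain ⟨⟨c₁, hc₁, hac₁, hwc₁⟩, hsgn⟩ :=
    hB.exists_mem_of_loopSum_eq_one hsq.adj.1.symm haw ha hw hq
  obtain ⟨⟨c₂, hc₂, hwc₂, hbc₂⟩, -⟩ := hB.exists_mem_of_loopSum_eq_one hsq.adj.2 hwb hw hb hq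
  obtain ⟨η, hη⟩ := hsq.exists_sum_eq
  have hεη : ε = η := Square.sign hsgn hsq.sum_edgeForm_left (hη _ (edgeForm_antisymm _ _))
  refine ⟨hS.corner hq ⟨w, v, hw, hvq, hsq.2.2.1.symm, hsq.2.2.2.1.symm, fun c hc hcq => ?_, hv⟩,
    fun A hA => ?_⟩
  · by_cases hca : Touches a c
    · rwa [hsq.adj.1.symm.eq_of_touches hca hc hac₁ hwc₁ ha hw hcq fun h => hq (h ▸ hc₁)]
    by_cases hcb : Touches b c
    · rwa [hsq.adj.2.eq_of_touches hc hcb hwc₂ hbc₂ hw hb hcq fun h => hq (h ▸ hc₂)]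
    have hadj := hsq.adj
    have hne := hsq.2.2
    refine (hB.mem_iff_of_loopSum_eq_zero hε (p := w)
      (q := (2 * w.1 - b.1, 2 * w.2 - b.2)) ?_ (hL'.loopSum_edgeForm_interior ?_ ?_) hwc₁
      (hsq.touches_reflect hwc₁ hac₁ fun h => hq (h ▸ hc₁)) hc (hc.of_reflect hadj.2 hcb)).1 hc₁
    · have := hadj.2
      unfold Adj at *; simp only; omega
    · rintro rfl; simp only at hne; omega
    · have := hadj.2
      unfold Adj at this
      intro h
      rw [Prod.ext_iff] at h
      simp only at h; omega
  · have h1 := hB A hA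
    rw [loopSum_append_cons_cons_cons] at h1 ⊢
    rw [Finset.sum_insert hq]
    have h2 := hη A hA
    rw [← hεη] at h2
    rw [mul_add, ← h2, ← h1, hA b w, hA w a]
    ring

/-- Two sets of cells bounded by loops which share only one vertex and are outside each other
are disjoint. -/
theorem Bounds.disjoint {x' y' : ℤ × ℤ} {L' : List (ℤ × ℤ)} {ε ε' : ℤ} (hL : IsLoop x y L)
    (hL' : IsLoop x' y' L') (hB : Bounds x y L H ε) (hB' : Bounds x' y' L' H' ε')
    (hε : ε ≠ 0) (hε' : ε' ≠ 0) (h : ∀ z ∈ L, z ≠ w → ∀ c ∈ H', ¬ Touches z c)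
    (h' : ∀ z ∈ L', z ≠ w → ∀ c ∈ H, ¬ Touches z c) : Disjoint H H' := by
  by_contra hd
  rw [Finset.disjoint_iff_inter_eq_empty, ← Finset.not_nonempty_iff_eq_empty, not_not] at hd
  obtain ⟨c, hc, hmax⟩ := Finset.exists_max_image _ (fun c : ℤ × ℤ => c.2) hd
  rw [Finset.mem_inter] at hc
  have hnot : ¬ ((c.1, c.2 + 1) ∈ H ∧ (c.1, c.2 + 1) ∈ H') := fun h => by
    have := hmax _ (Finset.mem_inter.2 h); simp at this
  have ht₁ : Touches (c.1, c.2 + 1) c := by simp [Touches]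
  have ht₂ : Touches (c.1 + 1, c.2 + 1) c := by simp [Touches]
  have ht₃ : Touches (c.1, c.2 + 1) (c.1, c.2 + 1) := by simp [Touches]
  have ht₄ : Touches (c.1 + 1, c.2 + 1) (c.1, c.2 + 1) := by simp [Touches]
  have hne : (c.1, c.2 + 1) ≠ (c.1 + 1, c.2 + 1) := by simp
  rcases not_and_or.1 hnot with hn | hn
  · have h₁ : (c.1, c.2 + 1) ∈ L := by
      by_contra hm; exact hn ((hB.mem_iff_of_notMem hε hL hm ht₁ ht₃).1 hc.1)
    have h₂ : (c.1 + 1, c.2 + 1) ∈ L := by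
      by_contra hm; exact hn ((hB.mem_iff_of_notMem hε hL hm ht₂ ht₄).1 hc.1)
    by_cases hw : (c.1, c.2 + 1) = w
    · exact h _ h₂ (fun h => hne (hw.trans h.symm)) c hc.2 ht₂
    · exact h _ h₁ hw c hc.2 ht₁
  · have h₁ : (c.1, c.2 + 1) ∈ L' := by
      by_contra hm; exact hn ((hB'.mem_iff_of_notMem hε' hL' hm ht₁ ht₃).1 hc.2)
    have h₂ : (c.1 + 1, c.2 + 1) ∈ L' := by
      by_contra hm; exact hn ((hB'.mem_iff_of_notMem hε' hL' hm ht₂ ht₄).1 hc.2)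
    by_cases hw : (c.1, c.2 + 1) = w
    · exact h' _ h₂ (fun h => hne (hw.trans h.symm)) c hc.1 ht₂
    · exact h' _ h₁ hw c hc.1 ht₁

/-- `H` is the set of cells surrounded by the loop `L`, either degenerate or with a shelling
starting at the edge from `y` to `x`. -/
def Filled (x y : ℤ × ℤ) (L : List (ℤ × ℤ)) (H : Finset (ℤ × ℤ)) (ε : ℤ) : Prop :=
  (ε = 1 ∨ ε = -1) ∧ Bounds x y L H ε ∧
    (H = ∅ ∧ L = [x, y] ∨ 3 ≤ L.length ∧ ∃ r, Shelling r H ∧ Touches x r ∧ Touches y r)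

theorem Filled.reverse {ε : ℤ} (h : Filled x y L H ε) : Filled y x L.reverse H (-ε) := by
  obtain ⟨h₁, h₂, h₃⟩ := h
  refine ⟨by omega, h₂.reverse, ?_⟩
  rcases h₃ with ⟨h, rfl⟩ | ⟨h, r, hr, hx, hy⟩
  · exact .inl ⟨h, by simp⟩
  · exact .inr ⟨by simpa, r, hr, hy, hx⟩

theorem IsLoop.inner (hL : IsLoop x y (m ++ w :: n ++ a :: v :: b :: l₂)) (haw : Adj a w) :
    IsLoop w a (w :: n ++ [a]) := by
  have hc := hL.chain
  have hn := hL.nodup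
  rw [show m ++ w :: n ++ a :: v :: b :: l₂ = m ++ ((w :: n ++ [a]) ++ v :: b :: l₂) by simp]
    at hc hn
  refine ⟨(List.isChain_append.1 (List.isChain_append.1 hc).2.1).1, ?_, by simp, ?_, haw⟩
  · exact (List.nodup_append.1 (List.nodup_append.1 hn).2.1).1
  · rw [List.getLast?_append_of_ne_nil _ (by simp)]; rfl

theorem IsLoop.outer (hL : IsLoop x y (m ++ w :: n ++ a :: v :: b :: l₂)) (hwb : Adj w b) :
    IsLoop x y (m ++ w :: b :: l₂) := by
  have hc := hL.chain
  have hn := hL.nodup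
  have hh := hL.head
  have hl := hL.last
  refine ⟨?_, ?_, ?_, ?_, hL.closing⟩
  · rw [show m ++ w :: n ++ a :: v :: b :: l₂ = (m ++ [w]) ++ ((n ++ [a, v]) ++ b :: l₂) by simp]
      at hc
    rw [List.append_cons]
    obtain ⟨h1, h2, -⟩ := List.isChain_append.1 hc
    refine List.isChain_append.2 ⟨h1, (List.isChain_append.1 h2).2.1, ?_⟩
    simpa using hwb
  · refine hn.sublist ?_
    rw [List.append_assoc]
    refine List.Sublist.append_left ?_ _
    simp only [List.cons_append]
    refine List.Sublist.cons_cons _ ?_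
    refine (List.sublist_append_of_sublist_right ?_)
    exact .cons _ (.cons _ (.refl _))
  · rw [← hh]; cases m <;> simp
  · rw [← hl, List.append_cons, List.getLast?_append_of_ne_nil _ (by simp),
      show m ++ w :: n ++ a :: v :: b :: l₂ = (m ++ w :: n ++ [a, v]) ++ b :: l₂ by simp,
      List.getLast?_append_of_ne_nil _ (by simp)]

end

section

variable {x y v w q a b : ℤ × ℤ} {l₁ l₂ m n L : List (ℤ × ℤ)} {H H' : Finset (ℤ × ℤ)}

theorem IsLoop.isChain_closing (hL : IsLoop x y (m ++ w :: n ++ a :: v :: b :: l₂)) :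
    (b :: l₂ ++ m).IsChain Adj := by
  have hc := hL.chain
  have hc1 := (List.isChain_append.1 hc).2.1
  rw [List.append_assoc] at hc
  have hc2 := (List.isChain_append.1 hc).1
  refine List.isChain_append.2 ⟨(List.isChain_cons_cons.1 (List.isChain_cons_cons.1 hc1).2).2,
    hc2, fun p hp r hr => ?_⟩
  have hl := hL.last
  have hh := hL.head
  rw [show m ++ w :: n ++ a :: v :: b :: l₂ = (m ++ w :: n ++ [a, v]) ++ b :: l₂ by simp,
    List.getLast?_append_of_ne_nil _ (by simp)] at hl
  have hm : m ≠ [] := by rintro rfl; simp at hr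
  rw [List.append_assoc, List.head?_append_of_ne_nil _ hm] at hh
  rw [Option.mem_def] at hp hr
  rw [hl, Option.some_inj] at hp
  rw [hh, Option.some_inj] at hr
  subst hp hr
  exact hL.closing

theorem Adj.adj_cells {p q c d : ℤ × ℤ} (h : Adj p q) (hpc : Touches p c) (hqc : Touches q c)
    (hpd : Touches p d) (hqd : Touches q d) (hcd : c ≠ d) : Adj c d := by
  obtain ⟨p₁, p₂⟩ := p; obtain ⟨q₁, q₂⟩ := q
  obtain ⟨c₁, c₂⟩ := c; obtain ⟨d₁, d₂⟩ := d
  unfold Touches Adj at *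
  simp only [ne_eq, Prod.mk.injEq] at *
  omega

theorem Bounds.congr_empty {ε ε' : ℤ} (h : Bounds x y L ∅ ε) : Bounds x y L ∅ ε' :=
  fun A hA => by rw [h A hA]; simp

theorem Filled.sign {ε η : ℤ} {c p : ℤ × ℤ} (hH : Filled x y L H ε) (hadj : Adj c p)
    (h1 : 3 ≤ L.length → loopSum (edgeForm c p) x y L = 1)
    (hc : Touches c q) (hp : Touches p q) (hq : q ∉ H) {S : ℤ} (hS : S = -1)
    (hη : S = η * curl (edgeForm c p) q) : Bounds x y L H η := by
  rcases hH.2.2 with ⟨rfl, -⟩ | ⟨h, -⟩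
  · exact hH.2.1.congr_empty
  · have := (hH.2.1.exists_mem_of_loopSum_eq_one hadj (h1 h) hc hp hq).2
    rw [← Square.sign this hS hη]
    exact hH.2.1

theorem IsLoop.pinch (hL : IsLoop x y (m ++ w :: n ++ a :: v :: b :: l₂))
    (hsq : Square a v b w q) {ε ε' : ℤ} (hi : Filled w a (w :: n ++ [a]) H ε)
    (ho : Filled x y (m ++ w :: b :: l₂) H' ε') (hv : ∀ c ∈ H, ¬ Touches v c)
    (hv' : ∀ c ∈ H', ¬ Touches v c) :
    ∃ K η, Filled x y (m ++ w :: n ++ a :: v :: b :: l₂) K η := by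
  obtain ⟨ha, hvq, hb, hw⟩ := hsq.touches
  obtain ⟨haw, hwb⟩ := hsq.adj
  replace haw := haw.symm
  have hLi := hL.inner haw
  have hLo := hL.outer hwb
  have hq : q ∉ H := fun h => hv q h hvq
  have hq' : q ∉ H' := fun h => hv' q h hvq
  have hwbo : 3 ≤ (m ++ w :: b :: l₂).length → 
      loopSum (edgeForm w b) x y (m ++ w :: b :: l₂) = 1 := hLo.loopSum_edgeForm_consecutive
  obtain ⟨η, hη⟩ := hsq.exists_sum_eq
  have hη1 : η = 1 ∨ η = -1 := by
    have := hη _ (edgeForm_antisymm a w)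
    rw [hsq.sum_edgeForm_left] at this
    exact Int.isUnit_iff.1 (.of_mul_eq_one (-curl (edgeForm a w) q) (by linarith))
  have hη0 : η ≠ 0 := by omega
  have hBi : Bounds w a (w :: n ++ [a]) H η :=
    hi.sign haw hLi.loopSum_edgeForm_closing ha hw hq hsq.sum_edgeForm_left
      (hη _ (edgeForm_antisymm _ _))
  have hBo : Bounds x y (m ++ w :: b :: l₂) H' η :=
    ho.sign hwb hwbo hw hb hq' hsq.sum_edgeForm_right (hη _ (edgeForm_antisymm _ _))
  have hnd := hL.nodup
  have hnd' : (∀ p ∈ n ++ [a], p ∉ m ++ w :: b :: l₂) ∧ ∀ p ∈ b :: l₂ ++ m, p ∉ w :: n ++ [a] := by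
    simp only [List.nodup_append, List.nodup_cons, List.mem_append, List.mem_cons] at hnd ⊢
    clear hη hBi hBo hi ho hv hv' hwbo
    grind
  have hib : ∀ c ∈ H, ¬ Touches b c := fun c hc hbc =>
    hq ((hBi.mem_iff_of_notMem hη0 hLi (hnd'.2 b (by simp)) hbc hb).1 hc)
  have hoa : ∀ c ∈ H', ¬ Touches a c := fun c hc hbc =>
    hq' ((hBo.mem_iff_of_notMem hη0 hLo (hnd'.1 a (by simp)) hbc ha).1 hc)
  have hchain : (n ++ [a]).IsChain Adj := by
    have := hLi.chain
    exact (List.isChain_append.1 (show ([w] ++ (n ++ [a])).IsChain Adj from this)).2.1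
  have ho' := hBo.not_touches_of_isChain hη0 hLo hchain hnd'.1 (z := a) (by simp) hoa
  have hi' := hBi.not_touches_of_isChain hη0 hLi hL.isChain_closing hnd'.2 (z := b) (by simp) hib
  have hLi' : ∀ z ∈ w :: n ++ [a], z ≠ w → ∀ c ∈ H', ¬ Touches z c := fun z hz hzw =>
    ho' z (by simpa [hzw] using hz)
  have hLo' : ∀ z ∈ m ++ w :: b :: l₂, z ≠ w → ∀ c ∈ H, ¬ Touches z c := fun z hz hzw =>
    hi' z (by simp [hzw] at hz ⊢; tauto)
  have hdisj : Disjoint H H' := hBi.disjoint hLi hLo hBo hη0 hη0 hLi' hLo'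
  have hmeet : ∀ z, (∃ c ∈ H, Touches z c) → (∃ c ∈ H', Touches z c) → z = w := by
    rintro z ⟨c, hc, hzc⟩ ⟨c', hc', hzc'⟩
    by_contra hzw
    have h1 : z ∉ w :: n ++ [a] := fun h => hLi' z h hzw c' hc' hzc'
    have h3 := (hBi.mem_iff_of_notMem hη0 hLi h1 hzc hzc').1 hc
    exact Finset.disjoint_left.1 hdisj h3 hc'
  have hSi : Shelling q ({q} ∪ H) := by
    rcases hi.2.2 with ⟨rfl, -⟩ | ⟨-, r, hr, hwr, har⟩
    · simpa using Shelling.single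
    · refine Shelling.single.union hr (by simpa) ⟨q, by simp, ?_, ?_⟩ ?_
      · exact haw.adj_cells har hwr ha hw fun h => hq (h ▸ hr.mem)
      · intro z _ hz h hh; rw [Finset.mem_singleton] at hh; rwa [hh]
      · rintro z ⟨c, hc, hzc⟩ ⟨c', hc', hzc'⟩
        rw [Finset.mem_singleton] at hc
        subst hc
        rcases hsq.eq_of_touches hzc with rfl | rfl | rfl | rfl
        · exact har
        · exact (hv _ hc' hzc').elim
        · exact (hib _ hc' hzc').elim
        · exact hwr
  have hSo : ∃ r, Shelling r (H' ∪ ({q} ∪ H)) ∧ Touches x r ∧ Touches y r := by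
    rcases ho.2.2 with ⟨rfl, hlo⟩ | ⟨hlen, r, hr, hxr, hyr⟩
    · refine ⟨q, by simpa using hSi, ?_⟩
      match m, hlo with
      | [], hlo => 
        simp only [List.nil_append, List.cons.injEq] at hlo
        exact ⟨hlo.1 ▸ hw, hlo.2.1 ▸ hb⟩
      | [_], hlo => simp at hlo
      | _ :: _ :: _, hlo => simp at hlo
    · refine ⟨r, hr.union hSi ?_ ?_ ?_, hxr, hyr⟩
      · rw [Finset.disjoint_union_right]
        exact ⟨by simpa, hdisj.symm⟩
      · obtain ⟨⟨p, hp, hwp, hbp⟩, -⟩ :=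
          hBo.exists_mem_of_loopSum_eq_one hwb (hwbo hlen) hw hb hq'
        refine ⟨p, hp, ?_, fun z hzq hzp c hc hzc => ?_⟩
        · exact hwb.adj_cells hw hb hwp hbp fun h => hq' (h ▸ hp)
        · rcases hsq.eq_of_touches hzq with rfl | rfl | rfl | rfl
          · exact hoa c hc hzc
          · exact hv' c hc hzc
          · exact hzp hbp
          · exact hzp hwp
      · rintro z ⟨c, hc, hzc⟩ ⟨c', hc', hzc'⟩
        rcases Finset.mem_union.1 hc' with h | h
        · rw [Finset.mem_singleton] at h; exact h ▸ hzc'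
        · rw [hmeet z ⟨c', h, hzc'⟩ ⟨c, hc, hzc⟩]; exact hw
  refine ⟨H' ∪ ({q} ∪ H), η, hη1, fun A hA => ?_, .inr ⟨by simp; omega, hSo⟩⟩
  rw [Finset.sum_union, Finset.sum_union, mul_add, mul_add, Finset.sum_singleton, ← hη A hA,
    ← hBi A hA, ← hBo A hA, loopSum_append_cons_cons_cons, loopSum, loopSum, List.append_assoc,
    List.cons_append, pathSum_append_cons A m, pathSum_append_cons A m w (b :: l₂), pathSum,
    hA b w, hA w a]
  · ring
  · simpa
  · rw [Finset.disjoint_union_right]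
    exact ⟨by simpa, hdisj.symm⟩

/-! ### Existence of fillings -/

theorem not_flat {c : ℤ × ℤ} {e s : ℤ} (he : e = 1 ∨ e = -1) (hs : s = 1 ∨ s = -1) :
    ∀ {l : List (ℤ × ℤ)} {u : ℤ × ℤ}, (u :: l).IsChain Adj → (∀ z ∈ u :: l, z ≠ c) →
    (∀ z ∈ u :: l, z.2 - z.1 = c.2 - c.1 ∨ z.2 - z.1 = c.2 - c.1 + e) →
    1 ≤ s * (u.1 + u.2 - c.1 - c.2) → ∀ z ∈ u :: l, 1 ≤ s * (z.1 + z.2 - c.1 - c.2)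
  | [], u, _, _, _, hu => by simpa using hu
  | p :: l, u, h, hc, ht, hu => by
    rw [List.isChain_cons_cons] at h
    have h1 := h.1
    have hp : p ≠ c := hc p (by simp)
    have hp1 := ht p (by simp)
    have hu1 := ht u (by simp)
    have : 1 ≤ s * (p.1 + p.2 - c.1 - c.2) := by
      rw [ne_eq, Prod.ext_iff] at hp
      unfold Adj at h1
      rcases hs with rfl | rfl <;> omega
    have := not_flat he hs h.2 (fun z hz => hc z (List.mem_cons_of_mem _ hz))
      (fun z hz => ht z (List.mem_cons_of_mem _ hz)) this
    intro z hz
    rcases List.mem_cons.1 hz with rfl | hz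
    · exact hu
    · exact this z hz

/-- A loop with at least three vertices leaves the zigzag line through its end points. -/
theorem IsLoop.exists_ne_one (hL : IsLoop x y L) (hlen : 3 ≤ L.length) :
    ∃ z ∈ L, (2 * (z.2 - z.1) - (x.2 - x.1) - (y.2 - y.1)).natAbs ≠ 1 := by
  by_contra! hall
  match L, hL, hlen, hall with
  | u :: p :: k :: l, hL, _, hall =>
    obtain rfl : u = x := by simpa using hL.head
    have hy : y ∈ k :: l := by
      have := hL.last
      rw [List.getLast?_cons_cons, List.getLast?_cons_cons] at this
      exact List.mem_of_mem_getLast? (by rw [this]; rfl)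
    have hnd := hL.nodup
    have hpy : p ≠ y := by
      rintro rfl
      simp only [List.nodup_cons] at hnd
      exact hnd.2.1 hy
    have hc := hL.chain
    rw [List.isChain_cons_cons] at hc
    have hup := hc.1
    have hcl := hL.closing
    have hne : ∀ z ∈ p :: k :: l, z ≠ u := by
      rintro z hz rfl; exact (List.nodup_cons.1 hnd).1 hz
    have hp := hall p (by simp)
    have ht : ∀ z ∈ p :: k :: l, z.2 - z.1 = u.2 - u.1 ∨
        z.2 - z.1 = u.2 - u.1 + ((y.2 - y.1) - (u.2 - u.1)) := by
      intro z hz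
      have := hall z (List.mem_cons_of_mem _ hz)
      unfold Adj at hcl
      omega
    have he : (y.2 - y.1) - (u.2 - u.1) = 1 ∨ (y.2 - y.1) - (u.2 - u.1) = -1 := by
      unfold Adj at hcl; omega
    have hs : (p.1 + p.2 - u.1 - u.2) = 1 ∨ (p.1 + p.2 - u.1 - u.2) = -1 := by
      unfold Adj at hup; omega
    have hp1 := ht p (by simp)
    have := not_flat he hs hc.2 hne ht (by rcases hs with h | h <;> rw [h] <;> norm_num) y
      (List.mem_cons_of_mem _ hy)
    rw [ne_eq, Prod.ext_iff] at hpy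
    unfold Adj at hup hcl
    rcases hs with h | h <;> rw [h] at this <;> omega

end

section

variable {x y v w q a b : ℤ × ℤ} {l₁ l₂ m n L : List (ℤ × ℤ)} {H H' : Finset (ℤ × ℤ)}

theorem exists_square {s : ℤ} (hs : s = 1 ∨ s = -1) (hav : Adj a v) (hvb : Adj v b) (hab : a ≠ b)
    (ha : s * (a.2 - a.1) ≤ s * (v.2 - v.1)) (hb : s * (b.2 - b.1) ≤ s * (v.2 - v.1)) :
    ∃ w q, Square a v b w q ∧ s * (w.2 - w.1) = s * (v.2 - v.1) - 2 := by
  rcases hs with rfl | rfl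
  · refine ⟨(v.1 + 1, v.2 - 1), (v.1, v.2 - 1), ?_, by simp only; omega⟩
    unfold Adj Square Touches at *
    rw [ne_eq, Prod.ext_iff] at hab
    simp only
    refine ⟨by simp, by simp, by omega, by omega, ?_⟩
    rcases hav with h | h | h | h <;> rcases hvb with h' | h' | h' | h' <;> omega
  · refine ⟨(v.1 - 1, v.2 + 1), (v.1 - 1, v.2), ?_, by simp only; omega⟩
    unfold Adj Square Touches at *
    rw [ne_eq, Prod.ext_iff] at hab
    simp only
    refine ⟨by simp, by simp, by omega, by omega, ?_⟩
    rcases hav with h | h | h | h <;> rcases hvb with h' | h' | h' | h' <;> omega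

theorem IsLoop.replace (hL : IsLoop x y (l₁ ++ a :: v :: b :: l₂)) (haw : Adj a w)
    (hwb : Adj w b) (hw : w ∉ l₁ ++ a :: v :: b :: l₂) :
    IsLoop x y (l₁ ++ a :: w :: b :: l₂) := by
  have hn := hL.nodup
  refine ⟨?_, ?_, ?_, ?_, hL.closing⟩
  · have hc := hL.chain
    obtain ⟨h1, h2, h3⟩ := List.isChain_append.1 hc
    refine List.isChain_append.2 ⟨h1, ?_, h3⟩
    simp only [List.isChain_cons_cons] at h2 ⊢
    exact ⟨haw, hwb, h2.2.2⟩
  · simp only [List.nodup_append, List.nodup_cons, List.mem_append, List.mem_cons] at hn hw ⊢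
    grind
  · rw [← hL.head]; cases l₁ <;> simp
  · rw [← hL.last, show l₁ ++ a :: w :: b :: l₂ = (l₁ ++ [a, w]) ++ b :: l₂ by simp,
      List.getLast?_append_of_ne_nil _ (by simp),
      show l₁ ++ a :: v :: b :: l₂ = (l₁ ++ [a, v]) ++ b :: l₂ by simp,
      List.getLast?_append_of_ne_nil _ (by simp)]

theorem exists_eq_append_of_mem {V : Type*} {x y v : V} {L : List V} (hv : v ∈ L)
    (hx : L.head? = some x) (hy : L.getLast? = some y) (hvx : v ≠ x) (hvy : v ≠ y) :
    ∃ l₁ a b l₂, L = l₁ ++ a :: v :: b :: l₂ := by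
  obtain ⟨s, t, rfl⟩ := List.append_of_mem hv
  have hs : s ≠ [] := by
    rintro rfl
    simp at hx
    exact hvx hx
  have ht : t ≠ [] := by
    rintro rfl
    simp at hy
    exact hvy hy
  obtain ⟨b, l₂, rfl⟩ := List.exists_cons_of_ne_nil ht
  refine ⟨s.dropLast, s.getLast hs, b, l₂, ?_⟩
  conv_lhs => rw [← List.dropLast_append_getLast hs]
  simp

/-- Every loop can be filled. -/
theorem IsLoop.exists_filled {x y : ℤ × ℤ} {L : List (ℤ × ℤ)} (hL : IsLoop x y L) :
    ∃ H ε, Filled x y L H ε := by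
  induction hn : L.length using Nat.strong_induction_on generalizing x y L with
  | _ N ihN =>
  induction hp : (L.map fun z : ℤ × ℤ =>
    (2 * (z.2 - z.1) - (x.2 - x.1) - (y.2 - y.1)).natAbs).sum
    using Nat.strong_induction_on generalizing L with
  | _ P ihP =>
  by_cases hlen : 3 ≤ L.length
  swap
  · refine ⟨∅, 1, .inl rfl, fun A hA => ?_, .inl ⟨rfl, ?_⟩⟩
    all_goals
      have hcl := hL.closing.ne
      have hh := hL.head
      have hl := hL.last
      match L, hlen with
      | [], _ => simp at hh
      | [_], _ =>
        simp only [List.head?_cons, List.getLast?_singleton, Option.some.injEq] at hh hl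
        exact (hcl (hl ▸ hh)).elim
      | [u, v], _ =>
        simp only [List.head?_cons, List.getLast?_cons_cons, List.getLast?_singleton,
          Option.some.injEq] at hh hl
        subst hh hl
        first
          | rfl
          | simp only [loopSum, pathSum, Finset.sum_empty, mul_zero, hA u v]; ring
      | _ :: _ :: _ :: _, hlen => simp at hlen
  set f : ℤ × ℤ → ℕ := fun z => (2 * (z.2 - z.1) - (x.2 - x.1) - (y.2 - y.1)).natAbs with hf
  obtain ⟨z, hz, hz1⟩ := hL.exists_ne_one hlen
  obtain ⟨v, hv, hmax⟩ := Finset.exists_max_image L.toFinset f ⟨z, by simpa⟩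
  simp only [List.mem_toFinset] at hv hmax
  have hcl := hL.closing
  have hv3 : 3 ≤ f v := by
    have := hmax z hz
    simp only [hf] at this ⊢
    unfold Adj at hcl
    omega
  have hvx : v ≠ x := by
    rintro rfl
    simp only [hf] at hv3
    unfold Adj at hcl; omega
  have hvy : v ≠ y := by
    rintro rfl
    simp only [hf] at hv3
    unfold Adj at hcl; omega
  obtain ⟨s, hs, hsv⟩ : ∃ s : ℤ, (s = 1 ∨ s = -1) ∧
      s * (2 * (v.2 - v.1) - (x.2 - x.1) - (y.2 - y.1)) = f v := by
    simp only [hf]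
    rcases le_total 0 (2 * (v.2 - v.1) - (x.2 - x.1) - (y.2 - y.1)) with h | h
    · exact ⟨1, .inl rfl, by omega⟩
    · exact ⟨-1, .inr rfl, by omega⟩
  have hext : ∀ z ∈ L, s * (z.2 - z.1) ≤ s * (v.2 - v.1) := by
    intro z hz
    have := hmax z hz
    simp only [hf] at this hsv
    rcases hs with rfl | rfl <;> omega
  obtain ⟨l₁, a, b, l₂, rfl⟩ := exists_eq_append_of_mem hv hL.head hL.last hvx hvy
  obtain ⟨hav, hvb⟩ : Adj a v ∧ Adj v b := by
    have := (List.isChain_append.1 hL.chain).2.1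
    simp only [List.isChain_cons_cons] at this
    exact ⟨this.1, this.2.1⟩
  have hnd := hL.nodup
  have hnd2 : v ∉ l₁ ∧ v ∉ l₂ ∧ v ≠ a ∧ v ≠ b ∧ a ≠ b := by
    clear ihN ihP hmax hext hp
    simp only [List.nodup_append, List.nodup_cons, List.mem_cons] at hnd
    grind
  obtain ⟨w, q, hsq, hw⟩ := exists_square hs hav hvb hnd2.2.2.2.2 (hext a (by simp))
    (hext b (by simp))
  have hfw : f w < f v := by
    simp only [hf] at hsv hv3 ⊢
    rcases hs with rfl | rfl <;> omega
  have hwne := hsq.ne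
  have hvw : s * (w.2 - w.1) ≤ s * (v.2 - v.1) := by omega
  by_cases hwL : w ∈ l₁ ++ a :: v :: b :: l₂
  swap
  · have hL' := hL.replace hsq.adj.1.symm hsq.adj.2 hwL
    obtain ⟨H, ε, hF⟩ := ihP _ (by
      rw [← hp]
      simp only [List.map_append, List.map_cons, List.sum_append, List.sum_cons]
      omega) hL' (by rw [← hn]; simp) rfl
    have hε : ε ≠ 0 := by rcases hF.1 with h | h <;> omega
    rcases hF.2.2 with ⟨-, h⟩ | ⟨-, r, hr, hxr, hyr⟩
    · have := congrArg List.length h; simp at this; omega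
    have hvH := hF.2.1.not_touches_of_extremal hε hL' (v := v) (by simp; tauto) hs (by
      intro z hz
      simp only [List.mem_append, List.mem_cons] at hz hext
      rcases hz with hz | hz | hz | hz | hz
      · exact hext z (by tauto)
      · exact hext z (by tauto)
      · exact hz ▸ hvw
      · exact hext z (by tauto)
      · exact hext z (by tauto))
    obtain ⟨h1, h2⟩ := hL'.corner_cut hsq hε hF.2.1 hr hvH
    exact ⟨_, ε, hF.1, h2, .inr ⟨hlen, r, h1, hxr, hyr⟩⟩
  have main : ∀ {x y a b : ℤ × ℤ} {m n l : List (ℤ × ℤ)},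
      IsLoop x y (m ++ w :: n ++ a :: v :: b :: l) →
      (m ++ w :: n ++ a :: v :: b :: l).length = N → Square a v b w q →
      (∀ z ∈ m ++ w :: n ++ a :: v :: b :: l, s * (z.2 - z.1) ≤ s * (v.2 - v.1)) →
      ∃ K η, Filled x y (m ++ w :: n ++ a :: v :: b :: l) K η := by
    clear ihP hp hL hmax hext hwL hnd hnd2
    intro x y a b m n l hL hN hsq hext
    have hLi := hL.inner hsq.adj.1.symm
    have hLo := hL.outer hsq.adj.2
    have hN' : m.length + n.length + l.length + 4 = N := by
      rw [← hN]; simp; omega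
    have hnd := hL.nodup
    have hvn : v ∉ w :: n ++ [a] ∧ v ∉ m ++ w :: b :: l := by
      simp only [List.nodup_append, List.nodup_cons, List.mem_append, List.mem_cons] at hnd ⊢
      clear ihN
      grind
    obtain ⟨Hi, εi, hi⟩ := ihN _ (by simp; omega) hLi rfl
    obtain ⟨Ho, εo, ho⟩ := ihN _ (by simp; omega) hLo rfl
    refine hL.pinch hsq hi ho ?_ ?_
    · refine hi.2.1.not_touches_of_extremal (by have := hi.1; omega) hLi hvn.1 hs fun z hz => ?_
      exact hext z (by simp at hz ⊢; tauto)
    · refine ho.2.1.not_touches_of_extremal (by have := ho.1; omega) hLo hvn.2 hs fun z hz => ?_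
      exact hext z (by simp at hz ⊢; tauto)
  have hw12 : w ∈ l₁ ∨ w ∈ l₂ := by
    simp only [List.mem_append, List.mem_cons] at hwL; tauto
  rcases hw12 with h | h
  · obtain ⟨m, n, rfl⟩ := List.append_of_mem h
    exact main hL hn hsq hext
  · obtain ⟨m, n, rfl⟩ := List.append_of_mem h
    have hrev : (l₁ ++ a :: v :: b :: (m ++ w :: n)).reverse =
        n.reverse ++ w :: m.reverse ++ b :: v :: a :: l₁.reverse := by simp
    have hLr := hL.reverse
    have hlr := List.length_reverse (as := l₁ ++ a :: v :: b :: (m ++ w :: n))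
    have hextr : ∀ z ∈ (l₁ ++ a :: v :: b :: (m ++ w :: n)).reverse,
      s * (z.2 - z.1) ≤ s * (v.2 - v.1) := fun z hz => hext z (List.mem_reverse.1 hz)
    rw [hn] at hlr
    rw [hrev] at hLr hlr hextr
    obtain ⟨K, η, hF⟩ := main hLr hlr hsq.swap hextr
    rw [← hrev] at hF
    exact ⟨K, -η, by simpa using hF.reverse⟩

end

/-! ### Gluing cells -/

/-- Replacing a piece `K` of a compact set by a smaller homeomorphic copy, relatively to the rest
of the set. -/
theorem nonempty_homeomorph_union {E : Type*} [TopologicalSpace E] [T2Space E] {R K K' : Set E}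
    (hR : IsCompact R) (hK : IsCompact K) (hK' : K' ⊆ K) {k : E → E} (hc : ContinuousOn k K)
    (hinj : Set.InjOn k K) (him : k '' K = K') (hfix : ∀ z ∈ R, z ∈ K → k z = z) :
    Nonempty ((R ∪ K : Set E) ≃ₜ (R ∪ K' : Set E)) := by
  classical
  set f : E → E := fun z => if z ∈ R then z else k z with hf
  have hfR : ∀ z ∈ R, f z = z := fun z hz => by simp [hf, hz]
  have hfK : ∀ z ∈ K, f z = k z := fun z hz => by
    by_cases h : z ∈ R
    · rw [hfR z h, hfix z h hz]
    · simp [hf, h]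
  have hkK : ∀ z ∈ K, k z ∈ K' := fun z hz => him ▸ Set.mem_image_of_mem k hz
  have hcont : ContinuousOn f (R ∪ K) :=
    (continuousOn_id.congr hfR).union_of_isClosed (hc.congr hfK) hR.isClosed hK.isClosed
  have hmaps : Set.MapsTo f (R ∪ K) (R ∪ K') := by
    rintro z (hz | hz)
    · rw [hfR z hz]; exact .inl hz
    · rw [hfK z hz]; exact .inr (hkK z hz)
  have hcross : ∀ x ∈ R, ∀ y ∈ K, f x = f y → x = y := fun x hx y hy h => by
    rw [hfR x hx, hfK y hy] at h
    have hxK : x ∈ K := hK' (h ▸ hkK y hy)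
    exact hinj hxK hy (by rw [hfix x hx hxK, h])
  have hinjf : Set.InjOn f (R ∪ K) := by
    rintro x (hx | hx) y (hy | hy) h
    · rwa [hfR x hx, hfR y hy] at h
    · exact hcross x hx y hy h
    · exact (hcross y hy x hx h.symm).symm
    · rw [hfK x hx, hfK y hy] at h; exact hinj hx hy h
  have hsurj : Set.SurjOn f (R ∪ K) (R ∪ K') := by
    rintro z (hz | hz)
    · exact ⟨z, .inl hz, hfR z hz⟩
    · rw [← him] at hz
      obtain ⟨y, hy, rfl⟩ := hz
      exact ⟨y, .inr hy, hfK y hy⟩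
  have : CompactSpace (R ∪ K : Set E) := isCompact_iff_compactSpace.1 (hR.union hK)
  exact ⟨Continuous.homeoOfEquivCompactToT2
    (f := Equiv.ofBijective (hmaps.restrict f (R ∪ K) (R ∪ K'))
      ⟨hmaps.restrict_inj.2 hinjf, (hmaps.restrict_surjective_iff).2 hsurj⟩)
    (hcont.mapsToRestrict hmaps)⟩

/-- A set `K` can be compressed onto `K'`, keeping the points of `K'` outside the interior of `K`
fixed. -/
def Compresses {E : Type*} [TopologicalSpace E] (K K' : Set E) : Prop :=
  ∃ k : E → E, ContinuousOn k K ∧ Set.InjOn k K ∧ k '' K = K' ∧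
    ∀ z ∈ K', z ∉ interior K → k z = z

theorem Compresses.image {E : Type*} [TopologicalSpace E] {K K' : Set E} (h : Compresses K K')
    (e : E ≃ₜ E) : Compresses (e '' K) (e '' K') := by
  obtain ⟨k, hc, hinj, him, hfix⟩ := h
  refine ⟨e ∘ k ∘ e.symm, ?_, ?_, ?_, ?_⟩
  · refine e.continuous.comp_continuousOn (hc.comp e.symm.continuous.continuousOn ?_)
    rintro _ ⟨z, hz, rfl⟩; simpa
  · rintro _ ⟨x, hx, rfl⟩ _ ⟨y, hy, rfl⟩ hxy
    simp only [Function.comp_apply, Homeomorph.symm_apply_apply, EmbeddingLike.apply_eq_iff_eq]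
      at hxy
    rw [hinj hx hy hxy]
  · rw [← him]
    ext z
    simp [Set.mem_image]
  · rintro _ ⟨z, hz, rfl⟩ hzK
    rw [← e.image_interior, e.injective.mem_set_image] at hzK
    simp [hfix z hz hzK]

theorem radial_inverse {N₁ N₂ : ℝ × ℝ → ℝ} (h₁ : ∀ (t : ℝ) z, 0 ≤ t → N₁ (t • z) = t * N₁ z)
    (h₂ : ∀ (t : ℝ) z, 0 ≤ t → N₂ (t • z) = t * N₂ z) (p₁ : ∀ z, z ≠ 0 → 0 < N₁ z)
    (p₂ : ∀ z, z ≠ 0 → 0 < N₂ z) (z : ℝ × ℝ) :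
    (N₂ ((N₁ z / N₂ z) • z) / N₁ ((N₁ z / N₂ z) • z)) • ((N₁ z / N₂ z) • z) = z := by
  by_cases hz : z = 0
  · simp [hz]
  have q₁ := p₁ z hz
  have q₂ := p₂ z hz
  rw [h₁ _ _ (by positivity), h₂ _ _ (by positivity), smul_smul]
  convert one_smul ℝ z using 2
  field_simp

theorem continuous_radial {N₁ N₂ : ℝ × ℝ → ℝ} (h₁ : Continuous N₁) (h₂ : Continuous N₂)
    (h : ∀ z, |N₁ z / N₂ z| ≤ 1) (p₂ : ∀ z, z ≠ 0 → 0 < N₂ z) :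
    Continuous fun z => (N₁ z / N₂ z) • z := by
  rw [continuous_iff_continuousAt]
  intro z
  by_cases hz : z = 0
  · subst hz
    rw [ContinuousAt, smul_zero]
    refine squeeze_zero_norm (a := fun z => ‖z‖) (fun z => ?_) (by
      simpa using (continuous_norm (E := ℝ × ℝ)).tendsto 0)
    rw [norm_smul]
    exact mul_le_of_le_one_left (norm_nonneg _) (h z)
  · exact (h₁.continuousAt.div h₂.continuousAt (p₂ z hz).ne').smul continuousAt_id

theorem compresses_rect : Compresses (Set.Icc (-1 : ℝ) 1 ×ˢ Set.Icc (0 : ℝ) 2)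
    (Set.Icc (-1 : ℝ) 1 ×ˢ Set.Icc (0 : ℝ) 1) := by
  set N₁ : ℝ × ℝ → ℝ := fun z => max |z.1| (|z.2| / 2) with hN₁
  set N₂ : ℝ × ℝ → ℝ := fun z => max |z.1| |z.2| with hN₂
  have h₁ : ∀ (t : ℝ) z, 0 ≤ t → N₁ (t • z) = t * N₁ z := fun t z ht => by
    simp only [hN₁, Prod.smul_fst, Prod.smul_snd, smul_eq_mul, abs_mul, abs_of_nonneg ht]
    rw [mul_max_of_nonneg _ _ ht, mul_div_assoc]
  have h₂ : ∀ (t : ℝ) z, 0 ≤ t → N₂ (t • z) = t * N₂ z := fun t z ht => by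
    simp only [hN₂, Prod.smul_fst, Prod.smul_snd, smul_eq_mul, abs_mul, abs_of_nonneg ht]
    rw [mul_max_of_nonneg _ _ ht]
  have pos : ∀ z : ℝ × ℝ, z ≠ 0 → 0 < |z.1| ∨ 0 < |z.2| := fun z hz => by
    by_contra! h
    exact hz (Prod.ext (abs_nonpos_iff.1 h.1) (abs_nonpos_iff.1 h.2))
  have p₁ : ∀ z, z ≠ 0 → 0 < N₁ z := fun z hz => by
    rw [lt_max_iff]
    rcases pos z hz with h | h
    · exact .inl h
    · exact .inr (by positivity)
  have p₂ : ∀ z, z ≠ 0 → 0 < N₂ z := fun z hz => lt_max_iff.2 (pos z hz)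
  have n₁ : ∀ z, 0 ≤ N₁ z := fun z => le_max_of_le_left (abs_nonneg _)
  have n₂ : ∀ z, 0 ≤ N₂ z := fun z => le_max_of_le_left (abs_nonneg _)
  have h12 : ∀ z, N₁ z ≤ N₂ z := fun z =>
    max_le_max le_rfl (by linarith [abs_nonneg z.2])
  have hc : Continuous fun z => (N₁ z / N₂ z) • z := by
    refine continuous_radial (by fun_prop) (by fun_prop) (fun z => ?_) p₂
    rw [abs_of_nonneg (div_nonneg (n₁ z) (n₂ z))]
    exact div_le_one_of_le₀ (h12 z) (n₂ z)
  have i12 := radial_inverse h₁ h₂ p₁ p₂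
  have i21 := radial_inverse h₂ h₁ p₂ p₁
  have hK : ∀ z : ℝ × ℝ, z ∈ Set.Icc (-1 : ℝ) 1 ×ˢ Set.Icc (0 : ℝ) 2 ↔ 0 ≤ z.2 ∧ N₁ z ≤ 1 := by
    intro z
    simp only [Set.mem_prod, Set.mem_Icc, hN₁, max_le_iff, abs_le]
    constructor
    · rintro ⟨⟨a, b⟩, c, d⟩
      exact ⟨c, ⟨a, b⟩, by rw [abs_of_nonneg c]; linarith⟩
    · rintro ⟨c, ⟨a, b⟩, d⟩
      rw [abs_of_nonneg c] at d
      exact ⟨⟨a, b⟩, c, by linarith⟩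
  have hK' : ∀ z : ℝ × ℝ, z ∈ Set.Icc (-1 : ℝ) 1 ×ˢ Set.Icc (0 : ℝ) 1 ↔ 0 ≤ z.2 ∧ N₂ z ≤ 1 := by
    intro z
    simp only [Set.mem_prod, Set.mem_Icc, hN₂, max_le_iff, abs_le]
    constructor
    · rintro ⟨⟨a, b⟩, c, d⟩
      exact ⟨c, ⟨a, b⟩, by linarith, d⟩
    · rintro ⟨c, ⟨a, b⟩, -, d⟩
      exact ⟨⟨a, b⟩, c, d⟩
  refine ⟨fun z => (N₁ z / N₂ z) • z, hc.continuousOn, ?_, ?_, ?_⟩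
  · intro x _ y _ hxy
    simp only at hxy
    rw [← i12 x, hxy, i12 y]
  · ext z
    rw [hK']
    constructor
    · rintro ⟨z, hz, rfl⟩
      rw [hK] at hz
      refine ⟨mul_nonneg (div_nonneg (n₁ z) (n₂ z)) hz.1, ?_⟩
      rw [h₂ _ _ (div_nonneg (n₁ z) (n₂ z))]
      by_cases h0 : z = 0
      · simp [h0, hN₂]
      · rw [div_mul_cancel₀ _ (p₂ z h0).ne']; exact hz.2
    · intro hz
      refine ⟨_, ?_, i21 z⟩
      rw [hK]
      refine ⟨mul_nonneg (div_nonneg (n₂ z) (n₁ z)) hz.1, ?_⟩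
      rw [h₁ _ _ (div_nonneg (n₂ z) (n₁ z))]
      by_cases h0 : z = 0
      · simp [h0, hN₁]
      · rw [div_mul_cancel₀ _ (p₁ z h0).ne']; exact hz.2
  · rintro ⟨x, y⟩ hz hint
    rw [interior_prod_eq, interior_Icc, interior_Icc] at hint
    simp only [Set.mem_prod, Set.mem_Icc, Set.mem_Ioo] at hz hint
    have key : N₁ (x, y) = N₂ (x, y) := by
      simp only [hN₁, hN₂]
      rw [abs_of_nonneg hz.2.1]
      by_cases hy : y = 0
      · simp [hy]
      · have hy' : 0 < y := lt_of_le_of_ne hz.2.1 (Ne.symm hy)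
        have hx : |x| = 1 := by
          by_contra hne
          have : |x| < 1 := lt_of_le_of_ne (abs_le.2 hz.1) hne
          rw [abs_lt] at this
          exact hint ⟨this, hy', by linarith⟩
        rw [hx, max_eq_left (by linarith), max_eq_left (by linarith)]
    simp only [key]
    by_cases h0 : (x, y) = (0 : ℝ × ℝ)
    · simp [h0]
    · rw [div_self (p₂ _ h0).ne', one_smul]

theorem compresses_corner : Compresses (Set.Icc (-1 : ℝ) 1 ×ˢ Set.Icc (-1 : ℝ) 1)
    {z ∈ Set.Icc (-1 : ℝ) 1 ×ˢ Set.Icc (-1 : ℝ) 1 | 0 ≤ z.1 ∨ z.2 ≤ 0} := by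
  set F : ℝ → ℝ → ℝ := fun u t => min t ((t + 3 * |u| - 2) / 2) with hF
  have hK : ∀ x y : ℝ, (x, y) ∈ Set.Icc (-1 : ℝ) 1 ×ˢ Set.Icc (-1 : ℝ) 1 ↔
      |x + y| + |y - x| ≤ 2 := by
    intro x y
    simp only [Set.mem_prod, Set.mem_Icc]
    constructor
    · rintro ⟨⟨a, b⟩, c, d⟩
      rcases abs_cases (x + y) with h | h <;> rcases abs_cases (y - x) with h' | h' <;> linarith
    · intro h
      have h₁ := le_abs_self (x + y)
      have h₂ := neg_abs_le (x + y)
      have h₃ := le_abs_self (y - x)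
      have h₄ := neg_abs_le (y - x)
      refine ⟨⟨?_, ?_⟩, ?_, ?_⟩ <;> linarith
  have hp : ∀ x y : ℝ, (0 ≤ x ∨ y ≤ 0) ↔ y - x ≤ |x + y| := by
    intro x y
    constructor
    · rintro (h | h)
      · linarith [le_abs_self (x + y)]
      · linarith [neg_abs_le (x + y)]
    · intro h
      by_contra! h'
      rcases abs_cases (x + y) with h₁ | h₁ <;> linarith
  have hinj : ∀ u t t', F u t = F u t' → t = t' := by
    intro u t t' h
    simp only [hF] at h
    rcases min_cases t ((t + 3 * |u| - 2) / 2) with h₁ | h₁ <;>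
      rcases min_cases t' ((t' + 3 * |u| - 2) / 2) with h₂ | h₂ <;> linarith
  refine ⟨fun z => ((z.1 + z.2 - F (z.1 + z.2) (z.2 - z.1)) / 2,
    (z.1 + z.2 + F (z.1 + z.2) (z.2 - z.1)) / 2), ?_, ?_, ?_, ?_⟩
  · simp only [hF]; fun_prop
  · rintro ⟨x, y⟩ _ ⟨x', y'⟩ _ h
    simp only [Prod.mk.injEq] at h
    have h₁ : x + y = x' + y' := by linarith
    have h₂ : F (x + y) (y - x) = F (x + y) (y' - x') := by rw [← h₁] at h; linarith
    have := hinj _ _ _ h₂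
    exact Prod.ext (by simp only; linarith) (by simp only; linarith)
  · ext ⟨x, y⟩
    rw [Set.mem_sep_iff, hK, hp]
    constructor
    · rintro ⟨⟨a, b⟩, hz, h⟩
      rw [hK] at hz
      simp only [Prod.mk.injEq] at h
      have h₁ : x + y = a + b := by linarith
      have h₂ : y - x = F (a + b) (b - a) := by linarith
      rw [h₁, h₂]
      simp only [hF]
      have h₃ := abs_nonneg (a + b)
      have h₄ := le_abs_self (b - a)
      have h₅ := neg_abs_le (b - a)
      rcases min_cases (b - a) ((b - a + 3 * |a + b| - 2) / 2) with ⟨h, h'⟩ | ⟨h, h'⟩ <;> rw [h]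
      · exact ⟨hz, by linarith⟩
      · refine ⟨?_, by linarith⟩
        have : |(b - a + 3 * |a + b| - 2) / 2| ≤ 2 - |a + b| := abs_le.2 ⟨by linarith, by linarith⟩
        linarith
    · rintro ⟨hz, h⟩
      set t := max (y - x) (2 * (y - x) - 3 * |x + y| + 2) with ht
      have hFt : F (x + y) t = y - x := by
        simp only [hF, ht]
        rcases max_cases (y - x) (2 * (y - x) - 3 * |x + y| + 2) with ⟨h₁, h₂⟩ | ⟨h₁, h₂⟩ <;>
          rw [h₁]
        · rw [min_eq_left]; linarith
        · rw [min_eq_right] <;> linarith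
      refine ⟨((x + y - t) / 2, (x + y + t) / 2), ?_, ?_⟩
      · rw [hK, show (x + y - t) / 2 + (x + y + t) / 2 = x + y by ring,
          show (x + y + t) / 2 - (x + y - t) / 2 = t by ring]
        have h₃ := abs_nonneg (x + y)
        have h₄ := le_abs_self (y - x)
        have h₅ := neg_abs_le (y - x)
        have : |t| ≤ 2 - |x + y| := by
          rw [abs_le, ht]
          exact ⟨le_max_of_le_left (by linarith), max_le (by linarith) (by linarith)⟩
        linarith
      · simp only
        rw [show (x + y - t) / 2 + (x + y + t) / 2 = x + y by ring,
          show (x + y + t) / 2 - (x + y - t) / 2 = t by ring, hFt]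
        exact Prod.ext (by simp only; ring) (by simp only; ring)
  · rintro ⟨x, y⟩ hz hint
    rw [Set.mem_sep_iff, hK, hp] at hz
    have h2 : 2 ≤ |x + y| + |y - x| := by
      by_contra! hlt
      refine hint (mem_interior.2 ⟨{z | |z.1 + z.2| + |z.2 - z.1| < 2}, fun z hz => ?_,
        isOpen_lt (by fun_prop) (by fun_prop), hlt⟩)
      exact (hK z.1 z.2).2 (le_of_lt hz)
    have hFt : F (x + y) (y - x) = y - x := by
      simp only [hF]
      rw [min_eq_left]
      rcases abs_cases (y - x) with h | h <;> linarith [abs_nonneg (x + y)]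
    simp only [hFt]
    exact Prod.ext (by simp only; ring) (by simp only; ring)

/-- The homeomorphism `(x, y) ↦ (a + b x, c + d y)` of the plane. -/
noncomputable def scaling (a b c d : ℝ) (hb : b ≠ 0) (hd : d ≠ 0) : ℝ × ℝ ≃ₜ ℝ × ℝ where
  toFun z := (a + b * z.1, c + d * z.2)
  invFun z := ((z.1 - a) / b, (z.2 - c) / d)
  left_inv z := by ext <;> simp <;> field_simp
  right_inv z := by ext <;> simp <;> field_simp <;> ring
  continuous_toFun := by fun_prop
  continuous_invFun := by fun_prop

theorem mem_image_scaling {a b c d : ℝ} (hb : b ≠ 0) (hd : d ≠ 0) {S : Set (ℝ × ℝ)} {z : ℝ × ℝ} :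
    z ∈ scaling a b c d hb hd '' S ↔ ((z.1 - a) / b, (z.2 - c) / d) ∈ S := by
  rw [Homeomorph.image_eq_preimage_symm]; rfl

theorem mem_image_swap {S : Set (ℝ × ℝ)} {z : ℝ × ℝ} :
    z ∈ Homeomorph.prodComm ℝ ℝ '' S ↔ (z.2, z.1) ∈ S := by
  rw [Homeomorph.image_eq_preimage_symm]; rfl

/-- The closed unit square with lower left corner `c`. -/
def cell (c : ℤ × ℤ) : Set (ℝ × ℝ) :=
  Set.Icc (c.1 : ℝ) (c.1 + 1) ×ˢ Set.Icc (c.2 : ℝ) (c.2 + 1)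

theorem mem_cell {c : ℤ × ℤ} {z : ℝ × ℝ} :
    z ∈ cell c ↔ ((c.1 : ℝ) ≤ z.1 ∧ z.1 ≤ c.1 + 1) ∧ (c.2 : ℝ) ≤ z.2 ∧ z.2 ≤ c.2 + 1 := by
  simp only [cell, Set.mem_prod, Set.mem_Icc]

/-- The union of the cells of `H`. -/
def region (H : Finset (ℤ × ℤ)) : Set (ℝ × ℝ) := ⋃ c ∈ H, cell c

theorem mem_region {H : Finset (ℤ × ℤ)} {z : ℝ × ℝ} : z ∈ region H ↔ ∃ c ∈ H, z ∈ cell c := by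
  simp [region]

theorem isCompact_region (H : Finset (ℤ × ℤ)) : IsCompact (region H) :=
  H.finite_toSet.isCompact_biUnion fun _ _ => isCompact_Icc.prod isCompact_Icc

theorem interior_cell (c : ℤ × ℤ) : interior (cell c) =
    Set.Ioo (c.1 : ℝ) (c.1 + 1) ×ˢ Set.Ioo (c.2 : ℝ) (c.2 + 1) := by
  rw [cell, interior_prod_eq, interior_Icc, interior_Icc]

theorem cell_subset_closure_interior (c : ℤ × ℤ) : cell c ⊆ closure (interior (cell c)) := by
  rw [interior_cell, closure_prod_eq, closure_Ioo (by simp), closure_Ioo (by simp)]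
  rfl

theorem eq_of_mem_interior_cell {c d : ℤ × ℤ} {z : ℝ × ℝ} (hc : z ∈ interior (cell c))
    (hd : z ∈ cell d) : c = d := by
  rw [interior_cell] at hc
  simp only [Set.mem_prod, Set.mem_Ioo] at hc
  rw [mem_cell] at hd
  have h₁ : c.1 < d.1 + 1 := by exact_mod_cast hc.1.1.trans_le hd.1.2
  have h₂ : d.1 < c.1 + 1 := by exact_mod_cast hd.1.1.trans_lt hc.1.2
  have h₃ : c.2 < d.2 + 1 := by exact_mod_cast hc.2.1.trans_le hd.2.2
  have h₄ : d.2 < c.2 + 1 := by exact_mod_cast hd.2.1.trans_lt hc.2.2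
  exact Prod.ext (by omega) (by omega)

theorem notMem_interior_region {T : Finset (ℤ × ℤ)} {h : ℤ × ℤ} (hT : h ∉ T) {z : ℝ × ℝ}
    (hz : z ∈ cell h) : z ∉ interior (region T) := by
  intro hi
  obtain ⟨y, hy, hy'⟩ := mem_closure_iff.1 (cell_subset_closure_interior h hz) _
    isOpen_interior hi
  obtain ⟨c, hc, hyc⟩ := mem_region.1 (interior_subset hy)
  exact hT (eq_of_mem_interior_cell hy' hyc ▸ hc)

theorem nonempty_homeomorph_insert {H T : Finset (ℤ × ℤ)} {p : ℤ × ℤ} (hp : p ∈ T) (hpH : p ∉ H)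
    (hT : T.erase p ⊆ H) (hcomp : Compresses (region T) (region (T.erase p)))
    (h : ∀ z ∈ cell p, ∀ c ∈ H, z ∈ cell c → z ∈ region (T.erase p)) :
    Nonempty (region (insert p H) ≃ₜ region H) := by
  obtain ⟨k, hc, hinj, him, hfix⟩ := hcomp
  have hsub : region (T.erase p) ⊆ region T := fun z hz => by
    rw [mem_region] at hz ⊢
    obtain ⟨c, hc, hz⟩ := hz
    exact ⟨c, Finset.mem_of_mem_erase hc, hz⟩
  have := nonempty_homeomorph_union (isCompact_region (H \ T)) (isCompact_region T) hsub hc hinj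
    him fun z hzR hzK => by
      obtain ⟨c, hc, hzc⟩ := mem_region.1 hzR
      rw [Finset.mem_sdiff] at hc
      refine hfix z ?_ (notMem_interior_region hc.2 hzc)
      obtain ⟨d, hd, hzd⟩ := mem_region.1 hzK
      by_cases hdp : d = p
      · exact h z (hdp ▸ hzd) c hc.1 hzc
      · exact mem_region.2 ⟨d, Finset.mem_erase.2 ⟨hdp, hd⟩, hzd⟩
  have h₁ : region (H \ T) ∪ region T = region (insert p H) := by
    rw [region, region, region, ← Finset.set_biUnion_union]
    refine Set.iUnion_congr fun c => Set.iUnion_congr_Prop ?_ fun _ => rfl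
    have := @hT c
    simp only [Finset.mem_erase] at this
    by_cases hcp : c = p
    · simp [hcp, hp]
    · simp; tauto
  have h₂ : region (H \ T) ∪ region (T.erase p) = region H := by
    rw [region, region, region, ← Finset.set_biUnion_union]
    refine Set.iUnion_congr fun c => Set.iUnion_congr_Prop ?_ fun _ => rfl
    have := @hT c
    simp only [Finset.mem_erase] at this
    by_cases hcp : c = p
    · simp [hcp, hp, hpH]
    · simp; tauto
  rwa [h₁, h₂] at this

theorem compresses_rect_image (α β σ : ℝ) (hσ : σ = 1 ∨ σ = -1) :
    Compresses {z : ℝ × ℝ | (α ≤ z.1 ∧ z.1 ≤ α + 1) ∧ 0 ≤ σ * (z.2 - β) ∧ σ * (z.2 - β) ≤ 2}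
      {z : ℝ × ℝ | (α ≤ z.1 ∧ z.1 ≤ α + 1) ∧ 0 ≤ σ * (z.2 - β) ∧ σ * (z.2 - β) ≤ 1} := by
  have hσ0 : σ ≠ 0 := by rcases hσ with rfl | rfl <;> norm_num
  have hdiv : ∀ x : ℝ, x / σ = σ * x := fun x => by
    rcases hσ with rfl | rfl
    · simp
    · rw [div_neg]; simp
  convert compresses_rect.image (scaling (α + 1 / 2) (1 / 2) β σ (by norm_num) hσ0) using 1
  all_goals
    ext z
    rw [mem_image_scaling, hdiv]
    simp only [Set.mem_prod, Set.mem_Icc, Set.mem_ofPred_eq]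
    refine and_congr_left fun _ => ⟨fun h => ⟨?_, ?_⟩, fun h => ⟨?_, ?_⟩⟩ <;> linarith [h.1, h.2]

theorem compresses_rect_image_swap (α β σ : ℝ) (hσ : σ = 1 ∨ σ = -1) :
    Compresses {z : ℝ × ℝ | (α ≤ z.2 ∧ z.2 ≤ α + 1) ∧ 0 ≤ σ * (z.1 - β) ∧ σ * (z.1 - β) ≤ 2}
      {z : ℝ × ℝ | (α ≤ z.2 ∧ z.2 ≤ α + 1) ∧ 0 ≤ σ * (z.1 - β) ∧ σ * (z.1 - β) ≤ 1} := by
  convert (compresses_rect_image α β σ hσ).image (Homeomorph.prodComm ℝ ℝ) using 1 <;>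
  · ext z; rw [mem_image_swap]; rfl

theorem mem_region_pair {p p' : ℤ × ℤ} {z : ℝ × ℝ} :
    z ∈ region {p', p} ↔ z ∈ cell p' ∨ z ∈ cell p := by
  simp [mem_region]

theorem Adj.compresses {p p' : ℤ × ℤ} (h : Adj p p') :
    Compresses (region {p', p}) (region (({p', p} : Finset _).erase p)) := by
  have he : region (({p', p} : Finset _).erase p) = cell p' := by
    rw [show (({p', p} : Finset (ℤ × ℤ)).erase p) = {p'} by
      ext c; have := h.ne; simp; grind]
    simp [region]
  rw [he]
  obtain ⟨p₁, p₂⟩ := p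
  obtain ⟨q₁, q₂⟩ := p'
  rcases h with ⟨h, h'⟩ | ⟨h, h'⟩ | ⟨h, h'⟩ | ⟨h, h'⟩ <;> simp only at h h' <;> subst h h'
  · convert compresses_rect_image_swap q₂ (p₁ + 1 + 1) (-1) (.inr rfl) using 1
    all_goals
      ext z
      simp only [mem_region_pair, mem_cell, Set.mem_ofPred_eq]
      push_cast
    · constructor
      · rintro (⟨⟨a, b⟩, c, d⟩ | ⟨⟨a, b⟩, c, d⟩) <;> refine ⟨⟨?_, ?_⟩, ?_, ?_⟩ <;> linarith
      · rintro ⟨⟨a, b⟩, c, d⟩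
        rcases le_total z.1 (p₁ + 1) with h | h
        · right; refine ⟨⟨?_, ?_⟩, ?_, ?_⟩ <;> linarith
        · left; refine ⟨⟨?_, ?_⟩, ?_, ?_⟩ <;> linarith
    · constructor
      · rintro ⟨⟨a, b⟩, c, d⟩; refine ⟨⟨?_, ?_⟩, ?_, ?_⟩ <;> linarith
      · rintro ⟨⟨a, b⟩, c, d⟩; refine ⟨⟨?_, ?_⟩, ?_, ?_⟩ <;> linarith
  · convert compresses_rect_image_swap q₂ (p₁ - 1) 1 (.inl rfl) using 1
    all_goals
      ext z
      simp only [mem_region_pair, mem_cell, Set.mem_ofPred_eq]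
      push_cast
    · constructor
      · rintro (⟨⟨a, b⟩, c, d⟩ | ⟨⟨a, b⟩, c, d⟩) <;> refine ⟨⟨?_, ?_⟩, ?_, ?_⟩ <;> linarith
      · rintro ⟨⟨a, b⟩, c, d⟩
        rcases le_total (p₁ : ℝ) z.1 with h | h
        · right; refine ⟨⟨?_, ?_⟩, ?_, ?_⟩ <;> linarith
        · left; refine ⟨⟨?_, ?_⟩, ?_, ?_⟩ <;> linarith
    · constructor
      · rintro ⟨⟨a, b⟩, c, d⟩; refine ⟨⟨?_, ?_⟩, ?_, ?_⟩ <;> linarith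
      · rintro ⟨⟨a, b⟩, c, d⟩; refine ⟨⟨?_, ?_⟩, ?_, ?_⟩ <;> linarith
  · convert compresses_rect_image q₁ (p₂ + 1 + 1) (-1) (.inr rfl) using 1
    all_goals
      ext z
      simp only [mem_region_pair, mem_cell, Set.mem_ofPred_eq]
      push_cast
    · constructor
      · rintro (⟨⟨a, b⟩, c, d⟩ | ⟨⟨a, b⟩, c, d⟩) <;> refine ⟨⟨?_, ?_⟩, ?_, ?_⟩ <;> linarith
      · rintro ⟨⟨a, b⟩, c, d⟩
        rcases le_total z.2 (p₂ + 1) with h | h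
        · right; refine ⟨⟨?_, ?_⟩, ?_, ?_⟩ <;> linarith
        · left; refine ⟨⟨?_, ?_⟩, ?_, ?_⟩ <;> linarith
    · constructor
      · rintro ⟨⟨a, b⟩, c, d⟩; refine ⟨⟨?_, ?_⟩, ?_, ?_⟩ <;> linarith
      · rintro ⟨⟨a, b⟩, c, d⟩; refine ⟨⟨?_, ?_⟩, ?_, ?_⟩ <;> linarith
  · convert compresses_rect_image q₁ (p₂ - 1) 1 (.inl rfl) using 1
    all_goals
      ext z
      simp only [mem_region_pair, mem_cell, Set.mem_ofPred_eq]
      push_cast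
    · constructor
      · rintro (⟨⟨a, b⟩, c, d⟩ | ⟨⟨a, b⟩, c, d⟩) <;> refine ⟨⟨?_, ?_⟩, ?_, ?_⟩ <;> linarith
      · rintro ⟨⟨a, b⟩, c, d⟩
        rcases le_total (p₂ : ℝ) z.2 with h | h
        · right; refine ⟨⟨?_, ?_⟩, ?_, ?_⟩ <;> linarith
        · left; refine ⟨⟨?_, ?_⟩, ?_, ?_⟩ <;> linarith
    · constructor
      · rintro ⟨⟨a, b⟩, c, d⟩; refine ⟨⟨?_, ?_⟩, ?_, ?_⟩ <;> linarith
      · rintro ⟨⟨a, b⟩, c, d⟩; refine ⟨⟨?_, ?_⟩, ?_, ?_⟩ <;> linarith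

/-- The four cells at the vertex `w`. -/
def cellsAt (w : ℤ × ℤ) : Finset (ℤ × ℤ) :=
  {(w.1, w.2), (w.1 - 1, w.2), (w.1, w.2 - 1), (w.1 - 1, w.2 - 1)}

theorem mem_cellsAt {w c : ℤ × ℤ} : c ∈ cellsAt w ↔ Touches w c := by
  obtain ⟨c₁, c₂⟩ := c
  simp only [cellsAt, Finset.mem_insert, Finset.mem_singleton, Prod.mk.injEq, Touches]
  omega

theorem mem_region_cellsAt {w : ℤ × ℤ} {z : ℝ × ℝ} : z ∈ region (cellsAt w) ↔
    ((w.1 - 1 : ℝ) ≤ z.1 ∧ z.1 ≤ w.1 + 1) ∧ (w.2 - 1 : ℝ) ≤ z.2 ∧ z.2 ≤ w.2 + 1 := by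
  simp only [mem_region, cellsAt, Finset.mem_insert, Finset.mem_singleton, exists_eq_or_imp,
    exists_eq_left, mem_cell]
  push_cast
  constructor
  · rintro (⟨⟨a, b⟩, c, d⟩ | ⟨⟨a, b⟩, c, d⟩ | ⟨⟨a, b⟩, c, d⟩ | ⟨⟨a, b⟩, c, d⟩) <;>
      refine ⟨⟨?_, ?_⟩, ?_, ?_⟩ <;> linarith
  · rintro ⟨⟨a, b⟩, c, d⟩
    rcases le_total (w.1 : ℝ) z.1 with h | h <;> rcases le_total (w.2 : ℝ) z.2 with h' | h'
    · left; refine ⟨⟨?_, ?_⟩, ?_, ?_⟩ <;> linarith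
    · right; right; left; refine ⟨⟨?_, ?_⟩, ?_, ?_⟩ <;> linarith
    · right; left; refine ⟨⟨?_, ?_⟩, ?_, ?_⟩ <;> linarith
    · right; right; right; refine ⟨⟨?_, ?_⟩, ?_, ?_⟩ <;> linarith

/-- The cells at `w` other than the one with opposite corners `w` and `v`. -/
theorem mem_region_cellsAt_erase {w v p : ℤ × ℤ} {σ τ : ℤ} (hσ : σ = 1 ∨ σ = -1)
    (hτ : τ = 1 ∨ τ = -1) (h₁ : v.1 = w.1 + σ) (h₂ : v.2 = w.2 + τ) (hw : Touches w p)
    (hv : Touches v p) {z : ℝ × ℝ} : z ∈ region ((cellsAt w).erase p) ↔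
      z ∈ region (cellsAt w) ∧ (σ * (z.1 - w.1) ≤ 0 ∨ τ * (z.2 - w.2) ≤ 0) := by
  obtain ⟨p₁, p₂⟩ := p
  obtain ⟨w₁, w₂⟩ := w
  have hp₁ : (σ = 1 ∧ p₁ = w₁) ∨ (σ = -1 ∧ p₁ = w₁ - 1) := by
    unfold Touches at hw hv; simp only at *; omega
  have hp₂ : (τ = 1 ∧ p₂ = w₂) ∨ (τ = -1 ∧ p₂ = w₂ - 1) := by
    unfold Touches at hw hv; simp only at *; omega
  clear hσ hτ hw hv h₁ h₂
  constructor
  · intro hz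
    obtain ⟨c, hc, hzc⟩ := mem_region.1 hz
    rw [Finset.mem_erase] at hc
    refine ⟨mem_region.2 ⟨c, hc.2, hzc⟩, ?_⟩
    obtain ⟨c₁, c₂⟩ := c
    obtain ⟨hne, hc⟩ := hc
    rw [mem_cellsAt] at hc
    unfold Touches at hc
    rw [mem_cell] at hzc
    simp only [ne_eq, Prod.mk.injEq] at hc hne hzc
    by_cases h : c₁ = p₁
    · right
      rcases hp₂ with ⟨rfl, rfl⟩ | ⟨rfl, rfl⟩
      · obtain rfl : p₂ = c₂ + 1 := by omega
        push_cast; linarith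
      · obtain rfl : w₂ = c₂ := by omega
        push_cast; linarith
    · left
      rcases hp₁ with ⟨rfl, rfl⟩ | ⟨rfl, rfl⟩
      · obtain rfl : p₁ = c₁ + 1 := by omega
        push_cast; linarith
      · obtain rfl : w₁ = c₁ := by omega
        push_cast; linarith
  · rintro ⟨hz, h⟩
    have hz' := mem_region_cellsAt.1 hz
    obtain ⟨c, hc, hzc⟩ := mem_region.1 hz
    by_cases hcp : c = (p₁, p₂)
    swap
    · exact mem_region.2 ⟨c, Finset.mem_erase.2 ⟨hcp, hc⟩, hzc⟩
    subst hcp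
    rw [mem_cell] at hzc
    simp only [] at hzc hz'
    rw [mem_region]
    rcases h with h | h
    · rcases hp₁ with ⟨rfl, rfl⟩ | ⟨rfl, rfl⟩
      · refine ⟨(p₁ - 1, p₂), ?_, ?_⟩
        · rw [Finset.mem_erase, mem_cellsAt]
          unfold Touches; simp; omega
        · rw [mem_cell]; push_cast at *; refine ⟨⟨?_, ?_⟩, ?_, ?_⟩ <;> linarith
      · refine ⟨(w₁, p₂), ?_, ?_⟩
        · rw [Finset.mem_erase, mem_cellsAt]
          unfold Touches; simp; omega
        · rw [mem_cell]; push_cast at *; refine ⟨⟨?_, ?_⟩, ?_, ?_⟩ <;> linarith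
    · rcases hp₂ with ⟨rfl, rfl⟩ | ⟨rfl, rfl⟩
      · refine ⟨(p₁, p₂ - 1), ?_, ?_⟩
        · rw [Finset.mem_erase, mem_cellsAt]
          unfold Touches; simp; omega
        · rw [mem_cell]; push_cast at *; refine ⟨⟨?_, ?_⟩, ?_, ?_⟩ <;> linarith
      · refine ⟨(p₁, w₂), ?_, ?_⟩
        · rw [Finset.mem_erase, mem_cellsAt]
          unfold Touches; simp; omega
        · rw [mem_cell]; push_cast at *; refine ⟨⟨?_, ?_⟩, ?_, ?_⟩ <;> linarith

theorem compresses_cellsAt {w v p : ℤ × ℤ} (hw : Touches w p) (hv : Touches v p)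
    (h₁ : w.1 ≠ v.1) (h₂ : w.2 ≠ v.2) :
    Compresses (region (cellsAt w)) (region ((cellsAt w).erase p)) := by
  obtain ⟨σ, hσ, hσv⟩ : ∃ σ : ℤ, (σ = 1 ∨ σ = -1) ∧ v.1 = w.1 + σ :=
    ⟨v.1 - w.1, by unfold Touches at *; omega, by omega⟩
  obtain ⟨τ, hτ, hτv⟩ : ∃ τ : ℤ, (τ = 1 ∨ τ = -1) ∧ v.2 = w.2 + τ :=
    ⟨v.2 - w.2, by unfold Touches at *; omega, by omega⟩
  have hσ0 : (-σ : ℝ) ≠ 0 := by rcases hσ with rfl | rfl <;> norm_num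
  have hτ0 : (τ : ℝ) ≠ 0 := by rcases hτ with rfl | rfl <;> norm_num
  have hdσ : ∀ x : ℝ, x / (-σ) = -(σ * x) := fun x => by
    rcases hσ with rfl | rfl <;> simp [div_neg]
  have hdτ : ∀ x : ℝ, x / τ = τ * x := fun x => by
    rcases hτ with rfl | rfl <;> simp [div_neg]
  have hK : ∀ z : ℝ × ℝ, z ∈ region (cellsAt w) ↔
      (-(σ * (z.1 - w.1)), τ * (z.2 - w.2)) ∈ Set.Icc (-1 : ℝ) 1 ×ˢ Set.Icc (-1 : ℝ) 1 := by
    intro z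
    rw [mem_region_cellsAt]
    simp only [Set.mem_prod, Set.mem_Icc]
    rcases hσ with rfl | rfl <;> rcases hτ with rfl | rfl <;> push_cast <;>
      refine ⟨fun ⟨⟨a, b⟩, c, d⟩ => ⟨⟨?_, ?_⟩, ?_, ?_⟩, fun ⟨⟨a, b⟩, c, d⟩ => ⟨⟨?_, ?_⟩, ?_, ?_⟩⟩ <;>
      linarith
  convert compresses_corner.image (scaling w.1 (-σ) w.2 τ hσ0 hτ0) using 1
  · ext z
    rw [mem_image_scaling, hdσ, hdτ, hK]
  · ext z
    rw [mem_image_scaling, hdσ, hdτ, Set.mem_sep_iff, ← hK,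
      mem_region_cellsAt_erase hσ hτ hσv hτv hw hv]
    simp

theorem Adj.mem_cell_of_attached {p p' c : ℤ × ℤ} (hadj : Adj p p')
    (h : ∀ z, Touches z p → ¬ Touches z p' → ¬ Touches z c) {z : ℝ × ℝ} (hz : z ∈ cell p)
    (hzc : z ∈ cell c) : z ∈ cell p' := by
  rw [mem_cell] at *
  have h₁ : p.1 ≤ c.1 + 1 := by exact_mod_cast hz.1.1.trans hzc.1.2
  have h₂ : c.1 ≤ p.1 + 1 := by exact_mod_cast hzc.1.1.trans hz.1.2
  have h₃ : p.2 ≤ c.2 + 1 := by exact_mod_cast hz.2.1.trans hzc.2.2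
  have h₄ : c.2 ≤ p.2 + 1 := by exact_mod_cast hzc.2.1.trans hz.2.2
  have a₁ := h (p.1, p.2) (by simp [Touches])
  have a₂ := h (p.1 + 1, p.2) (by simp [Touches])
  have a₃ := h (p.1, p.2 + 1) (by simp [Touches])
  have a₄ := h (p.1 + 1, p.2 + 1) (by simp [Touches])
  unfold Touches at *
  simp only at *
  obtain ⟨p₁, p₂⟩ := p
  obtain ⟨q₁, q₂⟩ := p'
  rcases hadj with ⟨h, h'⟩ | ⟨h, h'⟩ | ⟨h, h'⟩ | ⟨h, h'⟩ <;> simp only at * <;> subst h h'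
  · have : ¬ (c.1 ≤ p₁) := by omega
    have : ((p₁ + 1 : ℤ) : ℝ) ≤ c.1 := by exact_mod_cast (by omega)
    push_cast at *
    refine ⟨⟨?_, ?_⟩, ?_, ?_⟩ <;> linarith
  · have : ((c.1 + 1 : ℤ) : ℝ) ≤ p₁ := by exact_mod_cast (by omega)
    push_cast at *
    refine ⟨⟨?_, ?_⟩, ?_, ?_⟩ <;> linarith
  · have : ((p₂ + 1 : ℤ) : ℝ) ≤ c.2 := by exact_mod_cast (by omega)
    push_cast at *
    refine ⟨⟨?_, ?_⟩, ?_, ?_⟩ <;> linarith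
  · have : ((c.2 + 1 : ℤ) : ℝ) ≤ p₂ := by exact_mod_cast (by omega)
    push_cast at *
    refine ⟨⟨?_, ?_⟩, ?_, ?_⟩ <;> linarith

theorem mem_region_of_corner {w v p c : ℤ × ℤ} (hw : Touches w p) (hv : Touches v p)
    (h₁ : w.1 ≠ v.1) (h₂ : w.2 ≠ v.2) (h : ¬ Touches v c) {z : ℝ × ℝ} (hz : z ∈ cell p)
    (hzc : z ∈ cell c) : z ∈ region ((cellsAt w).erase p) := by
  obtain ⟨σ, hσ, hσv⟩ : ∃ σ : ℤ, (σ = 1 ∨ σ = -1) ∧ v.1 = w.1 + σ :=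
    ⟨v.1 - w.1, by unfold Touches at *; omega, by omega⟩
  obtain ⟨τ, hτ, hτv⟩ : ∃ τ : ℤ, (τ = 1 ∨ τ = -1) ∧ v.2 = w.2 + τ :=
    ⟨v.2 - w.2, by unfold Touches at *; omega, by omega⟩
  rw [mem_region_cellsAt_erase hσ hτ hσv hτv hw hv]
  refine ⟨mem_region.2 ⟨p, mem_cellsAt.2 hw, hz⟩, ?_⟩
  rw [mem_cell] at *
  have h₁ : p.1 ≤ c.1 + 1 := by exact_mod_cast hz.1.1.trans hzc.1.2
  have h₂ : c.1 ≤ p.1 + 1 := by exact_mod_cast hzc.1.1.trans hz.1.2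
  have h₃ : p.2 ≤ c.2 + 1 := by exact_mod_cast hz.2.1.trans hzc.2.2
  have h₄ : c.2 ≤ p.2 + 1 := by exact_mod_cast hzc.2.1.trans hz.2.2
  have key : ¬ (v.1 = c.1 ∨ v.1 = c.1 + 1) ∨ ¬ (v.2 = c.2 ∨ v.2 = c.2 + 1) :=
    not_and_or.1 h
  unfold Touches at hw hv
  rcases key with hk | hk
  · left
    rcases hσ with rfl | rfl
    · have : ((c.1 + 1 : ℤ) : ℝ) ≤ w.1 := by exact_mod_cast (by omega)
      push_cast at *; linarith
    · have : (w.1 : ℝ) ≤ c.1 := by exact_mod_cast (by omega)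
      push_cast at *; linarith
  · right
    rcases hτ with rfl | rfl
    · have : ((c.2 + 1 : ℤ) : ℝ) ≤ w.2 := by exact_mod_cast (by omega)
      push_cast at *; linarith
    · have : (w.2 : ℝ) ≤ c.2 := by exact_mod_cast (by omega)
      push_cast at *; linarith

theorem Shelling.nonempty_homeomorph {r : ℤ × ℤ} {H : Finset (ℤ × ℤ)} (hS : Shelling r H) :
    Nonempty (region H ≃ₜ cell r) := by
  induction hS with
  | single =>
    rw [show region {r} = cell r by simp [region]]
    exact ⟨Homeomorph.refl _⟩
  | @edge H p _ hp hatt ih =>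
    obtain ⟨p', hp', hadj, h⟩ := hatt
    have hne := hadj.ne
    have he : ({p', p} : Finset (ℤ × ℤ)).erase p = {p'} := by
      ext c; simp; grind
    obtain ⟨e⟩ := nonempty_homeomorph_insert (T := {p', p}) (p := p) (by simp) hp
      (by rw [he]; simpa) hadj.compresses fun z hz c hc hzc => by
        rw [he, mem_region]
        exact ⟨p', by simp, hadj.mem_cell_of_attached (fun z h1 h2 => h z h1 h2 c hc) hz hzc⟩
    exact ih.map e.trans
  | @corner H p _ hp hatt ih =>
    obtain ⟨w, v, hw, hv, h₁, h₂, hall, h⟩ := hatt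
    obtain ⟨e⟩ := nonempty_homeomorph_insert (T := cellsAt w) (p := p) (mem_cellsAt.2 hw) hp
      (fun c hc => by
        rw [Finset.mem_erase, mem_cellsAt] at hc
        exact hall c hc.2 hc.1) (compresses_cellsAt hw hv h₁ h₂) fun z hz c hc hzc =>
          mem_region_of_corner hw hv h₁ h₂ (h c hc) hz hzc
    exact ih.map e.trans

/-- The homeomorphism from `ℝ × ℝ` to the Euclidean plane given by `z ↦ s + D z`. -/
noncomputable def gridHomeo (s : Plane) (D : ℝ) (hD : D ≠ 0) : ℝ × ℝ ≃ₜ Plane where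
  toFun z := !₂[s 0 + D * z.1, s 1 + D * z.2]
  invFun x := ((x 0 - s 0) / D, (x 1 - s 1) / D)
  left_inv z := by ext <;> simp <;> field_simp
  right_inv x := by
    ext i; fin_cases i <;> simp <;> field_simp <;> ring
  continuous_toFun := by
    refine (PiLp.continuous_toLp 2 _).comp (continuous_pi fun i => ?_)
    fin_cases i <;> simp <;> fun_prop
  continuous_invFun := by fun_prop

theorem mem_image_gridHomeo {s : Plane} {D : ℝ} (hD : D ≠ 0) {S : Set (ℝ × ℝ)} {x : Plane} :
    x ∈ gridHomeo s D hD '' S ↔ ((x 0 - s 0) / D, (x 1 - s 1) / D) ∈ S := by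
  rw [Homeomorph.image_eq_preimage_symm]; rfl

theorem nonempty_homeomorph_cell (r : ℤ × ℤ) :
    Nonempty (cell r ≃ₜ (Metric.closedBall (0 : Plane) 1 : Set Plane)) := by
  set e := gridHomeo 0 1 one_ne_zero
  have hmem : ∀ x : Plane, x ∈ e '' cell r ↔
      ((r.1 : ℝ) ≤ x 0 ∧ x 0 ≤ r.1 + 1) ∧ (r.2 : ℝ) ≤ x 1 ∧ x 1 ≤ r.2 + 1 := fun x => by
    rw [mem_image_gridHomeo, mem_cell]; simp
  have hconv : Convex ℝ (e '' cell r) := by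
    intro x hx y hy a b ha hb hab
    rw [hmem] at *
    obtain rfl : a = 1 - b := by linarith
    simp only [PiLp.add_apply, PiLp.smul_apply, smul_eq_mul]
    refine ⟨⟨?_, ?_⟩, ?_, ?_⟩ <;> nlinarith
  have hcpt : IsCompact (cell r) := isCompact_Icc.prod isCompact_Icc
  have hcpt' : IsCompact (e '' cell r) := hcpt.image e.continuous
  have hint : (interior (e '' cell r)).Nonempty := by
    rw [← e.image_interior, interior_cell]
    exact ⟨_, Set.mem_image_of_mem _ (x := ((r.1 + 1 / 2 : ℝ), (r.2 + 1 / 2 : ℝ)))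
      (by simp only [Set.mem_prod, Set.mem_Ioo]; norm_num)⟩
  obtain ⟨h, -, hcl, -⟩ := exists_homeomorph_image_interior_closure_frontier_eq_unitBall hconv
    hint hcpt'.isBounded
  rw [hcpt'.isClosed.closure_eq] at hcl
  exact ⟨(e.image (cell r)).trans ((h.image _).trans (Homeomorph.setCongr hcl))⟩

/-- Regions with a shelling are topological disks. -/
theorem Shelling.nonempty_homeomorph_closedBall {r : ℤ × ℤ} {H : Finset (ℤ × ℤ)}
    (hS : Shelling r H) (s : Plane) {D : ℝ} (hD : D ≠ 0) :
    Nonempty ((gridHomeo s D hD '' region H : Set Plane) ≃ₜ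
      (Metric.closedBall (0 : Plane) 1 : Set Plane)) := by
  obtain ⟨e⟩ := hS.nonempty_homeomorph
  obtain ⟨e'⟩ := nonempty_homeomorph_cell r
  exact ⟨((gridHomeo s D hD).image (region H)).symm.trans (e.trans e')⟩

/-! ### The boundary of a set of cells -/

theorem exists_cell_notMem_of_mem_frontier {H : Finset (ℤ × ℤ)} {z : ℝ × ℝ}
    (hz : z ∈ frontier (region H)) :
    (∃ c ∈ H, z ∈ cell c) ∧ ∃ d, d ∉ H ∧ z ∈ cell d := by
  have hz' := (isCompact_region H).isClosed.frontier_subset hz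
  refine ⟨mem_region.1 hz', ?_⟩
  by_contra! hcon
  refine hz.2 ?_
  set T : Finset (ℤ × ℤ) := Finset.Icc (⌊z.1⌋ - 1) (⌊z.1⌋ + 1) ×ˢ
    Finset.Icc (⌊z.2⌋ - 1) (⌊z.2⌋ + 1) with hT
  classical
  set T' := T.filter fun c => z ∉ cell c with hT'
  have hopen : IsOpen ((region T')ᶜ ∩ Metric.ball z 1) :=
    (isCompact_region T').isClosed.isOpen_compl.inter Metric.isOpen_ball
  refine mem_interior.2 ⟨_, ?_, hopen, ?_, Metric.mem_ball_self one_pos⟩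
  · rintro w ⟨hw, hwz⟩
    have hwc : w ∈ cell (⌊w.1⌋, ⌊w.2⌋) := by
      rw [mem_cell]
      exact ⟨⟨Int.floor_le _, (Int.lt_floor_add_one _).le⟩, Int.floor_le _,
        (Int.lt_floor_add_one _).le⟩
    have hnear : ∀ a b : ℝ, |a - b| < 1 → ⌊b⌋ - 1 ≤ ⌊a⌋ ∧ ⌊a⌋ ≤ ⌊b⌋ + 1 := by
      intro a b h
      have h₁ := abs_lt.1 h
      constructor
      · rw [Int.le_floor]; push_cast; linarith [Int.floor_le b]
      · rw [← Int.floor_add_one]; exact Int.floor_le_floor (by linarith)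
    rw [Metric.mem_ball, Prod.dist_eq, max_lt_iff, Real.dist_eq, Real.dist_eq] at hwz
    by_contra hwH
    refine hw (mem_region.2 ⟨_, ?_, hwc⟩)
    rw [hT', Finset.mem_filter, hT, Finset.mem_product, Finset.mem_Icc, Finset.mem_Icc]
    refine ⟨⟨hnear _ _ hwz.1, hnear _ _ hwz.2⟩, fun hzc => ?_⟩
    refine hcon (⌊w.1⌋, ⌊w.2⌋) (fun h => hwH (mem_region.2 ⟨_, h, hwc⟩)) hzc
  · intro h
    obtain ⟨c, hc, hzc⟩ := mem_region.1 h
    exact (Finset.mem_filter.1 hc).2 hzc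

/-- The point of the plane representing a vertex of the lattice. -/
noncomputable def gridPoint (s : Plane) (D : ℝ) (v : ℤ × ℤ) : Plane :=
  !₂[s 0 + D * v.1, s 1 + D * v.2]

theorem Adj.edist_gridPoint {u v : ℤ × ℤ} (h : Adj u v) (s : Plane) {D : ℝ} (hD : 0 ≤ D) :
    edist (gridPoint s D u) (gridPoint s D v) = ENNReal.ofReal D := by
  rw [edist_dist, EuclideanSpace.dist_eq]
  congr 1
  rw [Real.sqrt_eq_iff_mul_self_eq (by positivity) hD]
  simp only [gridPoint, Fin.sum_univ_two, Real.dist_eq, sq_abs]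
  obtain ⟨u₁, u₂⟩ := u
  obtain ⟨v₁, v₂⟩ := v
  simp only [Adj] at h
  rcases h with ⟨rfl, rfl⟩ | ⟨rfl, rfl⟩ | ⟨rfl, rfl⟩ | ⟨rfl, rfl⟩ <;> simp <;> ring

theorem exists_edge_of_mem_cells {x y : ℤ × ℤ} {L : List (ℤ × ℤ)} {H : Finset (ℤ × ℤ)} {ε : ℤ}
    (hB : Bounds x y L H ε) (hε : ε ≠ 0) {c d : ℤ × ℤ} {z : ℝ × ℝ} (hcd : c.1 = d.1 ∨ c.2 = d.2)
    (hc : c ∈ H) (hd : d ∉ H) (hzc : z ∈ cell c) (hzd : z ∈ cell d) (s : Plane) {D : ℝ}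
    (hD : D ≠ 0) :
    ∃ p q, loopSum (edgeForm p q) x y L ≠ 0 ∧
      gridHomeo s D hD z ∈ segment ℝ (gridPoint s D p) (gridPoint s D q) := by
  have hne : c ≠ d := fun h => hd (h ▸ hc)
  rw [mem_cell] at hzc hzd
  have h₁ : c.1 ≤ d.1 + 1 := by exact_mod_cast hzc.1.1.trans hzd.1.2
  have h₂ : d.1 ≤ c.1 + 1 := by exact_mod_cast hzd.1.1.trans hzc.1.2
  have h₃ : c.2 ≤ d.2 + 1 := by exact_mod_cast hzc.2.1.trans hzd.2.2
  have h₄ : d.2 ≤ c.2 + 1 := by exact_mod_cast hzd.2.1.trans hzc.2.2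
  obtain ⟨c₁, c₂⟩ := c
  obtain ⟨d₁, d₂⟩ := d
  simp only at *
  have hz : ∃ p q : ℤ × ℤ, Adj p q ∧ Touches p (c₁, c₂) ∧ Touches q (c₁, c₂) ∧
      Touches p (d₁, d₂) ∧ Touches q (d₁, d₂) ∧ ∃ t : ℝ, 0 ≤ t ∧ t ≤ 1 ∧
        z.1 = (1 - t) * p.1 + t * q.1 ∧ z.2 = (1 - t) * p.2 + t * q.2 := by
    rcases hcd with rfl | rfl
    · have : c₂ ≠ d₂ := fun h => hne (by rw [h])
      rcases (show d₂ = c₂ + 1 ∨ c₂ = d₂ + 1 by omega) with rfl | rfl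
      · push_cast at hzd
        refine ⟨(c₁, c₂ + 1), (c₁ + 1, c₂ + 1), ?_, ?_, ?_, ?_, ?_, z.1 - c₁, by linarith,
          by linarith, by push_cast; ring, by push_cast; linarith⟩ <;>
        simp [Adj, Touches]
      · push_cast at hzc
        refine ⟨(c₁, d₂ + 1), (c₁ + 1, d₂ + 1), ?_, ?_, ?_, ?_, ?_, z.1 - c₁, by linarith,
          by linarith, by push_cast; ring, by push_cast; linarith⟩ <;>
        simp [Adj, Touches]
    · have : c₁ ≠ d₁ := fun h => hne (by rw [h])
      rcases (show d₁ = c₁ + 1 ∨ c₁ = d₁ + 1 by omega) with rfl | rfl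
      · push_cast at hzd
        refine ⟨(c₁ + 1, c₂), (c₁ + 1, c₂ + 1), ?_, ?_, ?_, ?_, ?_, z.2 - c₂, by linarith,
          by linarith, by push_cast; linarith, by push_cast; ring⟩ <;>
        simp [Adj, Touches]
      · push_cast at hzc
        refine ⟨(d₁ + 1, c₂), (d₁ + 1, c₂ + 1), ?_, ?_, ?_, ?_, ?_, z.2 - c₂, by linarith,
          by linarith, by push_cast; linarith, by push_cast; ring⟩ <;>
        simp [Adj, Touches]
  obtain ⟨p, q, hpq, hpc, hqc, hpd, hqd, t, ht0, ht1, hz₁, hz₂⟩ := hz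
  refine ⟨p, q, fun h0 => hd ((hB.mem_iff_of_loopSum_eq_zero hε hpq h0 hpc hqc hpd hqd).1 hc),
    1 - t, t, by linarith, ht0, by ring, ?_⟩
  ext i
  fin_cases i
  · simp [gridPoint, gridHomeo, hz₁]; ring
  · simp [gridPoint, gridHomeo, hz₂]; ring

theorem exists_edge_of_mem_frontier {x y : ℤ × ℤ} {L : List (ℤ × ℤ)} {H : Finset (ℤ × ℤ)} {ε : ℤ}
    (hB : Bounds x y L H ε) (hε : ε ≠ 0) {z : ℝ × ℝ} (hz : z ∈ frontier (region H)) (s : Plane)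
    {D : ℝ} (hD : D ≠ 0) :
    ∃ p q, loopSum (edgeForm p q) x y L ≠ 0 ∧
      gridHomeo s D hD z ∈ segment ℝ (gridPoint s D p) (gridPoint s D q) := by
  obtain ⟨⟨c, hc, hzc⟩, d, hd, hzd⟩ := exists_cell_notMem_of_mem_frontier hz
  have hze : z ∈ cell (d.1, c.2) := by rw [mem_cell] at *; exact ⟨hzd.1, hzc.2⟩
  by_cases he : (d.1, c.2) ∈ H
  · exact exists_edge_of_mem_cells (c := (d.1, c.2)) (d := d) hB hε (.inl rfl) he hd hze hzd s hD
  · exact exists_edge_of_mem_cells (c := c) (d := (d.1, c.2)) hB hε (.inr rfl) hc he hzc hze s hD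

theorem exists_cover_of_isChain (s : Plane) {D : ℝ} (hD : 0 ≤ D) (u : ℤ × ℤ) (l : List (ℤ × ℤ))
    (hl : (u :: l).IsChain Adj) :
    ∃ S : Set Plane, Measure.hausdorffMeasure 1 S ≤ l.length * ENNReal.ofReal D ∧
      ∀ p q, pathSum (edgeForm p q) (u :: l) ≠ 0 →
        segment ℝ (gridPoint s D p) (gridPoint s D q) ⊆ S := by
  induction l generalizing u with
  | nil => exact ⟨∅, by simp, fun p q h => (h rfl).elim⟩
  | cons v l ih =>
    rw [List.isChain_cons_cons] at hl
    obtain ⟨S, hS, hcov⟩ := ih v hl.2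
    refine ⟨segment ℝ (gridPoint s D u) (gridPoint s D v) ∪ S, ?_, fun p q h => ?_⟩
    · refine (measure_union_le _ _).trans ?_
      rw [hausdorffMeasure_segment, hl.1.edist_gridPoint s hD, List.length_cons, Nat.cast_succ,
        add_mul, one_mul, add_comm]
      gcongr
    · by_cases h0 : pathSum (edgeForm p q) (v :: l) = 0
      · rw [pathSum, h0, add_zero] at h
        have : (u = p ∧ v = q) ∨ (u = q ∧ v = p) := by
          unfold edgeForm at h; grind
        rcases this with ⟨rfl, rfl⟩ | ⟨rfl, rfl⟩
        · exact Set.subset_union_left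
        · rw [segment_symm]; exact Set.subset_union_left
      · exact (hcov p q h0).trans Set.subset_union_right

theorem IsLoop.hausdorffMeasure_frontier_le {x y : ℤ × ℤ} {L : List (ℤ × ℤ)}
    {H : Finset (ℤ × ℤ)} {ε : ℤ} (hL : IsLoop x y L) (hB : Bounds x y L H ε) (hε : ε ≠ 0)
    (s : Plane) {D : ℝ} (hD : 0 < D) :
    Measure.hausdorffMeasure 1 (frontier (gridHomeo s D hD.ne' '' region H)) ≤
      L.length * ENNReal.ofReal D := by
  obtain ⟨u, l, rfl⟩ : ∃ u l, L = u :: l := List.exists_cons_of_ne_nil (by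
    rintro rfl; simpa using hL.head)
  obtain ⟨S, hS, hcov⟩ := exists_cover_of_isChain s hD.le u l hL.chain
  have hsub : frontier (gridHomeo s D hD.ne' '' region H) ⊆
      S ∪ segment ℝ (gridPoint s D y) (gridPoint s D x) := by
    rw [← Homeomorph.image_frontier]
    rintro _ ⟨z, hz, rfl⟩
    obtain ⟨p, q, hpq, hmem⟩ := exists_edge_of_mem_frontier hB hε hz s hD.ne'
    by_cases h0 : pathSum (edgeForm p q) (u :: l) = 0
    · rw [loopSum, h0, zero_add] at hpq
      have : (y = p ∧ x = q) ∨ (y = q ∧ x = p) := by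
        unfold edgeForm at hpq; grind
      rcases this with ⟨rfl, rfl⟩ | ⟨rfl, rfl⟩
      · exact .inr hmem
      · rw [segment_symm] at hmem; exact .inr hmem
    · exact .inl (hcov p q h0 hmem)
  refine (measure_mono hsub).trans ((measure_union_le _ _).trans ?_)
  rw [hausdorffMeasure_segment, hL.closing.edist_gridPoint s hD.le, List.length_cons,
    Nat.cast_succ, add_mul, one_mul]
  gcongr

theorem image_gridHomeo_cell_eq (s : Plane) {D : ℝ} (hD : 0 < D) (c : ℤ × ℤ) :
    gridHomeo s D hD.ne' '' cell c = (fun u : Plane => (WithLp.ofLp u : Fin 2 → ℝ)) ⁻¹'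
      Set.Icc ![s 0 + D * c.1, s 1 + D * c.2] ![s 0 + D * (c.1 + 1), s 1 + D * (c.2 + 1)] := by
  ext x
  rw [mem_image_gridHomeo, mem_cell, Set.mem_preimage, Set.mem_Icc, Pi.le_def, Pi.le_def,
    Fin.forall_fin_two, Fin.forall_fin_two]
  simp only [le_div_iff₀ hD, div_le_iff₀ hD, Matrix.cons_val_zero, Matrix.cons_val_one]
  constructor
  · rintro ⟨⟨a, b⟩, c, d⟩
    exact ⟨⟨by linarith, by linarith⟩, by linarith, by linarith⟩
  · rintro ⟨⟨a, b⟩, c, d⟩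
    exact ⟨⟨by linarith, by linarith⟩, by linarith, by linarith⟩

theorem volume_image_cell (s : Plane) {D : ℝ} (hD : 0 < D) (c : ℤ × ℤ) :
    volume (gridHomeo s D hD.ne' '' cell c) = ENNReal.ofReal (D ^ 2) := by
  rw [image_gridHomeo_cell_eq s hD,
    (PiLp.volume_preserving_ofLp (Fin 2)).measure_preimage measurableSet_Icc.nullMeasurableSet,
    Real.volume_Icc_pi, Fin.prod_univ_two, ← ENNReal.ofReal_mul (by simp; nlinarith)]
  congr 1
  simp; ring

theorem volume_image_region (s : Plane) {D : ℝ} (hD : 0 < D) (H : Finset (ℤ × ℤ)) :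
    volume (gridHomeo s D hD.ne' '' region H) = H.card * ENNReal.ofReal (D ^ 2) := by
  have hconv : ∀ c, Convex ℝ (gridHomeo s D hD.ne' '' cell c) := fun c => by
    rw [image_gridHomeo_cell_eq s hD]
    exact (convex_Icc _ _).linear_preimage (WithLp.linearEquiv 2 ℝ (Fin 2 → ℝ)).toLinearMap
  have hcpt : ∀ c, IsCompact (cell c) := fun c => isCompact_Icc.prod isCompact_Icc
  rw [region, Set.image_iUnion₂]
  rw [measure_biUnion_finset₀]
  · simp [volume_image_cell s hD]
  · intro c _ d _ hcd
    refine measure_mono_null ?_ ((hconv c).addHaar_frontier volume)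
    rintro _ ⟨⟨z, hzc, rfl⟩, ⟨w, hwd, hwz⟩⟩
    obtain rfl := (gridHomeo s D hD.ne').injective hwz
    rw [← Homeomorph.image_frontier]
    refine Set.mem_image_of_mem _ ⟨subset_closure hzc, fun h => hcd ?_⟩
    exact eq_of_mem_interior_cell h hwd
  · exact fun c _ => (((hcpt c).image
      (gridHomeo s D hD.ne').continuous).isClosed.measurableSet).nullMeasurableSet

/-- The cell of the grid of mesh `D` with origin `s` containing a point of the plane. -/
noncomputable def cellOf (s : Plane) (D : ℝ) (x : Plane) : ℤ × ℤ :=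
  (⌊(x 0 - s 0) / D⌋, ⌊(x 1 - s 1) / D⌋)

/-- The point `x` does not lie on the lines of the grid of mesh `D` with origin `s`. -/
def OffGrid (s : Plane) (D : ℝ) (x : Plane) : Prop :=
  ∀ i, ∀ k : ℤ, (x i - s i) / D ≠ k

theorem OffGrid.mem_image_cell_iff {s : Plane} {D : ℝ} {x : Plane} (h : OffGrid s D x)
    (hD : D ≠ 0) (c : ℤ × ℤ) : x ∈ gridHomeo s D hD '' cell c ↔ cellOf s D x = c := by
  rw [mem_image_gridHomeo, mem_cell, cellOf, Prod.ext_iff, Int.floor_eq_iff, Int.floor_eq_iff]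
  have h₀ := h 0 (c.1 + 1)
  have h₁ := h 1 (c.2 + 1)
  push_cast at h₀ h₁
  constructor
  · rintro ⟨⟨a, b⟩, c, d⟩
    exact ⟨⟨a, lt_of_le_of_ne b h₀⟩, c, lt_of_le_of_ne d h₁⟩
  · rintro ⟨⟨a, b⟩, c, d⟩
    exact ⟨⟨a, b.le⟩, c, d.le⟩

theorem inter_image_region {X : Set Plane} {s : Plane} {D : ℝ} (hX : ∀ x ∈ X, OffGrid s D x)
    (hD : D ≠ 0) (H : Finset (ℤ × ℤ)) :
    X ∩ gridHomeo s D hD '' region H = ⋃ c ∈ H, {x ∈ X | cellOf s D x = c} := by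
  ext x
  simp only [region, Set.image_iUnion₂, Set.mem_inter_iff, Set.mem_iUnion, Set.mem_sep_iff,
    exists_prop]
  constructor
  · rintro ⟨hx, c, hc, h⟩
    exact ⟨c, hc, hx, ((hX x hx).mem_image_cell_iff hD c).1 h⟩
  · rintro ⟨c, hc, hx, h⟩
    exact ⟨hx, c, hc, ((hX x hx).mem_image_cell_iff hD c).2 h⟩

theorem ncard_inter_image_region {X : Set Plane} {s : Plane} {D : ℝ}
    (hX : ∀ x ∈ X, OffGrid s D x) (hD : D ≠ 0) (hfin : ∀ c, {x ∈ X | cellOf s D x = c}.Finite)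
    (H : Finset (ℤ × ℤ)) :
    (X ∩ gridHomeo s D hD '' region H).ncard =
      ∑ c ∈ H, {x ∈ X | cellOf s D x = c}.ncard := by
  rw [inter_image_region hX hD]
  classical
  induction H using Finset.induction_on with
  | empty => simp
  | insert a H ha ih =>
    have hd : Disjoint {x ∈ X | cellOf s D x = a} (⋃ c ∈ H, {x ∈ X | cellOf s D x = c}) := by
      rw [Set.disjoint_left]
      rintro x ⟨-, hx⟩ hx'
      simp only [Set.mem_iUnion, Set.mem_sep_iff, exists_prop] at hx'
      obtain ⟨c, hc, -, hxc⟩ := hx'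
      exact ha (hx ▸ hxc ▸ hc)
    rw [Finset.set_biUnion_insert, Set.ncard_union_eq hd (hfin a)
      (H.finite_toSet.biUnion fun c _ => hfin c), ih, Finset.sum_insert ha]

/-- The discrepancy estimate for topological disks, applied to the disk bounded by a loop. -/
theorem IsLoop.abs_loopSum_le {X : Set Plane} {ρ c₁ c₂ : ℝ} (h₁ : 0 < c₁) (h₂ : 0 < c₂)
    (hU : ∀ U : Set Plane, IsCompact U →
      Nonempty (U ≃ₜ (Metric.closedBall (0 : Plane) 1 : Set Plane)) →
      ENNReal.ofReal |((X ∩ U).ncard : ℝ) - ρ * (volume U).toReal| ≤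
        ENNReal.ofReal c₁ + ENNReal.ofReal c₂ * Measure.hausdorffMeasure 1 (frontier U))
    {s : Plane} {D : ℝ} (hD : 0 < D) (hX : ∀ x ∈ X, OffGrid s D x)
    (hfin : ∀ c, {x ∈ X | cellOf s D x = c}.Finite) {k C : ℤ} (hk : ρ * D ^ 2 = k)
    (hC : c₁ + c₂ * D ≤ C) {A : ℤ × ℤ → ℤ × ℤ → ℤ} (hA : ∀ u v, A u v = - A v u)
    (hcurl : ∀ c, curl A c = {x ∈ X | cellOf s D x = c}.ncard - k)
    {x y : ℤ × ℤ} {L : List (ℤ × ℤ)} (hL : IsLoop x y L) :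
    |loopSum A x y L| ≤ C * L.length := by
  have hC0 : 0 ≤ C := by
    have : (0 : ℝ) ≤ C := le_trans (by positivity) hC
    exact_mod_cast this
  obtain ⟨H, ε, hε, hB, hH⟩ := hL.exists_filled
  have hε0 : ε ≠ 0 := by rcases hε with rfl | rfl <;> decide
  have habs : |ε| = 1 := by rcases hε with rfl | rfl <;> rfl
  rw [hB A hA, abs_mul, habs, one_mul]
  rcases hH with ⟨rfl, -⟩ | ⟨hlen, r, hr, -⟩
  · simp; positivity
  have key := (hU _ ((isCompact_region H).image (gridHomeo s D hD.ne').continuous)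
    (hr.nonempty_homeomorph_closedBall s hD.ne')).trans
    (add_le_add le_rfl (mul_le_mul_right (hL.hausdorffMeasure_frontier_le hB hε0 s hD) _))
  rw [ncard_inter_image_region hX hD.ne' hfin, volume_image_region s hD, ENNReal.toReal_mul,
    ENNReal.toReal_natCast, ENNReal.toReal_ofReal (by positivity), ← ENNReal.ofReal_natCast,
    ← ENNReal.ofReal_mul (by positivity), ← ENNReal.ofReal_mul h₂.le,
    ← ENNReal.ofReal_add h₁.le (by positivity), ENNReal.ofReal_le_ofReal_iff (by positivity)] at key
  have hsum : (((∑ c ∈ H, curl A c : ℤ)) : ℝ) =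
      ((∑ c ∈ H, {x ∈ X | cellOf s D x = c}.ncard : ℕ) : ℝ) - ρ * (H.card * D ^ 2) := by
    rw [show ρ * (H.card * D ^ 2) = H.card * (ρ * D ^ 2) by ring, hk]
    simp only [hcurl]
    push_cast
    rw [Finset.sum_sub_distrib]
    simp
  rw [← hsum] at key
  have hlen' : (3 : ℝ) ≤ L.length := by exact_mod_cast hlen
  have : ((|∑ c ∈ H, curl A c| : ℤ) : ℝ) ≤ ((C * L.length : ℤ) : ℝ) := by
    push_cast at key ⊢
    nlinarith
  exact_mod_cast this

/-! ### Closed walks and potentials -/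

/-- A walk in the square lattice from `u` to `v`. -/
structure IsWalk (u v : ℤ × ℤ) (w : List (ℤ × ℤ)) : Prop where
  chain : w.IsChain Adj
  head : w.head? = some u
  last : w.getLast? = some v

theorem isWalk_singleton (u : ℤ × ℤ) : IsWalk u u [u] := ⟨List.isChain_singleton _, rfl, rfl⟩

theorem IsWalk.ne_nil {u v : ℤ × ℤ} {w : List (ℤ × ℤ)} (h : IsWalk u v w) : w ≠ [] := by
  rintro rfl; simpa using h.head

theorem isWalk_append_cons {u v p : ℤ × ℤ} {l₁ l₂ : List (ℤ × ℤ)} :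
    IsWalk u v (l₁ ++ p :: l₂) ↔ IsWalk u p (l₁ ++ [p]) ∧ IsWalk p v (p :: l₂) := by
  constructor
  · rintro ⟨hc, hh, hl⟩
    rw [List.append_cons, List.head?_append_of_ne_nil _ (by simp)] at hh
    rw [List.getLast?_append_of_ne_nil _ (by simp)] at hl
    rw [List.isChain_split] at hc
    exact ⟨⟨hc.1, hh, by simp⟩, ⟨hc.2, rfl, hl⟩⟩
  · rintro ⟨⟨hc, hh, -⟩, ⟨hc', -, hl⟩⟩
    refine ⟨List.isChain_split.2 ⟨hc, hc'⟩, ?_, ?_⟩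
    · rw [List.append_cons, List.head?_append_of_ne_nil _ (by simp)]; exact hh
    · rw [List.getLast?_append_of_ne_nil _ (by simp)]; exact hl

theorem IsWalk.exists_eq_append {u v : ℤ × ℤ} {w : List (ℤ × ℤ)} (h : IsWalk u v w) :
    ∃ l, w = l ++ [v] := by
  rcases List.eq_nil_or_concat w with rfl | ⟨l, a, rfl⟩
  · exact (h.ne_nil rfl).elim
  · have := h.last
    simp at this
    exact ⟨l, by simp [this]⟩

theorem IsWalk.exists_eq_cons {u v : ℤ × ℤ} {w : List (ℤ × ℤ)} (h : IsWalk u v w) :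
    ∃ l, w = u :: l := by
  obtain ⟨a, l, rfl⟩ := List.exists_cons_of_ne_nil h.ne_nil
  have := h.head
  simp at this
  exact ⟨l, by rw [this]⟩

theorem exists_eq_append_of_not_nodup {α : Type*} {l : List α} (h : ¬ l.Nodup) :
    ∃ l₁ v l₂ l₃, l = l₁ ++ v :: (l₂ ++ v :: l₃) := by
  induction l with
  | nil => exact (h List.nodup_nil).elim
  | cons a l ih =>
    by_cases ha : a ∈ l
    · obtain ⟨l₂, l₃, rfl⟩ := List.append_of_mem ha
      exact ⟨[], a, l₂, l₃, rfl⟩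
    · obtain ⟨l₁, v, l₂, l₃, rfl⟩ := ih fun hl => h (List.nodup_cons.2 ⟨ha, hl⟩)
      exact ⟨a :: l₁, v, l₂, l₃, rfl⟩

theorem IsWalk.pathSum_le {A : ℤ × ℤ → ℤ × ℤ → ℤ} {C : ℤ}
    (hloop : ∀ x y L, IsLoop x y L → |loopSum A x y L| ≤ C * L.length) {u : ℤ × ℤ}
    {w : List (ℤ × ℤ)} (hw : IsWalk u u w) : pathSum A w + C ≤ C * w.length := by
  induction hn : w.length using Nat.strong_induction_on generalizing u w with
  | _ n ih =>
  subst hn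
  obtain ⟨l, rfl⟩ := hw.exists_eq_append
  by_cases hl : l.Nodup
  · rcases List.eq_nil_or_concat l with rfl | ⟨l', y, rfl⟩
    · simp [pathSum]
    · rw [List.concat_eq_append] at *
      have hw' := hw
      rw [List.append_assoc, List.singleton_append, isWalk_append_cons] at hw'
      obtain ⟨h₁, h₂⟩ := hw'
      have hL : IsLoop u y (l' ++ [y]) := ⟨h₁.chain, hl, h₁.head, h₁.last, by
        simpa using h₂.chain⟩
      have := (abs_le.1 (hloop _ _ _ hL)).2
      rw [loopSum] at this
      rw [List.append_assoc, List.singleton_append, pathSum_append_pair]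
      simp only [List.length_append, List.length_cons, List.length_nil] at this ⊢
      push_cast at this ⊢
      linarith
  · obtain ⟨l₁, v, l₂, l₃, rfl⟩ := exists_eq_append_of_not_nodup hl
    have e : (l₁ ++ v :: (l₂ ++ v :: l₃)) ++ [u] = l₁ ++ v :: (l₂ ++ v :: (l₃ ++ [u])) := by simp
    rw [e] at hw ih ⊢
    obtain ⟨h₁, h₂⟩ := isWalk_append_cons.1 hw
    rw [← List.cons_append, isWalk_append_cons] at h₂
    obtain ⟨h₂, h₃⟩ := h₂
    have i₁ := ih _ (by simp; omega) h₂ rfl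
    have i₂ := ih _ (by simp) (isWalk_append_cons.2 ⟨h₁, h₃⟩) rfl
    rw [pathSum_append_cons] at i₂ ⊢
    rw [← List.cons_append, pathSum_append_cons A (v :: l₂)]
    simp only [List.length_append, List.length_cons, List.length_nil] at i₁ i₂ ⊢
    push_cast at i₁ i₂ ⊢
    linarith

theorem exists_isWalk (u v : ℤ × ℤ) : ∃ w, IsWalk u v w := by
  have htrans : ∀ {a b c : ℤ × ℤ}, (∃ w, IsWalk a b w) → (∃ w, IsWalk b c w) →
      ∃ w, IsWalk a c w := by
    rintro a b c ⟨w, hw⟩ ⟨w', hw'⟩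
    obtain ⟨l, rfl⟩ := hw.exists_eq_append
    obtain ⟨l', rfl⟩ := hw'.exists_eq_cons
    exact ⟨_, isWalk_append_cons.2 ⟨hw, hw'⟩⟩
  have hadj : ∀ {a b : ℤ × ℤ}, Adj a b → ∃ w, IsWalk a b w := fun {a b} h =>
    ⟨[a, b], by simpa using h, rfl, rfl⟩
  have h₁ : ∀ k : ℤ, ∃ w, IsWalk u (u.1 + k, u.2) w := fun k => by
    induction k using Int.induction_on with
    | zero => exact ⟨_, by simpa using isWalk_singleton u⟩
    | succ k ih => exact htrans ih (hadj (by simp [Adj]; omega))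
    | pred k ih => exact htrans ih (hadj (by simp [Adj]; omega))
  have h₂ : ∀ k : ℤ, ∃ w, IsWalk u (v.1, u.2 + k) w := fun k => by
    induction k using Int.induction_on with
    | zero => simpa using h₁ (v.1 - u.1)
    | succ k ih => exact htrans ih (hadj (by simp [Adj]; omega))
    | pred k ih => exact htrans ih (hadj (by simp [Adj]; omega))
  simpa using h₂ (v.2 - u.2)

/-- An edge function whose sums along simple loops are controlled by the length is bounded, up to
the gradient of a potential. -/
theorem exists_bounded_of_loopSum_le {A : ℤ × ℤ → ℤ × ℤ → ℤ} {C : ℤ}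
    (hA : ∀ u v, A u v = - A v u)
    (hloop : ∀ x y L, IsLoop x y L → |loopSum A x y L| ≤ C * L.length) :
    ∃ B : ℤ × ℤ → ℤ × ℤ → ℤ, (∀ u v, B u v = - B v u) ∧ (∀ c, curl B c = curl A c) ∧
      ∀ u v, Adj u v → |B u v| ≤ C := by
  set S : ℤ × ℤ → Set ℤ := fun v =>
    {n | ∃ w, IsWalk 0 v w ∧ n = C * w.length - pathSum A w} with hS
  have hne : ∀ v, (S v).Nonempty := fun v => by
    obtain ⟨w, hw⟩ := exists_isWalk 0 v
    exact ⟨_, w, hw, rfl⟩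
  have hbdd : ∀ v, BddBelow (S v) := fun v => by
    obtain ⟨r, hr⟩ := exists_isWalk v 0
    obtain ⟨r', rfl⟩ := hr.exists_eq_cons
    refine ⟨C + pathSum A (v :: r') - C * r'.length, ?_⟩
    rintro _ ⟨w, hw, rfl⟩
    obtain ⟨l, rfl⟩ := hw.exists_eq_append
    have := (isWalk_append_cons.2 ⟨hw, hr⟩).pathSum_le hloop
    rw [pathSum_append_cons] at this
    simp only [List.length_append, List.length_cons, List.length_nil] at this ⊢
    push_cast at this ⊢
    linarith
  set φ : ℤ × ℤ → ℤ := fun v => sInf (S v) with hφ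
  have hstep : ∀ u v, Adj u v → A u v + φ v - φ u ≤ C := fun u v huv => by
    obtain ⟨w, hw, hφu⟩ := Int.csInf_mem (hne u) (hbdd u)
    obtain ⟨l, rfl⟩ := hw.exists_eq_append
    have hmem : C * ((l ++ [u, v]).length : ℤ) - pathSum A (l ++ [u, v]) ∈ S v :=
      ⟨_, isWalk_append_cons.2 ⟨hw, by simpa using huv, rfl, rfl⟩, rfl⟩
    have hle : φ v ≤ _ := csInf_le (hbdd v) hmem
    have hφu' : φ u = _ := hφu
    rw [pathSum_append_pair] at hle
    simp only [List.length_append, List.length_cons, List.length_nil] at hle hφu'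
    push_cast at hle hφu'
    linarith
  refine ⟨fun u v => A u v + φ v - φ u, fun u v => by linarith [hA u v], fun c => ?_,
    fun u v huv => abs_le.2 ⟨?_, hstep u v huv⟩⟩
  · simp only [curl]; ring
  · have := hstep v u huv.symm
    linarith [hA u v]

/-! ### Transporting points between neighbouring cells -/

theorem exists_equiv_of_card_fiber_eq {X Y Q : Type*} {f : X → Q} {g : Y → Q}
    (hf : ∀ q, Finite {x // f x = q}) (hg : ∀ q, Finite {y // g y = q})
    (h : ∀ q, Nat.card {x // f x = q} = Nat.card {y // g y = q}) :
    ∃ e : X ≃ Y, ∀ x, g (e x) = f x := by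
  have e : ∀ q, {x // f x = q} ≃ {y // g y = q} := fun q => (Finite.card_eq.1 (h q)).some
  refine ⟨(Equiv.sigmaFiberEquiv f).symm.trans ((Equiv.sigmaCongrRight e).trans
    (Equiv.sigmaFiberEquiv g)), fun x => (e (f x) ⟨x, rfl⟩).2⟩

/-- Points can be moved according to a transport plan on the set of cells. -/
theorem exists_equiv_of_transport {X Y Q ι : Type*} [AddCommGroup Q] [Fintype ι] (δ : ι → Q)
    (out : Q → ι → ℕ) {f : X → Q} {g : Y → Q}
    (hf : ∀ q, Finite {x // f x = q}) (hg : ∀ q, Finite {y // g y = q})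
    (hf' : ∀ q, Nat.card {x // f x = q} = ∑ d, out q d)
    (hg' : ∀ q, Nat.card {y // g y = q} = ∑ d, out (q - δ d) d) :
    ∃ b : X ≃ Y, ∀ x, ∃ d, g (b x) = f x + δ d := by
  let M := Σ p : Q × ι, Fin (out p.1 p.2)
  have hsrc : ∀ q, Nonempty ((Σ d : ι, Fin (out q d)) ≃ {z : M // z.1.1 = q}) := fun q => by
    refine ⟨Equiv.ofBijective (fun z => ⟨⟨(q, z.1), z.2⟩, rfl⟩) ⟨?_, ?_⟩⟩
    · rintro ⟨d, i⟩ ⟨d', i'⟩ h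
      obtain rfl : d = d' := congrArg (fun z => z.1.1.2) h
      have hi : i = i' := eq_of_heq (Sigma.mk.inj_iff.1 (congrArg Subtype.val h)).2
      rw [hi]
    · rintro ⟨⟨⟨q', d⟩, i⟩, rfl⟩
      exact ⟨⟨d, i⟩, rfl⟩
  have htgt : ∀ q, Nonempty ((Σ d : ι, Fin (out (q - δ d) d)) ≃
      {z : M // z.1.1 + δ z.1.2 = q}) := fun q => by
    refine ⟨Equiv.ofBijective (fun z => ⟨⟨(q - δ z.1, z.1), z.2⟩, by simp⟩) ⟨?_, ?_⟩⟩
    · rintro ⟨d, i⟩ ⟨d', i'⟩ h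
      obtain rfl : d = d' := congrArg (fun z => z.1.1.2) h
      have hi : i = i' := eq_of_heq (Sigma.mk.inj_iff.1 (congrArg Subtype.val h)).2
      rw [hi]
    · rintro ⟨⟨⟨q', d⟩, i⟩, h⟩
      obtain rfl : q' = q - δ d := eq_sub_of_add_eq h
      exact ⟨⟨d, i⟩, rfl⟩
  have hsf : ∀ q, Finite {z : M // z.1.1 = q} := fun q => Finite.of_equiv _ (hsrc q).some
  have htf : ∀ q, Finite {z : M // z.1.1 + δ z.1.2 = q} := fun q =>
    Finite.of_equiv _ (htgt q).some
  obtain ⟨e, he⟩ := exists_equiv_of_card_fiber_eq (f := f) (g := fun z : M => z.1.1) hf hsf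
    fun q => by rw [hf', ← Nat.card_congr (hsrc q).some]; simp
  obtain ⟨e', he'⟩ := exists_equiv_of_card_fiber_eq (f := fun z : M => z.1.1 + δ z.1.2) (g := g)
    htf hg fun q => by rw [hg', ← Nat.card_congr (htgt q).some]; simp
  exact ⟨e.trans e', fun x => ⟨(e x).1.2, by rw [Equiv.trans_apply, he', he]⟩⟩

theorem exists_primitive (g : ℤ → ℤ) : ∃ G : ℤ → ℤ, ∀ j, G (j + 1) = G j + g j := by
  refine ⟨fun j => match j with
    | Int.ofNat n => ∑ k ∈ Finset.range n, g k
    | Int.negSucc n => - ∑ k ∈ Finset.range (n + 1), g (Int.negSucc k), fun j => ?_⟩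
  rcases j with n | n
  · exact Finset.sum_range_succ _ _
  · rcases n with _ | n
    · simp
    · rw [show Int.negSucc (n + 1) + 1 = Int.negSucc n by omega]
      simp only
      rw [Finset.sum_range_succ _ (n + 1)]
      ring

theorem exists_curl_eq (f : ℤ × ℤ → ℤ) : ∃ A : ℤ × ℤ → ℤ × ℤ → ℤ,
    (∀ u v, A u v = - A v u) ∧ ∀ c, curl A c = f c := by
  choose F hF using fun i => exists_primitive fun j => - f (i, j)
  refine ⟨fun u v => if v.1 = u.1 + 1 ∧ v.2 = u.2 then F u.1 u.2 else
    if u.1 = v.1 + 1 ∧ u.2 = v.2 then - F v.1 v.2 else 0, ?_, ?_⟩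
  · rintro ⟨u₁, u₂⟩ ⟨v₁, v₂⟩
    simp only
    split_ifs <;> omega
  · rintro ⟨i, j⟩
    have := hF i j
    have h₁ : ¬ i = i + 1 + 1 := by omega
    simp [curl, h₁]
    linarith

/-- A bounded flow with prescribed divergence moves the points of the cells to the points of
neighbouring cells, so as to correct the discrepancies. -/
theorem exists_equiv_of_bounded_curl {X Y : Type*} {f : X → ℤ × ℤ} {g : Y → ℤ × ℤ} {k : ℕ} {C : ℤ}
    (hf : ∀ q, Finite {x // f x = q}) (hg : ∀ q, Finite {y // g y = q})
    (hk : ∀ q, Nat.card {y // g y = q} = k) {B : ℤ × ℤ → ℤ × ℤ → ℤ}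
    (hB : ∀ u v, B u v = - B v u) (hC : ∀ u v, Adj u v → |B u v| ≤ C) (hCk : 4 * C ≤ k)
    (hcurl : ∀ q, curl B q = (Nat.card {x // f x = q} : ℤ) - k) :
    ∃ b : X ≃ Y, ∀ x, |(g (b x)).1 - (f x).1| ≤ 1 ∧ |(g (b x)).2 - (f x).2| ≤ 1 := by
  set h : ℤ → ℤ → ℤ := fun i j => B (i, j) (i + 1, j) with hh
  set v : ℤ → ℤ → ℤ := fun i j => B (i, j) (i, j + 1) with hv
  have hhC : ∀ i j, |h i j| ≤ C := fun i j => hC _ _ (by simp [Adj])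
  have hvC : ∀ i j, |v i j| ≤ C := fun i j => hC _ _ (by simp [Adj])
  have hdiv : ∀ i j, h i j + v (i + 1) j - h i (j + 1) - v i j =
      (Nat.card {x // f x = (i, j)} : ℤ) - k := fun i j => by
    rw [← hcurl]
    simp only [curl, hh, hv]
    rw [hB (i + 1, j + 1), hB (i, j + 1) (i, j)]
    ring
  set δ : Fin 5 → ℤ × ℤ := ![(0, 0), (1, 0), (-1, 0), (0, -1), (0, 1)] with hδ
  set out : ℤ × ℤ → Fin 5 → ℕ := fun q => ![((k : ℤ) - (v q.1 q.2).toNat -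
      (-v (q.1 + 1) q.2).toNat - (h q.1 (q.2 + 1)).toNat - (-h q.1 q.2).toNat).toNat,
    (v (q.1 + 1) q.2).toNat, (-v q.1 q.2).toNat, (h q.1 q.2).toNat, (-h q.1 (q.2 + 1)).toNat]
    with hout
  obtain ⟨b, hb⟩ := exists_equiv_of_transport δ out hf hg (fun q => by
      obtain ⟨i, j⟩ := q
      have h₀ := hdiv i j
      have h₁ := abs_le.1 (hhC i j)
      have h₂ := abs_le.1 (hhC i (j + 1))
      have h₃ := abs_le.1 (hvC i j)
      have h₄ := abs_le.1 (hvC (i + 1) j)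
      rw [Fin.sum_univ_five]
      simp only [hout, Matrix.cons_val]
      omega) (fun q => by
      obtain ⟨i, j⟩ := q
      have h₁ := abs_le.1 (hhC i j)
      have h₂ := abs_le.1 (hhC i (j + 1))
      have h₃ := abs_le.1 (hvC i j)
      have h₄ := abs_le.1 (hvC (i + 1) j)
      rw [hk, Fin.sum_univ_five]
      simp only [hout, hδ, Matrix.cons_val, Prod.mk_sub_mk, sub_zero, sub_neg_eq_add,
        sub_add_cancel]
      omega)
  refine ⟨b, fun x => ?_⟩
  obtain ⟨d, hd⟩ := hb x
  rw [hd]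
  fin_cases d <;> simp [hδ]

theorem exists_offGrid {X : Set Plane} (hX : X.Countable) {D : ℝ} (hD : D ≠ 0) :
    ∃ s : Plane, ∀ x ∈ X, OffGrid s D x := by
  have h : ∀ i : Fin 2, ∃ t : ℝ, ∀ x ∈ X, ∀ k : ℤ, (x i - t) / D ≠ k := fun i => by
    have hc : (⋃ k : ℤ, (fun x : Plane => x i - D * k) '' X).Countable :=
      Set.countable_iUnion fun k => hX.image _
    obtain ⟨t, ht⟩ := (hc.dense_compl ℝ).nonempty
    refine ⟨t, fun x hx k hk => ht (Set.mem_iUnion.2 ⟨k, x, hx, ?_⟩)⟩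
    rw [div_eq_iff hD] at hk
    simp only
    linarith
  choose t ht using h
  exact ⟨WithLp.toLp 2 t, fun x hx i k => ht i x hx k⟩

theorem finite_cellOf_eq {X : Set Plane} (hX : ∀ R, (X ∩ Metric.closedBall 0 R).Finite)
    {s : Plane} {D : ℝ} (hD : D ≠ 0) (hs : ∀ x ∈ X, OffGrid s D x) (c : ℤ × ℤ) :
    {x ∈ X | cellOf s D x = c}.Finite := by
  have hcpt : IsCompact (gridHomeo s D hD '' cell c) :=
    (isCompact_Icc.prod isCompact_Icc).image (gridHomeo s D hD).continuous
  obtain ⟨R, hR⟩ := hcpt.isBounded.subset_closedBall 0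
  refine (hX R).subset ?_
  rintro x ⟨hx, hxc⟩
  exact ⟨hx, hR (((hs x hx).mem_image_cell_iff hD c).2 hxc)⟩

theorem finite_ediv_eq {m : ℕ} (hm : 0 < m) (q : ℤ × ℤ) :
    Finite {p : ℤ × ℤ // (p.1 / (m : ℤ), p.2 / (m : ℤ)) = q} ∧
      Nat.card {p : ℤ × ℤ // (p.1 / (m : ℤ), p.2 / (m : ℤ)) = q} = m * m := by
  have hm' : (0 : ℤ) < m := by exact_mod_cast hm
  have h : {p : ℤ × ℤ | (p.1 / (m : ℤ), p.2 / (m : ℤ)) = q} =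
      ↑(Finset.Ico (q.1 * m) (q.1 * m + m) ×ˢ Finset.Ico (q.2 * m) (q.2 * m + m)) := by
    ext p
    simp only [Set.mem_ofPred_eq, Finset.coe_product, Finset.coe_Ico, Set.mem_prod, Set.mem_Ico,
      Prod.ext_iff, Int.ediv_eq_iff_of_pos hm']
  refine ⟨?_, ?_⟩
  · exact Set.Finite.to_subtype (s := {p : ℤ × ℤ | (p.1 / (m : ℤ), p.2 / (m : ℤ)) = q})
      (h ▸ Finset.finite_toSet _)
  · change Set.ncard {p : ℤ × ℤ | (p.1 / (m : ℤ), p.2 / (m : ℤ)) = q} = _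
    rw [h, Set.ncard_coe_finset]
    simp

theorem norm_le_abs_add_abs (v : Plane) : ‖v‖ ≤ |v 0| + |v 1| := by
  rw [EuclideanSpace.norm_eq, Fin.sum_univ_two, Real.sqrt_le_iff]
  refine ⟨by positivity, ?_⟩
  rw [Real.norm_eq_abs, Real.norm_eq_abs]
  nlinarith [abs_nonneg (v 0), abs_nonneg (v 1)]

/-- The points of the scaled square lattice. -/
noncomputable def latticeEquiv {h : ℝ} (hh : h ≠ 0) :
    ℤ × ℤ ≃ (LinearEquiv.smulOfNeZero ℝ Plane h hh '' {x : Plane | ∀ i, ∃ m : ℤ, x i = m} :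
      Set Plane) :=
  Equiv.ofBijective (fun p => ⟨LinearEquiv.smulOfNeZero ℝ Plane h hh !₂[(p.1 : ℝ), p.2],
      Set.mem_image_of_mem _ fun i => by
        fin_cases i
        · exact ⟨p.1, by simp⟩
        · exact ⟨p.2, by simp⟩⟩) <| by
    constructor
    · intro p q hpq
      have := (LinearEquiv.injective _) (congrArg Subtype.val hpq)
      have h₀ := congrFun (congrArg WithLp.ofLp this) 0
      have h₁ := congrFun (congrArg WithLp.ofLp this) 1
      simp at h₀ h₁
      exact Prod.ext h₀ h₁
    · rintro ⟨_, x, hx, rfl⟩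
      obtain ⟨a, ha⟩ := hx 0
      obtain ⟨b, hb⟩ := hx 1
      refine ⟨(a, b), Subtype.ext (congrArg _ ?_)⟩
      ext i
      fin_cases i
      · simp [ha]
      · simp [hb]

theorem latticeEquiv_apply {h : ℝ} (hh : h ≠ 0) (p : ℤ × ℤ) :
    (latticeEquiv hh p : Plane) 0 = h * p.1 ∧ (latticeEquiv hh p : Plane) 1 = h * p.2 := by
  constructor <;> simp [latticeEquiv]

theorem abs_sub_le_of_floor {x s D h : ℝ} {m : ℕ} (hm : 0 < m) (hh : 0 < h) (hD : D = m * h)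
    {p q : ℤ} (hq : ⌊(x - s) / D⌋ = q) (hpq : |p / (m : ℤ) - q| ≤ 1) :
    |h * p - x| ≤ |s| + 3 * D := by
  have hm' : (0 : ℝ) < m := by exact_mod_cast hm
  have hm'' : (0 : ℤ) < m := by exact_mod_cast hm
  have hDpos : 0 < D := hD ▸ by positivity
  rw [Int.floor_eq_iff, le_div_iff₀ hDpos, div_lt_iff₀ hDpos] at hq
  set r : ℤ := p / (m : ℤ) with hr
  have h₁ : r * m ≤ p := Int.ediv_mul_le _ hm''.ne'
  have h₂ : p < (r + 1) * m := Int.lt_ediv_add_one_mul_self _ hm''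
  have h₁' : (r : ℝ) * m ≤ p := by exact_mod_cast h₁
  have h₂' : (p : ℝ) ≤ (r + 1) * m := by exact_mod_cast h₂.le
  obtain ⟨h₃, h₄⟩ := abs_le.1 hpq
  have h₃' : (q : ℝ) - 1 ≤ r := by exact_mod_cast (by omega : q - 1 ≤ r)
  have h₄' : (r : ℝ) ≤ q + 1 := by exact_mod_cast (by omega : r ≤ q + 1)
  have e₁ : h * (r * m) ≤ h * p := mul_le_mul_of_nonneg_left h₁' hh.le
  have e₂ : h * p ≤ h * ((r + 1) * m) := mul_le_mul_of_nonneg_left h₂' hh.le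
  have e₃ : (q - 1) * D ≤ r * D := mul_le_mul_of_nonneg_right h₃' hDpos.le
  have e₄ : r * D ≤ (q + 1) * D := mul_le_mul_of_nonneg_right h₄' hDpos.le
  have e₅ : h * (r * m) = r * D := by rw [hD]; ring
  have e₆ : h * ((r + 1) * m) = r * D + D := by rw [hD]; ring
  have := neg_abs_le s
  have := le_abs_self s
  rw [abs_le]
  constructor <;> nlinarith

theorem exists_boundedDisplacement_of_discrepancy_le (X : Set Plane) (hcount : X.Countable)
    (hud : ∃ δ > 0, ∀ x ∈ X, ∀ y ∈ X, x ≠ y → δ ≤ dist x y) (ρ : ℝ) (hρ : 0 < ρ)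
    {c₁ c₂ : ℝ} (h₁ : 0 < c₁) (h₂ : 0 < c₂)
    (hU : ∀ U : Set Plane, IsCompact U →
      Nonempty (U ≃ₜ (Metric.closedBall (0 : Plane) 1 : Set Plane)) →
      ENNReal.ofReal |((X ∩ U).ncard : ℝ) - ρ * (volume U).toReal| ≤
        ENNReal.ofReal c₁ + ENNReal.ofReal c₂ * Measure.hausdorffMeasure 1 (frontier U)) :
    ∃ A : Plane ≃ₗ[ℝ] Plane, |LinearMap.det (A : Plane →ₗ[ℝ] Plane)| = 1 / ρ ∧
      ∃ b : X ≃ (A '' {x : Plane | ∀ i, ∃ m : ℤ, x i = (m : ℝ)} : Set Plane), ∃ C : ℝ,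
        ∀ x : X, ‖(b x : Plane) - (x : Plane)‖ ≤ C := by
  obtain ⟨η, hη, hud⟩ := hud
  have hball : ∀ R, (X ∩ Metric.closedBall 0 R).Finite := fun R => by
    obtain ⟨M, hM⟩ := exists_ncard_inter_closedBall_le hη hud R
    exact (hM 0).1
  set h : ℝ := (√ρ)⁻¹ with hh
  have hpos : 0 < h := inv_pos.2 (Real.sqrt_pos.2 hρ)
  have hsq : h ^ 2 = 1 / ρ := by rw [hh, inv_pow, Real.sq_sqrt hρ.le, one_div]
  obtain ⟨m, hm⟩ := exists_nat_ge (4 * (c₁ + 1) + 4 * c₂ * h + 1)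
  have hm1 : (1 : ℝ) ≤ m := le_trans (by
    have : 0 ≤ 4 * (c₁ + 1) + 4 * c₂ * h := by positivity
    linarith) hm
  have hm0 : 0 < m := by
    have : (0 : ℝ) < m := by linarith
    exact_mod_cast this
  set D : ℝ := m * h with hD
  have hDpos : 0 < D := by positivity
  set C : ℤ := ⌈c₁ + c₂ * D⌉ with hC
  have hCm : 4 * C ≤ ((m * m : ℕ) : ℤ) := by
    have h₃ : (C : ℝ) < c₁ + c₂ * D + 1 := Int.ceil_lt_add_one _
    have h₄ : (4 * (c₁ + 1) + 4 * c₂ * h) * m ≤ m * m :=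
      mul_le_mul_of_nonneg_right (by linarith) (by positivity)
    have : (4 * C : ℝ) ≤ m * m := by
      rw [hD] at h₃
      nlinarith
    exact_mod_cast this
  obtain ⟨s, hs⟩ := exists_offGrid hcount hDpos.ne'
  have hfin := finite_cellOf_eq hball hDpos.ne' hs
  have hk : ρ * D ^ 2 = (((m * m : ℕ) : ℤ) : ℝ) := by
    rw [hD, mul_pow, hsq]; push_cast; field_simp
  obtain ⟨A, hA, hcurl⟩ := exists_curl_eq fun c =>
    ({x ∈ X | cellOf s D x = c}.ncard : ℤ) - ((m * m : ℕ) : ℤ)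
  obtain ⟨B, hB, hBA, hBC⟩ := exists_bounded_of_loopSum_le hA fun x y L hL =>
    hL.abs_loopSum_le h₁ h₂ hU hDpos hs hfin hk (Int.le_ceil _) hA hcurl
  have hequiv : ∀ q, {x : X // cellOf s D x = q} ≃ {x ∈ X | cellOf s D x = q} := fun q =>
    Equiv.subtypeSubtypeEquivSubtypeInter (· ∈ X) fun x => cellOf s D x = q
  obtain ⟨b, hb⟩ := exists_equiv_of_bounded_curl (f := fun x : X => cellOf s D x)
    (g := fun p : ℤ × ℤ => (p.1 / (m : ℤ), p.2 / (m : ℤ))) (k := m * m)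
    (fun q => by have := (hfin q).to_subtype; exact Finite.of_equiv _ (hequiv q).symm)
    (fun q => (finite_ediv_eq hm0 q).1) (fun q => (finite_ediv_eq hm0 q).2) hB hBC hCm
    fun q => by rw [hBA, hcurl, Nat.card_congr (hequiv q)]; rfl
  refine ⟨LinearEquiv.smulOfNeZero ℝ Plane h hpos.ne', ?_, b.trans (latticeEquiv hpos.ne'),
    (|s 0| + 3 * D) + (|s 1| + 3 * D), fun x => (norm_le_abs_add_abs _).trans (add_le_add ?_ ?_)⟩
  · have : ((LinearEquiv.smulOfNeZero ℝ Plane h hpos.ne' : Plane ≃ₗ[ℝ] Plane) :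
        Plane →ₗ[ℝ] Plane) = h • LinearMap.id := by ext; simp
    rw [this, LinearMap.det_smul, LinearMap.det_id, mul_one, finrank_euclideanSpace_fin, hsq,
      abs_of_pos (by positivity)]
  · rw [PiLp.sub_apply, Equiv.trans_apply, (latticeEquiv_apply hpos.ne' _).1]
    exact abs_sub_le_of_floor hm0 hpos hD rfl (hb x).1
  · rw [PiLp.sub_apply, Equiv.trans_apply, (latticeEquiv_apply hpos.ne' _).2]
    exact abs_sub_le_of_floor hm0 hpos hD rfl (hb x).2

end Laczkovich

/-- **Laczkovich's theorem in dimension 2** (Theorem 1.2 of the paper). A countable,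
uniformly discrete set `X ⊆ ℝ²` with well-defined density `ρ > 0` is of bounded displacement
from a lattice of density `ρ` iff there are constants `c₁, c₂ > 0` such that for every
topological disk `U`, `|#(X ∩ U) - ρ·vol(U)| ≤ c₁ + c₂·H¹(∂U)`. -/
theorem laczkovich_dim_two
    (X : Set (EuclideanSpace ℝ (Fin 2)))
    (hcount : X.Countable)
    (hud : ∃ δ > 0, ∀ x ∈ X, ∀ y ∈ X, x ≠ y → δ ≤ dist x y)
    (ρ : ℝ) (hρ : 0 < ρ)
    (hdens : Filter.Tendsto
      (fun R : ℝ => ((X ∩ Metric.closedBall 0 R).ncard : ℝ) /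
        (volume (Metric.closedBall (0 : EuclideanSpace ℝ (Fin 2)) R)).toReal)
      Filter.atTop (nhds ρ)) :
    (∃ L : Set (EuclideanSpace ℝ (Fin 2)),
      (∃ A : EuclideanSpace ℝ (Fin 2) ≃ₗ[ℝ] EuclideanSpace ℝ (Fin 2),
        L = ⇑A '' {x : EuclideanSpace ℝ (Fin 2) | ∀ i, ∃ m : ℤ, x i = (m : ℝ)} ∧
        |LinearMap.det (A : EuclideanSpace ℝ (Fin 2) →ₗ[ℝ] EuclideanSpace ℝ (Fin 2))| = 1 / ρ) ∧
      ∃ b : X ≃ L, ∃ C : ℝ, ∀ x : X,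
        ‖(b x : EuclideanSpace ℝ (Fin 2)) - (x : EuclideanSpace ℝ (Fin 2))‖ ≤ C) ↔
    (∃ c₁ > (0 : ℝ), ∃ c₂ > (0 : ℝ), ∀ U : Set (EuclideanSpace ℝ (Fin 2)),
      IsCompact U →
      Nonempty (U ≃ₜ (Metric.closedBall (0 : EuclideanSpace ℝ (Fin 2)) 1 : Set _)) →
      ENNReal.ofReal |((X ∩ U).ncard : ℝ) - ρ * (volume U).toReal| ≤
        ENNReal.ofReal c₁ +
          ENNReal.ofReal c₂ * Measure.hausdorffMeasure 1 (frontier U)) := by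
  constructor
  · rintro ⟨_, ⟨A, rfl, hA⟩, b, C, hC⟩
    exact Laczkovich.discrepancy_le_of_boundedDisplacement X hud ρ hρ A hA b C hC
  · rintro ⟨c₁, h₁, c₂, h₂, hU⟩
    obtain ⟨A, hA, b, C, hC⟩ :=
      Laczkovich.exists_boundedDisplacement_of_discrepancy_le X hcount hud ρ hρ h₁ h₂ hU
    exact ⟨_, ⟨A, rfl, hA⟩, b, C, hC⟩
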